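/- arXiv:1403.1409 — 2 statements merged into one kernel-verified Lean document; each statement's English description precedes it below -/
import Mathlib

section
/- Let K be an algebraically closed field, S = K[x_1,…,x_r] the standard graded polynomial ring, J ⊆ S a homogeneous ideal, and A = S/J with Hilbert function h_A(t) = dim_K [A]_t. Fix an integer n and assume n+1 ≤ h_A(n) < C(n+2,2), i.e. the n-binomial expansion of h_A(n) begins with C(n+1,n). Assume further that h_A(n+1) = h_A(n)^{⟨n⟩} − 1 (almost maximal growth). Then the base locus of [J]_n in ℙ^{r−1} is nonempty and is a scheme of dimension either 0 or 1; equivalently, the Krull dimension of S/⟨[J]_n⟩ (the quotient by the ideal generated by the degree-n component of J) is either 1 or 2. -/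
open MvPolynomial

/-- The Hilbert function of `S/I` in degree `t`: the dimension over `K` of the image of the
space of homogeneous polynomials of degree `t` in the quotient `S/I`. -/
noncomputable def hilb {K : Type*} [Field K] {σ : Type*} (I : Ideal (MvPolynomial σ K)) (t : ℕ) : ℕ :=
  Module.finrank K
    ((homogeneousSubmodule σ K t).map (Ideal.Quotient.mkₐ K I).toLinearMap)

/-- The ideal generated by the degree-`n` component of `I`, i.e. by all homogeneous elements of
`I` of degree `n`.  Its zero locus is the base locus of the linear system `[I]_n`. -/
noncomputable def compIdeal {K : Type*} [Field K] {σ : Type*} (I : Ideal (MvPolynomial σ K)) (n : ℕ) :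
    Ideal (MvPolynomial σ K) :=
  Ideal.span ((I : Set (MvPolynomial σ K)) ∩ (homogeneousSubmodule σ K n : Set (MvPolynomial σ K)))

/-- Macaulay's bound `k^{⟨i⟩}`: if `k = C(k_i,i) + C(k_{i-1},i-1) + ⋯ + C(k_j,j)` is the
`i`-binomial expansion of `k`, then `macaulayUp i k = C(k_i+1,i+1) + ⋯ + C(k_j+1,j+1)`. -/
def macaulayUp : ℕ → ℕ → ℕ
  | 0, _ => 0
  | i + 1, k =>
    if k = 0 then 0
    else
      Nat.choose (Nat.findGreatest (fun b => Nat.choose b (i + 1) ≤ k) (k + i + 1) + 1) (i + 2) +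
        macaulayUp i
          (k - Nat.choose (Nat.findGreatest (fun b => Nat.choose b (i + 1) ≤ k) (k + i + 1)) (i + 1))

/-!
Linear systems `W ⊆ [S]_n` are studied through two operations with a generic linear form `ℓ`: the
hyperplane section `W + ℓ S` and the colon system `W : ℓ`. Write the codimension of `W` as a sum
of `s` terms `C(n+1,n) + C(n,n-1) + ⋯` and a remainder that is too small for another term. Green's
theorem bounds the codimension of a generic hyperplane section by `s`, and a second hyperplane
section fills all of `[S]_n`. Hence `S/⟨W⟩` is finite over a polynomial ring in two variables,
which bounds its dimension by two.

If the base locus were empty, almost maximal growth would force the section by `ℓ` to have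
codimension exactly `s` and `ℓ` to act injectively on `S/⟨W⟩` in degree `n`. Moving `ℓ` to first
order then shows that the colon system `Z` does not depend on the generic `ℓ` and that `S_1 Z ⊆ W`.
This residual system has codimension `codim W - s`; either its own growth gives it a base locus
that `W` inherits, up to the few forms of `W` outside `S_1 Z`, or it satisfies the same hypotheses
in degree `n - 1` and one descends. The base case is persistence: when `ℓ` acts injectively and
its hyperplane section is empty, division by `ℓ` turns the linear forms into commuting operators,
whose algebra supplies a point of the base locus.
-/

namespace AlmostMaximalGrowth

open Module Submodule

section Numerics

/-- The sum of the first `s` terms of `C(n+1,n) + C(n,n-1) + C(n-1,n-2) + ⋯`. For `s ≤ n`, the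
`n`-binomial expansion of `h` starts with exactly `s` such terms when
`threshold n s ≤ h < threshold n (s + 1)`. -/
def threshold (n s : ℕ) : ℕ :=
  ∑ i ∈ Finset.range s, (n + 1 - i)

lemma threshold_succ (n s : ℕ) : threshold n (s + 1) = threshold n s + (n + 1 - s) :=
  Finset.sum_range_succ _ _

@[simp]
lemma threshold_one (n : ℕ) : threshold n 1 = n + 1 := by
  simp [threshold]

lemma threshold_mono (n : ℕ) : Monotone (threshold n) :=
  monotone_nat_of_le_succ fun s ↦ by simp [threshold_succ]

lemma threshold_succ_succ (n s : ℕ) : threshold (n + 1) (s + 1) = threshold n s + (n + 2) := by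
  simp [threshold, Finset.sum_range_succ']

lemma threshold_succ_left {n s : ℕ} (hs : s ≤ n + 1) :
    threshold (n + 1) s = threshold n s + s := by
  cases s with
  | zero => rfl
  | succ s =>
    rw [threshold_succ_succ, threshold_succ]
    omega

lemma threshold_self (n : ℕ) : threshold n (n + 1) = (n + 2).choose 2 := by
  induction n with
  | zero => rfl
  | succ n ih =>
    rw [threshold_succ_succ, ih, Nat.choose_succ_succ' (n + 2) 1, Nat.choose_one_right,
      one_add_one_eq_two]
    omega

lemma threshold_add_le (n d : ℕ) {j : ℕ} (hj : 1 ≤ j) :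
    threshold (n + 1) (j + d) ≤ threshold (n + 1) j + threshold n d := by
  rw [threshold, Finset.sum_range_add]
  exact Nat.add_le_add_left (Finset.sum_le_sum fun i _ ↦ by omega) _

lemma exists_threshold_le_lt {n N h : ℕ} (hN : h < threshold n (N + 1)) :
    ∃ s ≤ N, threshold n s ≤ h ∧ h < threshold n (s + 1) := by
  induction N with
  | zero => exact ⟨0, le_rfl, Nat.zero_le _, hN⟩
  | succ N ih =>
    by_cases hc : h < threshold n (N + 1)
    · obtain ⟨s, hs, hsh⟩ := ih hc
      exact ⟨s, hs.trans N.le_succ, hsh⟩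
    · exact ⟨N + 1, le_rfl, not_lt.mp hc, hN⟩

lemma exists_threshold_split {n s b c : ℕ} (hs : s ≤ n + 1) (hsc : s < c) (hcb : c ≤ b)
    (hb : b < threshold (n + 1) (s + 1)) :
    ∃ j ≤ s, s - j ≤ n ∧ c < threshold (n + 1) (j + 1) ∧ b - c < threshold n (s - j + 1) := by
  obtain ⟨j, hjs, hjc, hcj⟩ := exists_threshold_le_lt (hcb.trans_lt hb)
  refine ⟨j, hjs, ?_, hcj, ?_⟩
  · rcases Nat.eq_zero_or_pos j with rfl | hj
    · rw [zero_add, threshold_one] at hcj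
      omega
    · omega
  · rcases Nat.eq_zero_or_pos j with rfl | hj
    · rw [zero_add, threshold_one] at hcj
      rw [threshold_succ_left (by omega)] at hb
      rw [tsub_zero]
      omega
    · have hadd := threshold_add_le n (s - j + 1) hj
      rw [← add_assoc, Nat.add_sub_cancel' hjs] at hadd
      omega

lemma macaulayUp_succ {i h m : ℕ} (h0 : h ≠ 0) (hm : m ≤ h + i + 1)
    (hle : m.choose (i + 1) ≤ h) (hlt : h < (m + 1).choose (i + 1)) :
    macaulayUp (i + 1) h = (m + 1).choose (i + 2) + macaulayUp i (h - m.choose (i + 1)) := by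
  have hfind : Nat.findGreatest (fun b ↦ b.choose (i + 1) ≤ h) (h + i + 1) = m :=
    Nat.findGreatest_eq_iff.mpr ⟨hm, fun _ ↦ hle, fun b hb _ hbh ↦
      absurd (hlt.trans_le (Nat.choose_le_choose (i + 1) hb)) (not_lt.mpr hbh)⟩
  rw [macaulayUp, if_neg h0, hfind]

lemma macaulayUp_of_le {n h : ℕ} (hh : h ≤ n) : macaulayUp n h = h := by
  induction n generalizing h with
  | zero => rw [macaulayUp, Nat.le_zero.mp hh]
  | succ i ih =>
    rcases eq_or_ne h 0 with rfl | h0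
    · simp [macaulayUp]
    · rw [macaulayUp_succ (m := i + 1) h0 (by omega) (by simp; omega)
        (by rw [Nat.choose_succ_self_right]; omega), Nat.choose_self, Nat.choose_self,
        ih (by omega)]
      omega

lemma macaulayUp_eq_add {n s h : ℕ} (hs : s ≤ n) (hle : threshold n s ≤ h)
    (hlt : h < threshold n (s + 1)) : macaulayUp n h = h + s := by
  induction n generalizing s h with
  | zero =>
    obtain rfl : s = 0 := by omega
    exact macaulayUp_of_le (by simpa [Nat.lt_succ_iff] using hlt)
  | succ i ih =>
    cases s with
    | zero => exact macaulayUp_of_le (by simpa [Nat.lt_succ_iff] using hlt)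
    | succ s =>
      rw [threshold_succ_succ] at hle hlt
      have hchoose : h < (i + 3).choose (i + 1) := by
        have htop := threshold_mono (i + 1) (show s + 2 ≤ i + 2 by omega)
        rw [threshold_succ_succ, threshold_self] at htop
        rw [Nat.choose_symm_of_eq_add (show i + 3 = (i + 1) + 2 from rfl)]
        exact hlt.trans_le htop
      rw [macaulayUp_succ (m := i + 2) (by omega) (by omega)
        (by rw [Nat.choose_succ_self_right]; omega) hchoose, Nat.choose_succ_self_right,
        Nat.choose_succ_self_right, ih (s := s) (by omega) (by omega) (by omega)]
      omega

end Numerics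

section Codimension

variable {K E E' : Type*} [Field K] [AddCommGroup E] [Module K E] [AddCommGroup E'] [Module K E']

/-- The codimension of `A ⊓ W` in `A`, encoded as the dimension of the image of `A` in `E ⧸ W` so
that `W` need not be contained in `A`. -/
noncomputable def codim (A W : Submodule K E) : ℕ :=
  finrank K (A.map W.mkQ)

lemma finrank_map_add_finrank_inf_ker (f : E →ₗ[K] E') (A : Submodule K E)
    [FiniteDimensional K A] :
    finrank K (A.map f) + finrank K (A ⊓ LinearMap.ker f : Submodule K E) = finrank K A := by
  rw [← LinearMap.range_domRestrict, ← LinearMap.finrank_range_add_finrank_ker (f.domRestrict A),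
    LinearMap.ker_domRestrict, ← Submodule.map_comap_subtype, Submodule.finrank_map_subtype_eq]

variable (A : Submodule K E) [FiniteDimensional K A]

lemma codim_add_finrank_inf (W : Submodule K E) :
    codim A W + finrank K (A ⊓ W : Submodule K E) = finrank K A := by
  have h := finrank_map_add_finrank_inf_ker W.mkQ A
  rwa [ker_mkQ] at h

lemma finrank_map_eq_codim_ker (f : E →ₗ[K] E') :
    finrank K (A.map f) = codim A (LinearMap.ker f) :=
  Nat.add_right_cancel
    ((finrank_map_add_finrank_inf_ker f A).trans (codim_add_finrank_inf A _).symm)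

lemma codim_map (f : E →ₗ[K] E') (W : Submodule K E') :
    codim (A.map f) W = codim A (W.comap f) := by
  rw [codim, ← Submodule.map_comp, finrank_map_eq_codim_ker, LinearMap.ker_comp, ker_mkQ]

lemma codim_inf_left (W : Submodule K E) : codim A (A ⊓ W) = codim A W := by
  have hinf := codim_add_finrank_inf A (A ⊓ W)
  rw [← inf_assoc, inf_idem, ← codim_add_finrank_inf A W] at hinf
  exact Nat.add_right_cancel hinf

lemma codim_le_finrank (W : Submodule K E) : codim A W ≤ finrank K A :=
  Submodule.finrank_map_le _ _

lemma codim_anti : Antitone (codim A) := fun W W' h ↦ by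
  have hinf := Submodule.finrank_mono (inf_le_inf_left A h)
  have hW := codim_add_finrank_inf A W
  have hW' := codim_add_finrank_inf A W'
  omega

variable {A}

lemma codim_eq_zero_iff {W : Submodule K E} : codim A W = 0 ↔ A ≤ W := by
  rw [codim, Submodule.finrank_eq_zero, ← le_bot_iff, Submodule.map_le_iff_le_comap, comap_bot,
    ker_mkQ]

lemma eq_of_codim_le {W W' : Submodule K E} (h : W ≤ W') (hA : W' ≤ A)
    (hc : codim A W ≤ codim A W') : W = W' := by
  have := Submodule.finiteDimensional_of_le hA
  have hW := codim_add_finrank_inf A W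
  have hW' := codim_add_finrank_inf A W'
  rw [inf_eq_right.mpr (h.trans hA)] at hW
  rw [inf_eq_right.mpr hA] at hW'
  exact Submodule.eq_of_le_of_finrank_le h (by omega)

lemma codim_eq_codim_sup_add {B : Submodule K E} (hB : B ≤ A) (W : Submodule K E) :
    codim A W = codim A (W ⊔ B) + codim B W := by
  have := Submodule.finiteDimensional_of_le hB
  have hinf : A ⊓ (W ⊔ B) = A ⊓ W ⊔ B := by
    rw [inf_comm, sup_comm, sup_inf_assoc_of_le W hB, sup_comm, inf_comm]
  have hdim := Submodule.finrank_sup_add_finrank_inf_eq (A ⊓ W) B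
  rw [← hinf, inf_right_comm, inf_eq_right.mpr hB] at hdim
  have hAW := codim_add_finrank_inf A W
  have hAWB := codim_add_finrank_inf A (W ⊔ B)
  have hBW := codim_add_finrank_inf B W
  omega

lemma exists_finset_sup_span_eq {V W : Submodule K E} {k : ℕ} (hVW : V ≤ W) (hWA : W ≤ A)
    (hk : codim A V ≤ codim A W + k) :
    ∃ C : Finset E, C.card ≤ k ∧ W = V ⊔ span K C := by
  classical
  have := Submodule.finiteDimensional_of_le hWA
  have hcodim : finrank K (W.map V.mkQ) ≤ k := by
    have h := codim_eq_codim_sup_add hWA V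
    rw [sup_eq_right.mpr hVW, codim.eq_def W] at h
    omega
  let b := finBasis K (W.map V.mkQ)
  choose c _ hc using fun i ↦ Submodule.mem_map.mp (b i).2
  refine ⟨Finset.univ.image c, Finset.card_image_le.trans (by simpa using hcodim), ?_⟩
  have hspan : (span K (Set.range c)).map V.mkQ = W.map V.mkQ := by
    have hbc : V.mkQ ∘ c = (W.map V.mkQ).subtype ∘ b := funext hc
    rw [Submodule.map_span, ← Set.range_comp, hbc, Set.range_comp, ← Submodule.map_span,
      b.span_eq, Submodule.map_subtype_top]
  have hcomap := congrArg (Submodule.comap V.mkQ) hspan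
  rw [comap_map_mkQ, comap_map_mkQ, sup_eq_right.mpr hVW] at hcomap
  rw [Finset.coe_image, Finset.coe_univ, Set.image_univ, hcomap]

end Codimension

section Generic

variable {K E F U : Type*} [Field K] [AddCommGroup E] [Module K E] [AddCommGroup F] [Module K F]
  [AddCommGroup U] [Module K U]

lemma finite_setOf_not_linearIndependent_add_smul {ι : Type*} [Finite ι] {a : ι → F}
    (ha : LinearIndependent K a) (b : ι → F) :
    {t : K | ¬ LinearIndependent K fun i ↦ a i + t • b i}.Finite := by
  classical
  have := Fintype.ofFinite ι
  obtain ⟨φ, hφ⟩ := LinearMap.exists_leftInverse_of_injective (Fintype.linearCombination K a)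
    (LinearMap.ker_eq_bot.mpr ha.fintypeLinearCombination_injective)
  have hφa (i : ι) : φ (a i) = Pi.single i 1 := by
    simpa [Fintype.linearCombination_apply_single] using LinearMap.congr_fun hφ (Pi.single i 1)
  let M : Matrix ι ι K := -Matrix.of fun i ↦ φ (b i)
  have hne : M.charpolyRev ≠ 0 := fun h ↦ by simpa [h] using M.eval_charpolyRev
  refine (Polynomial.finite_setOfPred_isRoot hne).subset fun t ht ↦ ?_
  by_contra hroot
  have heval : M.charpolyRev.eval t = (1 - t • M).det := by
    rw [Matrix.charpolyRev, ← Polynomial.coe_evalRingHom, RingHom.map_det]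
    congr 1
    ext i j
    simp [Matrix.one_apply, apply_ite, mul_comm (M i j)]
  have hrows : LinearIndependent K (1 - t • M).row :=
    Matrix.linearIndependent_rows_of_det_ne_zero (heval ▸ hroot)
  refine ht (LinearIndependent.of_comp φ ?_)
  have hrow : (φ ∘ fun i ↦ a i + t • b i) = (1 - t • M).row := by
    ext i j
    simp [M, hφa, Matrix.row, Matrix.one_apply, Pi.single_apply, eq_comm]
  exact hrow ▸ hrows

lemma exists_linearIndependent_apply [FiniteDimensional K U] (A : U →ₗ[K] F) :
    ∃ v : Fin (finrank K (LinearMap.range A)) → U, LinearIndependent K fun i ↦ A (v i) := by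
  let b := finBasis K (LinearMap.range A)
  choose v hv using fun i ↦ (b i).2
  refine ⟨v, ?_⟩
  simp only [hv]
  exact b.linearIndependent.map' _ (Submodule.ker_subtype _)

lemma card_le_finrank_range [FiniteDimensional K U] {ι : Type*} [Fintype ι] {A : U →ₗ[K] F}
    {v : ι → F} (hv : LinearIndependent K v) (h : ∀ i, v i ∈ LinearMap.range A) :
    Fintype.card ι ≤ finrank K (LinearMap.range A) :=
  (LinearIndependent.of_comp (v := fun i ↦ (⟨v i, h i⟩ : LinearMap.range A))
    (LinearMap.range A).subtype hv).fintype_card_le_finrank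

lemma finite_setOf_finrank_range_add_smul_lt [FiniteDimensional K U] (A B : U →ₗ[K] F) :
    {t : K | finrank K (LinearMap.range (A + t • B)) < finrank K (LinearMap.range A)}.Finite := by
  obtain ⟨v, hv⟩ := exists_linearIndependent_apply A
  refine (finite_setOf_not_linearIndependent_add_smul hv fun i ↦ B (v i)).subset fun t ht hli ↦ ?_
  refine (Set.mem_ofPred_eq ▸ ht : _ < _).not_ge ?_
  simpa using card_le_finrank_range (A := A + t • B) hli fun i ↦ ⟨v i, by simp⟩

lemma apply_mem_range_of_finrank_range_le [Infinite K] [FiniteDimensional K U] {A B : U →ₗ[K] F}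
    (hmax : ∀ t : K, finrank K (LinearMap.range (A + t • B)) ≤ finrank K (LinearMap.range A))
    {z : U} (hz : A z = 0) : B z ∈ LinearMap.range A := by
  by_contra hBz
  obtain ⟨v, hv⟩ := exists_linearIndependent_apply A
  have hli : LinearIndependent K (Fin.cons (B z) fun i ↦ A (v i) : Fin (_ + 1) → F) :=
    linearIndependent_finCons.mpr ⟨hv, fun h ↦ hBz
      (Submodule.span_le.mpr (Set.range_subset_iff.mpr fun i ↦ LinearMap.mem_range_self A (v i)) h)⟩
  obtain ⟨t, ht⟩ := ((finite_setOf_not_linearIndependent_add_smul hli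
    (Fin.cons 0 fun i ↦ B (v i))).union (Set.finite_singleton 0)).exists_notMem
  simp only [Set.mem_union, Set.mem_ofPred_eq, not_or, not_not, Set.mem_singleton_iff] at ht
  refine (hmax t).not_gt (Nat.lt_of_succ_le ?_)
  -- For `t ≠ 0`, `A + t • B` maps `t⁻¹ • z` to `B z`.
  simpa using card_le_finrank_range (A := A + t • B) ht.1 fun i ↦
    Fin.cases ⟨t⁻¹ • z, by simp [hz, smul_smul, ht.2]⟩ (fun i ↦ ⟨v i, by simp⟩) i

variable (K) in
/-- A substitute for nonempty Zariski open sets: nonempty sets whose complement meets every line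
through one of their points in finitely many points. -/
def IsLineCofinite (S : Set E) : Prop :=
  S.Nonempty ∧ ∀ u ∈ S, ∀ x, {t : K | u + t • x ∉ S}.Finite

lemma IsLineCofinite.inter [Infinite K] {S T : Set E} (hS : IsLineCofinite K S)
    (hT : IsLineCofinite K T) : IsLineCofinite K (S ∩ T) := by
  have hcompl (u x : E) :
      {t : K | u + t • x ∉ S ∩ T} = {t | u + t • x ∉ S} ∪ {t | u + t • x ∉ T} := by
    ext t
    simp only [Set.mem_inter_iff, not_and_or, Set.mem_ofPred_eq, Set.mem_union]
  refine ⟨?_, fun u hu x ↦ hcompl u x ▸ (hS.2 u hu.1 x).union (hT.2 u hu.2 x)⟩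
  obtain ⟨a, ha⟩ := hS.1
  obtain ⟨b, hb⟩ := hT.1
  have hbT : {t : K | b + (1 - t) • (a - b) ∉ T}.Finite :=
    (hT.2 b hb (a - b)).preimage sub_right_injective.injOn
  obtain ⟨t, ht⟩ := ((hS.2 a ha (b - a)).union hbT).exists_notMem
  simp only [Set.mem_union, Set.mem_ofPred_eq, not_or, not_not] at ht
  refine ⟨a + t • (b - a), ht.1, ?_⟩
  convert ht.2 using 1
  module

variable (K E) in
/-- The filter of properties that hold for generic vectors of `E`. -/
def generic [Infinite K] : Filter E where
  sets := {S | ∃ U ⊆ S, IsLineCofinite K U}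
  univ_sets := ⟨Set.univ, subset_rfl, ⟨0, trivial⟩, by simp⟩
  sets_of_superset := fun ⟨U, hUS, hU⟩ hST ↦ ⟨U, hUS.trans hST, hU⟩
  inter_sets := fun ⟨U, hUS, hU⟩ ⟨V, hVT, hV⟩ ↦ ⟨U ∩ V, Set.inter_subset_inter hUS hVT, hU.inter hV⟩

variable [Infinite K]

lemma IsLineCofinite.mem_generic {S : Set E} (hS : IsLineCofinite K S) : S ∈ generic K E :=
  ⟨S, subset_rfl, hS⟩

instance generic_neBot : (generic K E).NeBot :=
  Filter.neBot_iff.mpr fun h ↦ by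
    obtain ⟨U, hU, hne, -⟩ := Filter.empty_mem_iff_bot.mpr h
    exact (hne.mono hU).ne_empty rfl

lemma eventually_generic_finrank_range_le [FiniteDimensional K U] (L : E →ₗ[K] U →ₗ[K] F) :
    ∀ᶠ x in generic K E, ∀ y,
      finrank K (LinearMap.range (L y)) ≤ finrank K (LinearMap.range (L x)) := by
  refine IsLineCofinite.mem_generic ⟨?_, fun u hu x ↦
    (finite_setOf_finrank_range_add_smul_lt (L u) (L x)).subset fun t ht ↦ ?_⟩
  · have hbdd : (Set.range fun y ↦ finrank K (LinearMap.range (L y))).Finite :=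
      (Set.finite_Iic (finrank K U)).subset
        (Set.range_subset_iff.mpr fun y ↦ (L y).finrank_range_le)
    obtain ⟨-, ⟨x, rfl⟩, hx⟩ := hbdd.exists_maximal (Set.range_nonempty _)
    exact ⟨x, fun y ↦ (le_total _ _).elim (hx ⟨y, rfl⟩) id⟩
  · simp only [Set.mem_ofPred_eq, not_forall, not_le] at ht
    obtain ⟨y, hy⟩ := ht
    have hL : L (u + t • x) = L u + t • L x := by rw [map_add, map_smul]
    exact (hL ▸ hy).trans_le (hu y)

lemma eventually_generic_notMem {S : Submodule K E} (hS : S ≠ ⊤) : ∀ᶠ x in generic K E, x ∉ S := by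
  refine IsLineCofinite.mem_generic ⟨?_, fun u hu x ↦ Set.Subsingleton.finite fun t ht t' ht' ↦ ?_⟩
  · exact (SetLike.exists_not_mem_of_ne_top S hS)
  · simp only [Set.mem_ofPred_eq, not_not] at ht ht' hu
    by_contra htt
    have hsub : (t - t') • x ∈ S := by
      have h := sub_mem ht ht'
      rwa [add_sub_add_left_eq_sub, ← sub_smul] at h
    have hx : x ∈ S := (S.smul_mem_iff (sub_ne_zero.mpr htt)).mp hsub
    exact hu ((S.add_mem_iff_left (S.smul_mem t hx)).mp ht)

end Generic

variable {σ K : Type*} [Field K]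

local notation "𝒮" => homogeneousSubmodule σ K

section LinearSystems

lemma homogeneousSubmodule_mul_eq (a b : ℕ) : 𝒮 a * 𝒮 b = 𝒮 (a + b) := by
  rw [← homogeneousSubmodule_one_pow K a, ← homogeneousSubmodule_one_pow K b, ← pow_add,
    homogeneousSubmodule_one_pow]

/-- The multiples of the linear form `ℓ` of degree `n`. -/
noncomputable def multiples (ℓ : 𝒮 1) : ℕ → Submodule K (MvPolynomial σ K)
  | 0 => ⊥
  | n + 1 => (𝒮 n).map (LinearMap.mulLeft K (ℓ : MvPolynomial σ K))

/-- The linear system `W` of degree-`n` forms, enlarged by the multiples of the linear form `ℓ`: it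
represents the restriction of `W` to the hyperplane `ℓ = 0`. -/
noncomputable def slice (n : ℕ) (W : Submodule K (MvPolynomial σ K)) (ℓ : 𝒮 1) :
    Submodule K (MvPolynomial σ K) :=
  W ⊔ multiples ℓ n

/-- The forms of degree `n` whose product with the linear form `ℓ` lies in `W`. -/
noncomputable def colon (n : ℕ) (W : Submodule K (MvPolynomial σ K)) (ℓ : 𝒮 1) :
    Submodule K (MvPolynomial σ K) :=
  𝒮 n ⊓ W.comap (LinearMap.mulLeft K (ℓ : MvPolynomial σ K))

variable {n : ℕ} {W : Submodule K (MvPolynomial σ K)} {ℓ : homogeneousSubmodule σ K 1}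
  {f : MvPolynomial σ K}

lemma mem_multiples_succ : f ∈ multiples ℓ (n + 1) ↔ ∃ g ∈ 𝒮 n, ℓ * g = f := Iff.rfl

lemma mul_mem_multiples (ℓ : 𝒮 1) (hf : f ∈ 𝒮 n) :
    (ℓ * f : MvPolynomial σ K) ∈ multiples ℓ (n + 1) :=
  Submodule.mem_map_of_mem hf

lemma mem_colon : f ∈ colon n W ℓ ↔ f ∈ 𝒮 n ∧ ℓ * f ∈ W := Iff.rfl

lemma colon_le : colon n W ℓ ≤ 𝒮 n := inf_le_left

lemma le_slice : W ≤ slice n W ℓ := le_sup_left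

lemma multiples_le_slice : multiples ℓ n ≤ slice n W ℓ := le_sup_right

lemma mul_mem_homogeneousSubmodule_succ {x : MvPolynomial σ K} (hx : x ∈ 𝒮 1) (hf : f ∈ 𝒮 n) :
    x * f ∈ 𝒮 (n + 1) := by
  rw [add_comm, ← homogeneousSubmodule_mul_eq]
  exact mul_mem_mul hx hf

lemma multiples_le (ℓ : 𝒮 1) (n : ℕ) : multiples ℓ n ≤ 𝒮 n := by
  cases n with
  | zero => exact bot_le
  | succ n =>
    exact Submodule.map_le_iff_le_comap.mpr fun f hf ↦
      mul_mem_homogeneousSubmodule_succ ℓ.2 hf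

lemma slice_le (hW : W ≤ 𝒮 n) : slice n W ℓ ≤ 𝒮 n := sup_le hW (multiples_le ℓ n)

lemma homogeneousSubmodule_mul_multiples_succ (k n : ℕ) (ℓ : 𝒮 1) :
    𝒮 k * multiples ℓ (n + 1) = multiples ℓ (k + n + 1) := by
  have hspan (m : ℕ) : multiples ℓ (m + 1) = span K {(ℓ : MvPolynomial σ K)} * 𝒮 m := by
    ext f
    rw [mem_multiples_succ, Submodule.mem_span_singleton_mul]
  rw [hspan, hspan, mul_left_comm, homogeneousSubmodule_mul_eq]

lemma le_colon_mul (hW : W ≤ 𝒮 n) (ℓ : 𝒮 1) : W ≤ colon n (𝒮 1 * W) ℓ := fun _ hf ↦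
  ⟨hW hf, mul_mem_mul ℓ.2 hf⟩

lemma homogeneousSubmodule_mul_multiples_le (k n : ℕ) (ℓ : 𝒮 1) :
    𝒮 k * multiples ℓ n ≤ multiples ℓ (k + n) := by
  cases n with
  | zero => simp [multiples]
  | succ n => rw [homogeneousSubmodule_mul_multiples_succ, ← add_assoc]

variable (n W) in
/-- The linear maps `f ↦ ℓ * f` from forms of degree `n` to polynomials modulo `W`, as a linear
family in the linear form `ℓ`. -/
noncomputable def mulMk : 𝒮 1 →ₗ[K] 𝒮 n →ₗ[K] MvPolynomial σ K ⧸ W :=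
  ((LinearMap.mul K (MvPolynomial σ K)).domRestrict₁₂ (𝒮 1) (𝒮 n)).compr₂ W.mkQ

lemma range_mulMk : LinearMap.range (mulMk n W ℓ) = (multiples ℓ (n + 1)).map W.mkQ := by
  have hcomp : mulMk n W ℓ = W.mkQ ∘ₗ
    LinearMap.mulLeft K (ℓ : MvPolynomial σ K) ∘ₗ (𝒮 n).subtype := rfl
  rw [hcomp, LinearMap.range_comp, LinearMap.range_comp, range_subtype]
  rfl

variable [Finite σ]

instance finiteDimensional_homogeneousSubmodule (n : ℕ) : FiniteDimensional K (𝒮 n) :=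
  Module.Finite.iff_fg.mpr (homogeneousSubmodule_fg σ K n)

lemma codim_eq_codim_slice_add_finrank_range (n : ℕ) (W : Submodule K (MvPolynomial σ K))
    (ℓ : 𝒮 1) : codim (𝒮 (n + 1)) W = codim (𝒮 (n + 1)) (slice (n + 1) W ℓ) +
      finrank K (LinearMap.range (mulMk n W ℓ)) := by
  rw [range_mulMk]
  exact codim_eq_codim_sup_add (multiples_le ℓ (n + 1)) W

lemma codim_eq_codim_slice_add_codim_colon (n : ℕ) (W : Submodule K (MvPolynomial σ K))
    (ℓ : 𝒮 1) : codim (𝒮 (n + 1)) W =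
      codim (𝒮 (n + 1)) (slice (n + 1) W ℓ) + codim (𝒮 n) (colon n W ℓ) := by
  rw [colon, codim_inf_left, ← codim_map]
  exact codim_eq_codim_sup_add (multiples_le ℓ (n + 1)) W

variable [Infinite K]

lemma eventually_codim_slice_le (n : ℕ) (W : Submodule K (MvPolynomial σ K)) :
    ∀ᶠ ℓ in generic K (𝒮 1), ∀ y, codim (𝒮 n) (slice n W ℓ) ≤ codim (𝒮 n) (slice n W y) := by
  cases n with
  | zero => exact Filter.Eventually.of_forall fun _ _ ↦ le_rfl
  | succ n =>
    filter_upwards [eventually_generic_finrank_range_le (mulMk n W)] with ℓ hℓ y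
    have hmax := hℓ y
    have hsliceℓ := codim_eq_codim_slice_add_finrank_range n W ℓ
    have hslicey := codim_eq_codim_slice_add_finrank_range n W y
    omega

/-- First-order deformation of `ℓ * f ∈ W` along `ℓ + t • x`: since multiplication by `ℓ` has
maximal rank, `x * f` is a multiple of `ℓ` modulo `W`. -/
lemma mul_mem_of_generic_mul_mem
    (hmin : ∀ y, codim (𝒮 (n + 1)) (slice (n + 1) W ℓ) ≤ codim (𝒮 (n + 1)) (slice (n + 1) W y))
    (hinj : colon (n + 1) (𝒮 1 * W) ℓ ≤ W) (hf : f ∈ colon n W ℓ)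
    (x : 𝒮 1) : x * f ∈ W := by
  have hmax (t : K) : finrank K (LinearMap.range (mulMk n W ℓ + t • mulMk n W x)) ≤
      finrank K (LinearMap.range (mulMk n W ℓ)) := by
    rw [← map_smul, ← map_add]
    have hslice := hmin (ℓ + t • x)
    have hsliceℓ := codim_eq_codim_slice_add_finrank_range n W ℓ
    have hslicet := codim_eq_codim_slice_add_finrank_range n W (ℓ + t • x)
    omega
  have hker : mulMk n W ℓ ⟨f, hf.1⟩ = 0 := (Submodule.Quotient.mk_eq_zero W).mpr hf.2
  obtain ⟨⟨y, hy⟩, hyx⟩ := apply_mem_range_of_finrank_range_le hmax hker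
  have hsub : ℓ * y - x * f ∈ W := (Submodule.Quotient.eq W).mp hyx
  have hℓy : ℓ * y ∈ W := by
    refine hinj (mem_colon.mpr ⟨mul_mem_homogeneousSubmodule_succ ℓ.2 hy, ?_⟩)
    have hring : (ℓ * (ℓ * y) : MvPolynomial σ K) = ℓ * (ℓ * y - x * f) + x * (ℓ * f) := by ring
    rw [hring]
    exact add_mem (mul_mem_mul ℓ.2 hsub) (mul_mem_mul x.2 hf.2)
  simpa using sub_mem hℓy hsub

end LinearSystems

section Green

variable {n : ℕ} {W : Submodule K (MvPolynomial σ K)} {ℓ : homogeneousSubmodule σ K 1}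
lemma homogeneousSubmodule_succ_le (h : ∀ ℓ : 𝒮 1, multiples ℓ (n + 1) ≤ W) : 𝒮 (n + 1) ≤ W := by
  rw [add_comm, ← homogeneousSubmodule_mul_eq, Submodule.mul_le]
  exact fun x hx f hf ↦ h ⟨x, hx⟩ (mul_mem_multiples ⟨x, hx⟩ hf)

variable [Finite σ]

lemma codim_slice_le_codim_slice_slice_add (n : ℕ) (W : Submodule K (MvPolynomial σ K))
    (ℓ ℓ' : 𝒮 1) :
    codim (𝒮 (n + 1)) (slice (n + 1) W ℓ') ≤
      codim (𝒮 (n + 1)) (slice (n + 1) (slice (n + 1) W ℓ) ℓ') +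
        codim (𝒮 n) (slice n (colon n W ℓ) ℓ') := by
  have hcolon : slice n (colon n W ℓ) ℓ' ≤ colon n (slice (n + 1) W ℓ') ℓ := by
    refine sup_le (fun f hf ↦ ⟨hf.1, le_slice hf.2⟩) fun f hf ↦ ⟨multiples_le ℓ' n hf, ?_⟩
    refine multiples_le_slice ?_
    rw [add_comm]
    exact homogeneousSubmodule_mul_multiples_le 1 n ℓ' (mul_mem_mul ℓ.2 hf)
  have hadd := codim_eq_codim_slice_add_codim_colon n (slice (n + 1) W ℓ') ℓ
  have hcomm : slice (n + 1) (slice (n + 1) W ℓ') ℓ = slice (n + 1) (slice (n + 1) W ℓ) ℓ' :=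
    sup_right_comm ..
  rw [hcomm] at hadd
  exact hadd.trans_le (Nat.add_le_add_left (codim_anti _ hcolon) _)

lemma codim_slice_lt
    (hmin : ∀ y, codim (𝒮 (n + 1)) (slice (n + 1) W ℓ) ≤ codim (𝒮 (n + 1)) (slice (n + 1) W y))
    (hW : codim (𝒮 (n + 1)) W ≠ 0) :
    codim (𝒮 (n + 1)) (slice (n + 1) W ℓ) < codim (𝒮 (n + 1)) W := by
  by_contra! hle
  refine hW (codim_eq_zero_iff.mpr (homogeneousSubmodule_succ_le fun y ↦ ?_))
  have hadd := codim_eq_codim_slice_add_codim_colon n W y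
  have hcolon : codim (𝒮 n) (colon n W y) = 0 := by
    have := hmin y
    omega
  exact Submodule.map_le_iff_le_comap.mpr ((codim_eq_zero_iff.mp hcolon).trans inf_le_right)

variable [Infinite K]

/-- Green's hyperplane restriction theorem, for codimensions below `C(n+2,2)`. -/
theorem eventually_codim_slice_le_of_lt_threshold {s : ℕ} (hs : s ≤ n)
    (hW : codim (𝒮 n) W < threshold n (s + 1)) :
    ∀ᶠ ℓ in generic K (𝒮 1), codim (𝒮 n) (slice n W ℓ) ≤ s := by
  induction n generalizing s W with
  | zero =>
    obtain rfl : s = 0 := by omega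
    rw [zero_add, threshold_one] at hW
    exact Filter.Eventually.of_forall fun ℓ ↦
      (codim_anti _ le_slice).trans (Nat.lt_succ_iff.mp hW)
  | succ n ihn =>
    induction hb : codim (𝒮 (n + 1)) W using Nat.strong_induction_on generalizing s W with
    | _ b ihb =>
      filter_upwards [eventually_codim_slice_le (n + 1) W] with h hmin
      by_contra! hsh
      have hlt : codim (𝒮 (n + 1)) (slice (n + 1) W h) < codim (𝒮 (n + 1)) W :=
        codim_slice_lt hmin ((s.zero_le.trans_lt hsh).trans_le (codim_anti _ le_slice)).ne'
      obtain ⟨j, hjs, hsjn, hslice, hcolon⟩ := exists_threshold_split hs hsh hlt.le hW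
      rw [codim_eq_codim_slice_add_codim_colon n W h, Nat.add_sub_cancel_left] at hcolon
      obtain ⟨g, hg, hg'⟩ :=
        ((ihb _ (hb ▸ hlt) (hjs.trans hs) hslice rfl).and (ihn hsjn hcolon)).exists
      have hadd := codim_slice_le_codim_slice_slice_add n W h g
      have hhg := hmin g
      omega

lemma eventually_homogeneousSubmodule_le_slice (hW : codim (𝒮 n) W ≤ n) :
    ∀ᶠ ℓ in generic K (𝒮 1), 𝒮 n ≤ slice n W ℓ := by
  filter_upwards [eventually_codim_slice_le_of_lt_threshold (s := 0) (Nat.zero_le n)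
    (by simpa [Nat.lt_succ_iff] using hW)] with ℓ hℓ
  exact codim_eq_zero_iff.mp (Nat.le_zero.mp hℓ)

lemma eventually_codim_slice_le_succ (hW : codim (𝒮 n) W ≤ threshold n (n + 1)) :
    ∀ᶠ ℓ in generic K (𝒮 1), codim (𝒮 n) (slice n W ℓ) ≤ n + 1 := by
  rcases hW.lt_or_eq with hlt | heq
  · filter_upwards [eventually_codim_slice_le_of_lt_threshold le_rfl hlt] with ℓ hℓ
    exact hℓ.trans n.le_succ
  obtain ⟨F, hF, hFW⟩ : ∃ F ∈ 𝒮 n, F ∉ W := by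
    refine SetLike.not_le_iff_exists.mp fun h ↦ ?_
    rw [codim_eq_zero_iff.mpr h, threshold_succ] at heq
    omega
  have hFn : span K {F} ≤ 𝒮 n := (span_singleton_le_iff_mem _ _).mpr hF
  have hpos : codim (span K {F}) W ≠ 0 := fun h ↦
    hFW ((span_singleton_le_iff_mem _ _).mp (codim_eq_zero_iff.mp h))
  have hadd := codim_eq_codim_sup_add hFn W
  filter_upwards [eventually_codim_slice_le_of_lt_threshold (n := n)
    (W := W ⊔ span K {F}) le_rfl (by omega)] with ℓ hℓ
  have hcomm : slice n (W ⊔ span K {F}) ℓ = slice n W ℓ ⊔ span K {F} := sup_right_comm ..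
  have haddℓ := codim_eq_codim_sup_add hFn (slice n W ℓ)
  have hone := (codim_le_finrank (span K {F}) (slice n W ℓ)).trans (finrank_span_le_card {F})
  rw [Set.toFinset_singleton, Finset.card_singleton] at hone
  rw [hcomm] at hℓ
  omega

end Green

section BaseLocus

variable {d n : ℕ} {V W : Submodule K (MvPolynomial σ K)}

lemma mem_idealOfVars_iff {f : MvPolynomial σ K} : f ∈ idealOfVars σ K ↔ coeff 0 f = 0 := by
  rw [← pow_one (idealOfVars σ K), mem_pow_idealOfVars_iff']
  refine ⟨fun h ↦ h 0 (by simp), fun h x hx ↦ ?_⟩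
  rwa [(Finsupp.degree_eq_zero_iff x).mp (by omega)]

lemma isPrime_idealOfVars : (idealOfVars σ K).IsPrime := by
  have hker : idealOfVars σ K = RingHom.ker (constantCoeff (σ := σ) (R := K)) := by
    ext f
    rw [mem_idealOfVars_iff, RingHom.mem_ker, constantCoeff_eq]
  rw [hker]
  exact RingHom.ker_isPrime _

lemma idealOfVars_le_iff {I : Ideal (MvPolynomial σ K)} :
    idealOfVars σ K ≤ I ↔ 𝒮 1 ≤ I.restrictScalars K := by
  rw [homogeneousSubmodule_one_eq_span_X, idealOfVars, Ideal.span_le, Submodule.span_le]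
  rfl

lemma homogeneousSubmodule_le_idealOfVars (hn : n ≠ 0) :
    𝒮 n ≤ (idealOfVars σ K).restrictScalars K := fun f hf ↦
  mem_idealOfVars_iff.mpr (IsHomogeneous.coeff_eq_zero hf (by simpa using hn.symm))

lemma idealOfVars_le_of_homogeneousSubmodule_le {P : Ideal (MvPolynomial σ K)} (hP : P.IsPrime)
    (h : 𝒮 n ≤ P.restrictScalars K) : idealOfVars σ K ≤ P :=
  Ideal.span_le.mpr (Set.range_subset_iff.mpr fun i ↦
    hP.mem_of_pow_mem n (h (isHomogeneous_X_pow i n)))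

/-- The common zero locus of `V`, a cone with vertex at the origin of affine space, has dimension at
least `d`, encoded as: some chain of `d + 1` prime ideals containing `V` ends at the ideal of the
origin. For a linear system of forms it says that the base locus has dimension at least `d - 1`. -/
def ConeDimGE (d : ℕ) (V : Submodule K (MvPolynomial σ K)) : Prop :=
  ∃ p : LTSeries (PrimeSpectrum (MvPolynomial σ K)), p.length = d ∧
    (V : Set (MvPolynomial σ K)) ⊆ p.head.asIdeal ∧ p.last.asIdeal = idealOfVars σ K

lemma ConeDimGE.of_subset_span (h : ConeDimGE d V)
    (hW : (W : Set (MvPolynomial σ K)) ⊆ Ideal.span (V : Set (MvPolynomial σ K))) :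
    ConeDimGE d W := by
  obtain ⟨p, hd, hV, hp⟩ := h
  exact ⟨p, hd, hW.trans (Ideal.span_le.mpr hV), hp⟩

lemma ConeDimGE.of_le (h : ConeDimGE d V) (hWV : W ≤ V) : ConeDimGE d W :=
  h.of_subset_span (Set.Subset.trans hWV Ideal.subset_span)

lemma ConeDimGE.mul_left (h : ConeDimGE d V) (M : Submodule K (MvPolynomial σ K)) :
    ConeDimGE d (M * V) := by
  have hMV : M * V ≤ (Ideal.span (V : Set (MvPolynomial σ K))).restrictScalars K :=
    Submodule.mul_le.mpr fun f _ g hg ↦ Ideal.mul_mem_left _ f (Ideal.subset_span hg)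
  exact h.of_subset_span hMV

lemma ConeDimGE.mono {d' : ℕ} (h : ConeDimGE d V) (hd' : d' ≤ d) : ConeDimGE d' V := by
  obtain ⟨p, rfl, hV, hp⟩ := h
  let i : Fin (p.length + 1) := ⟨p.length - d', by omega⟩
  refine ⟨p.drop i, Nat.sub_sub_self hd', ?_, by rw [RelSeries.last_drop, hp]⟩
  rw [RelSeries.head_drop]
  exact hV.trans (p.head_le i)

lemma ConeDimGE.le_ringKrullDim (h : ConeDimGE d V) :
    d ≤ ringKrullDim (MvPolynomial σ K ⧸ Ideal.span (V : Set (MvPolynomial σ K))) := by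
  obtain ⟨p, rfl, hV, -⟩ := h
  rw [ringKrullDim_quotient]
  exact Order.LTSeries.length_le_krullDim
    { length := p.length
      toFun := fun i ↦ ⟨p i, (Ideal.span_le.mpr hV).trans (p.head_le i)⟩
      step := p.step }

lemma le_idealOfVars_of_isHomogeneous {I : Ideal (MvPolynomial σ K)} (hI : I ≠ ⊤)
    (h : ∀ f ∈ I, homogeneousComponent 0 f ∈ I) : I ≤ idealOfVars σ K := fun f hf ↦ by
  by_contra hf0
  have hC := h f hf
  rw [homogeneousComponent_zero] at hC
  exact hI (Ideal.eq_top_of_isUnit_mem _ hC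
    ((isUnit_iff_ne_zero.mpr (mt mem_idealOfVars_iff.mpr hf0)).map C))

lemma coneDimGE_one_of_not_le_radical (hV : V ≤ 𝒮 n)
    (h : ¬ idealOfVars σ K ≤ (Ideal.span (V : Set (MvPolynomial σ K))).radical) :
    ConeDimGE 1 V := by
  let _ : GradedAlgebra (homogeneousSubmodule σ K) := gradedAlgebra
  rw [Ideal.radical_eq_sInf, le_sInf_iff] at h
  push Not at h
  obtain ⟨P, ⟨hVP, hP⟩, hmP⟩ := h
  let Q := P.homogeneousCore (homogeneousSubmodule σ K)
  have hQ : Q.toIdeal.IsPrime := hP.homogeneousCore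
  have hVQ : (V : Set (MvPolynomial σ K)) ⊆ Q.toIdeal := fun f hf ↦
    Ideal.mem_homogeneousCore_of_homogeneous_of_mem ⟨n, hV hf⟩ (hVP (Ideal.subset_span hf))
  have hQm : Q.toIdeal < idealOfVars σ K :=
    lt_of_le_not_ge (le_idealOfVars_of_isHomogeneous hQ.ne_top fun f hf ↦
      (mem_iff_homogeneousComponent_mem Q.isHomogeneous f).mp hf 0)
      fun hmQ ↦ hmP (hmQ.trans (Ideal.toIdeal_homogeneousCore_le _ _))
  exact ⟨{ length := 1
           toFun := ![⟨Q.toIdeal, hQ⟩, ⟨idealOfVars σ K, isPrime_idealOfVars⟩]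
           step := Fin.forall_fin_one.mpr hQm }, rfl, hVQ, rfl⟩

variable [Finite σ]

lemma ConeDimGE.sup_span_singleton {f : MvPolynomial σ K} (h : ConeDimGE (d + 1) V)
    (hf : f ∈ idealOfVars σ K) : ConeDimGE d (V ⊔ span K {f}) := by
  obtain ⟨p, hd, hV, hp⟩ := h
  obtain ⟨q, hfq, hpq, hhead, hlast⟩ := PrimeSpectrum.exist_ltSeries_mem_one_of_mem_last p (hp ▸ hf)
  have hq : q.length ≠ 0 := by omega
  refine ⟨q.tail hq, by rw [RelSeries.tail_length]; omega, ?_,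
    by rw [RelSeries.last_tail, ← hlast, hp]⟩
  rw [RelSeries.head_tail]
  have hVq : V ≤ (q 1).asIdeal.restrictScalars K :=
    hV.trans (hhead ▸ q.head_le 1)
  exact sup_le hVq ((span_singleton_le_iff_mem _ _).mpr hfq)

lemma ConeDimGE.sup_span_finset {C : Finset (MvPolynomial σ K)} (h : ConeDimGE (d + C.card) V)
    (hC : ∀ f ∈ C, f ∈ idealOfVars σ K) : ConeDimGE d (V ⊔ span K C) := by
  classical
  induction C using Finset.induction_on generalizing V with
  | empty => simpa using h
  | insert f C hfC ih =>
    rw [Finset.card_insert_of_notMem hfC, ← add_assoc] at h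
    rw [Finset.coe_insert, span_insert, ← sup_assoc]
    exact ih (h.sup_span_singleton (hC f (Finset.mem_insert_self f C)))
      fun g hg ↦ hC g (Finset.mem_insert_of_mem hg)

variable [Infinite K]

lemma eventually_notMem_minimalPrimes (I : Ideal (MvPolynomial σ K)) :
    ∀ᶠ ℓ : 𝒮 1 in generic K (𝒮 1), ∀ Q ∈ I.minimalPrimes, (ℓ : MvPolynomial σ K) ∈ Q →
      idealOfVars σ K ≤ Q := by
  refine (Filter.eventually_all_finite (Ideal.finite_minimalPrimes_of_isNoetherianRing _ I)).mpr
    fun Q _ ↦ ?_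
  by_cases hQ : idealOfVars σ K ≤ Q
  · exact Filter.Eventually.of_forall fun _ _ ↦ hQ
  · have hne : (Q.restrictScalars K).comap (𝒮 1).subtype ≠ ⊤ := fun h ↦
      hQ (idealOfVars_le_iff.mpr (comap_subtype_eq_top.mp h))
    filter_upwards [eventually_generic_notMem hne] with ℓ hℓ hℓQ using absurd hℓQ hℓ

/-- Generic linear forms avoid the minimal primes of `V` other than the ideal of the vertex. -/
lemma eventually_coneDimGE_of_slice (n : ℕ) (V : Submodule K (MvPolynomial σ K)) :
    ∀ᶠ ℓ in generic K (𝒮 1), ∀ d, ConeDimGE (d + 1) (slice (n + 1) V ℓ) → ConeDimGE (d + 2) V := by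
  filter_upwards [eventually_notMem_minimalPrimes (Ideal.span (V : Set (MvPolynomial σ K)))] with
    ℓ hℓ d ⟨p, hd, hslice, hp⟩
  have hheadm : ¬ idealOfVars σ K ≤ p.head.asIdeal := by
    have : NeZero p.length := ⟨by omega⟩
    rw [← hp]
    exact (p.strictMono Fin.last_pos').not_ge
  have hℓp : (ℓ : MvPolynomial σ K) ∈ p.head.asIdeal := by
    by_contra hℓp
    refine hheadm (idealOfVars_le_of_homogeneousSubmodule_le (n := n) p.head.2 fun f hf ↦ ?_)
    exact (p.head.2.mem_or_mem (hslice (multiples_le_slice (mul_mem_multiples ℓ hf)))).resolve_left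
      hℓp
  obtain ⟨Q, hQ, hQp⟩ := Ideal.exists_minimalPrimes_le
    (Ideal.span_le.mpr (Set.Subset.trans le_slice hslice))
  have hlt : Q < p.head.asIdeal := lt_of_le_of_ne hQp fun h ↦
    hheadm (h ▸ hℓ Q hQ (h ▸ hℓp))
  refine ⟨p.cons ⟨Q, hQ.1.1⟩ hlt, by simp [hd], ?_, by simpa using hp⟩
  exact Set.Subset.trans Ideal.subset_span hQ.1.2

end BaseLocus

section Persistence

variable {d n p : ℕ} {V W : Submodule K (MvPolynomial σ K)}

lemma coneDimGE_one_of_ne (hV : V ≤ 𝒮 1) (h : ¬ 𝒮 1 ≤ V) : ConeDimGE 1 V := by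
  obtain ⟨f, hf, hfV⟩ := SetLike.not_le_iff_exists.mp h
  obtain ⟨φ, hφf, hVφ⟩ := exists_le_ker_of_notMem hfV
  let e : MvPolynomial σ K →ₐ[K] K := aeval fun i ↦ φ (X i)
  have heφ : 𝒮 1 ≤ LinearMap.eqLocus e.toLinearMap φ := by
    rw [homogeneousSubmodule_one_eq_span_X, Submodule.span_le]
    rintro _ ⟨i, rfl⟩
    exact aeval_X _ i
  refine coneDimGE_one_of_not_le_radical hV fun hrad ↦ hφf ?_
  have hker : (Ideal.span (V : Set (MvPolynomial σ K))).radical ≤ RingHom.ker e := by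
    rw [(RingHom.ker_isPrime e).radical_le_iff, Ideal.span_le]
    exact fun g hg ↦ (heφ (hV hg)).trans (hVφ hg)
  exact (heφ hf).symm.trans (hker (hrad (homogeneousSubmodule_le_idealOfVars one_ne_zero hf)))

open scoped IsMulCommutative in
lemma exists_algHom_apply_X {A : Type*} [Semiring A] [Algebra K A] {T : σ → A}
    (hT : ∀ i j, Commute (T i) (T j)) :
    ∃ Φ : MvPolynomial σ K →ₐ[K] A, ∀ i, Φ (X i) = T i := by
  have : IsMulCommutative (Algebra.adjoin K (Set.range T)) :=
    Algebra.isMulCommutative_adjoin K (by rintro _ ⟨i, rfl⟩ _ ⟨j, rfl⟩; exact hT i j)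
  let t (i : σ) : Algebra.adjoin K (Set.range T) := ⟨T i, Algebra.subset_adjoin ⟨i, rfl⟩⟩
  exact ⟨(Algebra.adjoin K (Set.range T)).val.comp (aeval t), fun i ↦
    congrArg Subtype.val (aeval_X t i)⟩

variable {ℓ : homogeneousSubmodule σ K 1} {E : Type*} [AddCommGroup E] [Module K E]

/-- If `ℓ` acts injectively on forms of degree `p + 1` modulo `W`, then division by `ℓ` turns
multiplication by linear forms into commuting operators: the action of `x / ℓ`. -/
lemma exists_algHom_end {π : MvPolynomial σ K →ₗ[K] E}
    (hsurj : ∀ v, ∃ u ∈ 𝒮 p, π (ℓ * u) = v) (hπ : ∀ f ∈ 𝒮 (p + 1), π f = 0 ↔ f ∈ W)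
    (hinj : colon (p + 1) (𝒮 1 * W) ℓ ≤ W) :
    ∃ Φ : MvPolynomial σ K →ₐ[K] Module.End K E,
      ∀ x ∈ 𝒮 1, ∀ u ∈ 𝒮 p, Φ x (π (ℓ * u)) = π (x * u) := by
  obtain ⟨s, hs⟩ := (π ∘ₗ LinearMap.mulLeft K (ℓ : MvPolynomial σ K) ∘ₗ
    (𝒮 p).subtype).exists_rightInverse_of_surjective (LinearMap.range_eq_top.mpr fun v ↦
      (hsurj v).elim fun u ⟨hu, huv⟩ ↦ ⟨⟨u, hu⟩, huv⟩)
  replace hs (v : E) : π (ℓ * s v) = v := LinearMap.congr_fun hs v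
  have hsubmem {f g : MvPolynomial σ K} (hf : f ∈ 𝒮 (p + 1)) (hg : g ∈ 𝒮 (p + 1)) :
      π f = π g ↔ f - g ∈ W := by
    rw [← hπ _ (sub_mem hf hg), map_sub, sub_eq_zero]
  have hmem {x u : MvPolynomial σ K} (hx : x ∈ 𝒮 1) (hu : u ∈ 𝒮 p) : x * u ∈ 𝒮 (p + 1) :=
    mul_mem_homogeneousSubmodule_succ hx hu
  have hswap {x y u u' u'' : MvPolynomial σ K} (hx : x ∈ 𝒮 1) (hy : y ∈ 𝒮 1) (hu : u ∈ 𝒮 p)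
      (hu' : u' ∈ 𝒮 p) (hu'' : u'' ∈ 𝒮 p) (hyu : π (ℓ * u') = π (y * u))
      (hxu : π (ℓ * u'') = π (x * u)) : π (x * u') = π (y * u'') := by
    rw [hsubmem (hmem ℓ.2 hu') (hmem hy hu)] at hyu
    rw [hsubmem (hmem ℓ.2 hu'') (hmem hx hu)] at hxu
    rw [hsubmem (hmem hx hu') (hmem hy hu'')]
    refine hinj (mem_colon.mpr ⟨sub_mem (hmem hx hu') (hmem hy hu''), ?_⟩)
    have hring : ℓ * (x * u' - y * u'') = x * (ℓ * u' - y * u) - y * (ℓ * u'' - x * u) := by ring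
    rw [hring]
    exact sub_mem (mul_mem_mul hx hyu) (mul_mem_mul hy hxu)
  let T (i : σ) : Module.End K E := π ∘ₗ LinearMap.mulLeft K (X i) ∘ₗ (𝒮 p).subtype ∘ₗ s
  have hX (i : σ) : (X i : MvPolynomial σ K) ∈ 𝒮 1 := isHomogeneous_X K i
  obtain ⟨Φ, hΦ⟩ := exists_algHom_apply_X (K := K) (T := T) fun i j ↦ LinearMap.ext fun v ↦
    hswap (hX i) (hX j) (s v).2 (s (T j v)).2 (s (T i v)).2 (hs _) (hs _)
  refine ⟨Φ, fun x hx u hu ↦ ?_⟩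
  rw [homogeneousSubmodule_one_eq_span_X] at hx
  induction hx using span_induction with
  | mem x hx =>
    obtain ⟨i, rfl⟩ := hx
    rw [hΦ]
    exact (hswap (hX i) ℓ.2 hu (s _).2 (s _).2 (hs _) (hs _)).trans (hs _)
  | zero => simp
  | add x y _ _ hx hy => rw [map_add, LinearMap.add_apply, hx, hy, add_mul, map_add]
  | smul c x _ hx => rw [map_smul, LinearMap.smul_apply, hx, smul_mul_assoc, map_smul]

lemma algHom_end_apply {π : MvPolynomial σ K →ₗ[K] E} {Φ : MvPolynomial σ K →ₐ[K] Module.End K E}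
    (hΦ : ∀ x ∈ 𝒮 1, ∀ u ∈ 𝒮 p, Φ x (π (ℓ * u)) = π (x * u)) {k m : ℕ} (hkm : k + m = p + 1)
    {g u : MvPolynomial σ K} (hg : g ∈ 𝒮 k) (hu : u ∈ 𝒮 m) : Φ g (π (ℓ ^ k * u)) = π (g * u) := by
  induction k generalizing m g u with
  | zero =>
    rw [homogeneousSubmodule_zero, Submodule.mem_one] at hg
    obtain ⟨c, rfl⟩ := hg
    simp [C_mul']
  | succ k ih =>
    rw [← homogeneousSubmodule_mul_eq] at hg
    induction hg using Submodule.mul_induction_on' with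
    | mem_mul_mem g hg x hx =>
      have hℓu : (ℓ ^ k * u : MvPolynomial σ K) ∈ 𝒮 p := by
        obtain rfl : k + m = p := by omega
        rw [← homogeneousSubmodule_mul_eq, ← homogeneousSubmodule_one_pow]
        exact mul_mem_mul (Submodule.pow_mem_pow _ ℓ.2 k) hu
      have hxu := ih (m := m + 1) (by omega) hg (mul_mem_homogeneousSubmodule_succ hx hu)
      rw [map_mul, Module.End.mul_apply, pow_succ', mul_assoc, hΦ x hx _ hℓu, mul_left_comm, hxu,
        mul_assoc]
    | add g _ h _ hg hh => rw [map_add, LinearMap.add_apply, hg, hh, add_mul, map_add]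

/-- Gotzmann persistence for linear systems with empty hyperplane section. -/
lemma coneDimGE_one_of_injective (hW : W ≤ 𝒮 (p + 1)) (hWne : W ≠ 𝒮 (p + 1))
    (hslice : 𝒮 (p + 1) ≤ slice (p + 1) W ℓ)
    (hinj : colon (p + 1) (𝒮 1 * W) ℓ ≤ W) : ConeDimGE 1 W := by
  let π := (W.comap (homogeneousComponent (p + 1))).mkQ
  have hπ (f) (hf : f ∈ 𝒮 (p + 1)) : π f = 0 ↔ f ∈ W := by
    rw [mkQ_apply, Submodule.Quotient.mk_eq_zero, Submodule.mem_comap,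
      homogeneousComponent_of_mem hf, if_pos rfl]
  have hsurj (v) : ∃ u ∈ 𝒮 p, π (ℓ * u) = v := by
    obtain ⟨f, rfl⟩ := mkQ_surjective _ v
    obtain ⟨w, hw, _, ⟨u, hu, rfl⟩, hwu⟩ :=
      mem_sup.mp (hslice (homogeneousComponent_mem (p + 1) f))
    refine ⟨u, hu, sub_eq_zero.mp ?_⟩
    rw [← map_sub, mkQ_apply, Submodule.Quotient.mk_eq_zero, Submodule.mem_comap, map_sub,
      homogeneousComponent_of_mem (mul_mem_homogeneousSubmodule_succ ℓ.2 hu), if_pos rfl, ← hwu,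
      LinearMap.mulLeft_apply, sub_add_cancel_right]
    exact neg_mem hw
  obtain ⟨Φ, hΦ⟩ := exists_algHom_end hsurj hπ hinj
  have hΦℓ : Φ ℓ = 1 := LinearMap.ext fun v ↦ by
    obtain ⟨u, hu, rfl⟩ := hsurj v
    exact hΦ ℓ ℓ.2 u hu
  let v₀ := π (ℓ ^ (p + 1))
  have hΦv₀ (g) (hg : g ∈ 𝒮 (p + 1)) : Φ g v₀ = π g := by
    have := algHom_end_apply hΦ (m := 0) (add_zero _) hg (u := 1) (isHomogeneous_one σ K)
    rwa [mul_one, mul_one] at this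
  have hv₀ : v₀ ≠ 0 := fun h ↦ hWne (le_antisymm hW fun g hg ↦ by
    rw [← hπ g hg, ← hΦv₀ g hg, h, map_zero])
  refine coneDimGE_one_of_not_le_radical hW fun hrad ↦ hv₀ ?_
  obtain ⟨N, hN⟩ := hrad (homogeneousSubmodule_le_idealOfVars one_ne_zero ℓ.2)
  have hspan (f) (hf : f ∈ Ideal.span (W : Set (MvPolynomial σ K))) : Φ f v₀ = 0 := by
    induction hf using span_induction with
    | mem f hf => rw [hΦv₀ f (hW hf), hπ f (hW hf)]; exact hf
    | zero => rw [map_zero, LinearMap.zero_apply]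
    | add f g _ _ hf hg => rw [map_add, LinearMap.add_apply, hf, hg, add_zero]
    | smul a f _ hf => rw [smul_eq_mul, map_mul, Module.End.mul_apply, hf, map_zero]
  simpa [hΦℓ] using hspan _ hN

lemma mul_slice_le (n : ℕ) (W : Submodule K (MvPolynomial σ K)) (ℓ : 𝒮 1) :
    𝒮 1 * slice n W ℓ ≤ slice (n + 1) (𝒮 1 * W) ℓ := by
  rw [slice, Submodule.mul_sup]
  refine sup_le_sup_left ?_ _
  rw [add_comm]
  exact homogeneousSubmodule_mul_multiples_le 1 n ℓ

variable [Finite σ]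

lemma codim_mul_le (hW : W ≤ 𝒮 n) (ℓ : 𝒮 1) : codim (𝒮 (n + 1)) (𝒮 1 * W) ≤
    codim (𝒮 (n + 1)) (𝒮 1 * slice n W ℓ) + codim (𝒮 n) W :=
  (codim_eq_codim_slice_add_codim_colon n (𝒮 1 * W) ℓ).trans_le
    (Nat.add_le_add (codim_anti _ (mul_slice_le n W ℓ)) (codim_anti _ (le_colon_mul hW ℓ)))

lemma colon_mul_le (hW : W ≤ 𝒮 n) (h : codim (𝒮 n) W + codim (𝒮 (n + 1)) (𝒮 1 * slice n W ℓ) ≤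
    codim (𝒮 (n + 1)) (𝒮 1 * W)) : colon n (𝒮 1 * W) ℓ ≤ W := by
  refine (eq_of_codim_le (le_colon_mul hW ℓ) colon_le ?_).ge
  have hadd := codim_eq_codim_slice_add_codim_colon n (𝒮 1 * W) ℓ
  have hslice := codim_anti (𝒮 (n + 1)) (mul_slice_le n W ℓ)
  omega

lemma codim_mul_eq_zero (h : 𝒮 n ≤ V) : codim (𝒮 (n + 1)) (𝒮 1 * V) = 0 := by
  rw [codim_eq_zero_iff, add_comm, ← homogeneousSubmodule_mul_eq]
  exact mul_le_mul_right h _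

variable [Infinite K]

lemma coneDimGE_of_le_codim (hV : V ≤ 𝒮 1) (hd : d + 1 ≤ codim (𝒮 1) V) :
    ConeDimGE (d + 1) V := by
  induction d generalizing V with
  | zero => exact coneDimGE_one_of_ne hV fun h ↦ by rw [codim_eq_zero_iff.mpr h] at hd; omega
  | succ d ih =>
    obtain ⟨ℓ, hℓ⟩ := (eventually_coneDimGE_of_slice 0 V).exists
    have hadd : codim (𝒮 1) V = codim (𝒮 1) (slice 1 V ℓ) + codim (𝒮 0) (colon 0 V ℓ) :=
      codim_eq_codim_slice_add_codim_colon 0 V ℓ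
    have hone : finrank K (𝒮 0) ≤ 1 := by
      rw [homogeneousSubmodule_zero, Submodule.one_eq_span]
      exact (finrank_span_le_card {1}).trans (by simp)
    have hcolon := (codim_le_finrank (𝒮 0) (colon 0 V ℓ)).trans hone
    have hslice : d + 1 ≤ codim (𝒮 1) (slice 1 V ℓ) := by omega
    exact hℓ d (ih (slice_le hV) hslice)

lemma codim_mul_le_self (hW : W ≤ 𝒮 n) (hWn : codim (𝒮 n) W ≤ n) :
    codim (𝒮 (n + 1)) (𝒮 1 * W) ≤ codim (𝒮 n) W := by
  obtain ⟨ℓ, hℓ⟩ := (eventually_homogeneousSubmodule_le_slice hWn).exists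
  simpa [codim_mul_eq_zero hℓ] using codim_mul_le hW ℓ

lemma coneDimGE_one_of_codim_le_codim_mul (hW : W ≤ 𝒮 (p + 1))
    (h0 : codim (𝒮 (p + 1)) W ≠ 0) (hWp : codim (𝒮 (p + 1)) W ≤ p + 1)
    (hmul : codim (𝒮 (p + 1)) W ≤ codim (𝒮 (p + 1 + 1)) (𝒮 1 * W)) : ConeDimGE 1 W := by
  obtain ⟨ℓ, hℓ⟩ := (eventually_homogeneousSubmodule_le_slice hWp).exists
  refine coneDimGE_one_of_injective hW (fun h ↦ h0 (codim_eq_zero_iff.mpr h.ge)) hℓ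
    (colon_mul_le hW ?_)
  rwa [codim_mul_eq_zero hℓ, add_zero]

end Persistence

section Growth

variable [Finite σ]
variable {d k m n p s : ℕ} {V W Z : Submodule K (MvPolynomial σ K)}
  {ℓ : homogeneousSubmodule σ K 1}

lemma ConeDimGE.of_codim_le_add (hZ : ConeDimGE (d + k) Z) (hZW : Z ≤ W) (hW : W ≤ 𝒮 n)
    (hn : n ≠ 0) (hk : codim (𝒮 n) Z ≤ codim (𝒮 n) W + k) : ConeDimGE d W := by
  obtain ⟨C, hC, rfl⟩ := exists_finset_sup_span_eq hZW hW hk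
  exact (hZ.mono (Nat.add_le_add_left hC d)).sup_span_finset fun f hf ↦
    homogeneousSubmodule_le_idealOfVars hn (hW (le_sup_right (a := Z) (subset_span hf)))

variable [Infinite K]

lemma exists_slice_slice (hV : codim (𝒮 (p + 1)) V ≤ threshold (p + 1) (p + 2)) :
    ∃ ℓ ℓ' : 𝒮 1, codim (𝒮 (p + 1)) (slice (p + 1) V ℓ) ≤ p + 2 ∧
      codim (𝒮 (p + 1)) (slice (p + 1) (slice (p + 1) V ℓ) ℓ') ≤ 1 ∧
      ∀ d, ConeDimGE (d + 1) (slice (p + 1) (slice (p + 1) V ℓ) ℓ') → ConeDimGE (d + 3) V := by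
  obtain ⟨ℓ, hℓ, hdim⟩ :=
    ((eventually_codim_slice_le_succ hV).and (eventually_coneDimGE_of_slice p V)).exists
  have hlt : codim (𝒮 (p + 1)) (slice (p + 1) V ℓ) < threshold (p + 1) 2 := by
    rw [threshold_succ, threshold_one]
    omega
  obtain ⟨ℓ', hℓ', hdim'⟩ := ((eventually_codim_slice_le_of_lt_threshold (by omega) hlt).and
    (eventually_coneDimGE_of_slice p _)).exists
  exact ⟨ℓ, ℓ', hℓ, hℓ', fun d hd ↦ hdim (d + 1) (hdim' d hd)⟩

lemma codim_mul_le_add (hV : V ≤ 𝒮 (p + 1))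
    (hVp : codim (𝒮 (p + 1)) V ≤ threshold (p + 1) (p + 2)) :
    codim (𝒮 (p + 1 + 1)) (𝒮 1 * V) ≤ codim (𝒮 (p + 1)) V + (p + 3) := by
  obtain ⟨ℓ, ℓ', hℓ, hℓ', -⟩ := exists_slice_slice hVp
  have hmul := codim_mul_le hV ℓ
  have hmul' := codim_mul_le (slice_le (ℓ := ℓ) hV) ℓ'
  have hmul'' := codim_mul_le_self (slice_le (ℓ := ℓ') (slice_le (ℓ := ℓ) hV)) (by omega)
  omega

lemma coneDimGE_three_of_le_codim_mul (hV : V ≤ 𝒮 (p + 1))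
    (hVp : codim (𝒮 (p + 1)) V ≤ threshold (p + 1) (p + 2))
    (hmul : codim (𝒮 (p + 1)) V + (p + 3) ≤ codim (𝒮 (p + 1 + 1)) (𝒮 1 * V)) : ConeDimGE 3 V := by
  obtain ⟨ℓ, ℓ', hℓ, hℓ', hdim⟩ := exists_slice_slice hVp
  have hV' := slice_le (ℓ := ℓ) hV
  have hV'' := slice_le (ℓ := ℓ') hV'
  have hmul₁ := codim_mul_le hV ℓ
  have hmul₂ := codim_mul_le hV' ℓ'
  have hmul₃ := codim_mul_le_self hV'' (by omega)
  exact hdim 0 (coneDimGE_one_of_codim_le_codim_mul hV'' (by omega) (by omega) (by omega))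

lemma codim_slice_eq_or_coneDimGE (hW : W ≤ 𝒮 (p + 1)) (hs : 1 ≤ s) (hsp : s ≤ p + 1)
    (h0 : codim (𝒮 (p + 1)) W ≠ 0) (hℓ : codim (𝒮 (p + 1)) (slice (p + 1) W ℓ) ≤ s)
    (hgrowth : codim (𝒮 (p + 1)) W + s ≤ codim (𝒮 (p + 1 + 1)) (𝒮 1 * W) + 1) :
    ConeDimGE 1 W ∨ codim (𝒮 (p + 1)) (slice (p + 1) W ℓ) = s ∧
      colon (p + 1) (𝒮 1 * W) ℓ ≤ W := by
  have hslice := slice_le (ℓ := ℓ) hW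
  have hmul := codim_mul_le hW ℓ
  have hmul' := codim_mul_le_self hslice (hℓ.trans hsp)
  by_cases hempty : codim (𝒮 (p + 1)) (slice (p + 1) W ℓ) = 0
  · exact .inl (coneDimGE_one_of_injective hW (fun h ↦ h0 (codim_eq_zero_iff.mpr h.ge))
      (codim_eq_zero_iff.mp hempty) (colon_mul_le hW (by omega)))
  by_cases hpersist : codim (𝒮 (p + 1)) (slice (p + 1) W ℓ) ≤
      codim (𝒮 (p + 1 + 1)) (𝒮 1 * slice (p + 1) W ℓ)
  · exact .inl ((coneDimGE_one_of_codim_le_codim_mul hslice hempty (hℓ.trans hsp) hpersist).of_le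
      le_slice)
  · exact .inr ⟨by omega, colon_mul_le hW (by omega)⟩

lemma homogeneousSubmodule_mul_colon_le
    (hmin : ∀ y, codim (𝒮 (n + 1)) (slice (n + 1) W ℓ) ≤ codim (𝒮 (n + 1)) (slice (n + 1) W y))
    (hinj : colon (n + 1) (𝒮 1 * W) ℓ ≤ W) : 𝒮 1 * colon n W ℓ ≤ W :=
  Submodule.mul_le.mpr fun x hx _ hf ↦ mul_mem_of_generic_mul_mem hmin hinj hf ⟨x, hx⟩

lemma eventually_colon_eq
    (hmin : ∀ y, codim (𝒮 (n + 1)) (slice (n + 1) W ℓ) ≤ codim (𝒮 (n + 1)) (slice (n + 1) W y))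
    (hinj : colon (n + 1) (𝒮 1 * W) ℓ ≤ W) :
    ∀ᶠ x in generic K (𝒮 1), colon n W x = colon n W ℓ := by
  filter_upwards [eventually_codim_slice_le (n + 1) W] with x hx
  have hle : colon n W ℓ ≤ colon n W x := fun f hf ↦
    mem_colon.mpr ⟨colon_le hf, mul_mem_of_generic_mul_mem hmin hinj hf x⟩
  refine (eq_of_codim_le hle colon_le ?_).symm
  have hadd := codim_eq_codim_slice_add_codim_colon n W ℓ
  have hadd' := codim_eq_codim_slice_add_codim_colon n W x
  have := hx ℓ
  omega

/-- Here `Z` is the residual system of `W` by a generic hyperplane. -/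
lemma exists_residual_or_coneDimGE (hW : W ≤ 𝒮 (p + 1)) (hs : 1 ≤ s) (hsp : s ≤ p + 1)
    (hle : threshold (p + 1) s ≤ codim (𝒮 (p + 1)) W)
    (hlt : codim (𝒮 (p + 1)) W < threshold (p + 1) (s + 1))
    (hgrowth : codim (𝒮 (p + 1)) W + s ≤ codim (𝒮 (p + 1 + 1)) (𝒮 1 * W) + 1) :
    ConeDimGE 1 W ∨ ∃ Z ≤ 𝒮 p, 𝒮 1 * Z ≤ W ∧ codim (𝒮 p) Z + s = codim (𝒮 (p + 1)) W ∧
      ∀ᶠ ℓ in generic K (𝒮 1), colon p W ℓ = Z := by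
  have h0 : codim (𝒮 (p + 1)) W ≠ 0 := by
    have := threshold_mono (p + 1) hs
    rw [threshold_one] at this
    omega
  obtain ⟨ℓ, hℓ, hmin⟩ := ((eventually_codim_slice_le_of_lt_threshold hsp hlt).and
    (eventually_codim_slice_le (p + 1) W)).exists
  refine (codim_slice_eq_or_coneDimGE hW hs hsp h0 hℓ hgrowth).imp_right fun ⟨hslice, hinj⟩ ↦
    ⟨colon p W ℓ, colon_le, homogeneousSubmodule_mul_colon_le hmin hinj, ?_,
      eventually_colon_eq hmin hinj⟩
  rw [codim_eq_codim_slice_add_codim_colon p W ℓ, hslice, add_comm]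

lemma coneDimGE_one_of_codim_slice_residual_le (hZ : Z ≤ 𝒮 (p + 1)) (hZW : 𝒮 1 * Z ≤ W)
    (hW : W ≤ 𝒮 (p + 1 + 1)) (hcodim : codim (𝒮 (p + 1)) Z + s = codim (𝒮 (p + 1 + 1)) W)
    (hs : 1 ≤ s) (hsp : s ≤ p + 1) (hℓ : codim (𝒮 (p + 1)) (slice (p + 1) Z ℓ) ≤ s) :
    ConeDimGE 1 W := by
  have hslice := slice_le (ℓ := ℓ) hZ
  have hmul := codim_mul_le hZ ℓ
  have hmul' := codim_mul_le_self hslice (hℓ.trans hsp)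
  have hanti := codim_anti (𝒮 (p + 1 + 1)) hZW
  obtain rfl := eq_of_codim_le hZW hW (by omega)
  exact ((coneDimGE_one_of_codim_le_codim_mul hslice (by omega) (by omega) (by omega)).of_le
    le_slice).mul_left _

lemma coneDimGE_one_of_mul_residual_ne (hZ : Z ≤ 𝒮 (p + 1)) (hZW : 𝒮 1 * Z ≤ W)
    (hne : 𝒮 1 * Z ≠ W) (hW : W ≤ 𝒮 (p + 1 + 1))
    (hcodim : codim (𝒮 (p + 1)) Z + s = codim (𝒮 (p + 1 + 1)) W) (hsp : s ≤ p)
    (hlt : codim (𝒮 (p + 1)) Z < threshold (p + 1) (s + 2)) : ConeDimGE 1 W := by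
  obtain ⟨ℓ, hℓ, hdim⟩ := ((eventually_codim_slice_le_of_lt_threshold (by omega) hlt).and
    (eventually_coneDimGE_of_slice p Z)).exists
  have hslice := slice_le (ℓ := ℓ) hZ
  have hmul := codim_mul_le hZ ℓ
  have hmul' := codim_mul_le_self hslice (by omega)
  have hgt : codim (𝒮 (p + 1 + 1)) W < codim (𝒮 (p + 1 + 1)) (𝒮 1 * Z) :=
    not_le.mp fun h ↦ hne (eq_of_codim_le hZW hW h)
  have hslice1 : ConeDimGE 1 (slice (p + 1) Z ℓ) :=
    coneDimGE_one_of_codim_le_codim_mul hslice (by omega) (by omega) (by omega)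
  exact ((hdim 0 hslice1).mul_left _).of_codim_le_add (d := 1) (k := 1) hZW hW
    (Nat.succ_ne_zero _) (by omega)

/-- The residual system of `Z` has maximal codimension again and generates `Z`, so the growth from
it to `Z` is that of a plane. -/
lemma coneDimGE_three_of_codim_eq_threshold (hZ : Z ≤ 𝒮 (p + 1))
    (hcodim : codim (𝒮 (p + 1)) Z = threshold (p + 1) (p + 2))
    (hmin : ∀ y, codim (𝒮 (p + 1)) (slice (p + 1) Z ℓ) ≤ codim (𝒮 (p + 1)) (slice (p + 1) Z y))
    (hℓ : codim (𝒮 (p + 1)) (slice (p + 1) Z ℓ) = p + 2)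
    (hinj : colon (p + 1) (𝒮 1 * Z) ℓ ≤ Z) : ConeDimGE 3 Z := by
  cases p with
  | zero => exact coneDimGE_of_le_codim (d := 2) hZ hcodim.ge
  | succ p =>
    have hadd := codim_eq_codim_slice_add_codim_colon (p + 1) Z ℓ
    have hthreshold : threshold (p + 1 + 1) (p + 1 + 2) = threshold (p + 1) (p + 2) + (p + 3) :=
      threshold_succ_succ (p + 1) (p + 2)
    have hcolon : codim (𝒮 (p + 1)) (colon (p + 1) Z ℓ) = threshold (p + 1) (p + 2) := by omega
    have hmul := codim_mul_le_add colon_le hcolon.le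
    have heq : 𝒮 1 * colon (p + 1) Z ℓ = Z :=
      eq_of_codim_le (homogeneousSubmodule_mul_colon_le hmin hinj) hZ (by omega)
    have hdim : ConeDimGE 3 (colon (p + 1) Z ℓ) :=
      coneDimGE_three_of_le_codim_mul colon_le hcolon.le (by rw [heq]; omega)
    exact heq ▸ hdim.mul_left (𝒮 1)

lemma coneDimGE_one_of_codim_residual_eq_threshold (hZ : Z ≤ 𝒮 (p + 1)) (hZW : 𝒮 1 * Z ≤ W)
    (hW : W ≤ 𝒮 (p + 1 + 1)) (hcodim : codim (𝒮 (p + 1)) Z + s = codim (𝒮 (p + 1 + 1)) W)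
    (hs : p + 1 ≤ s) (hZp : codim (𝒮 (p + 1)) Z = threshold (p + 1) (p + 2))
    (hcolon : ∀ᶠ ℓ in generic K (𝒮 1), colon (p + 1) W ℓ = Z) : ConeDimGE 1 W := by
  obtain ⟨ℓ, hℓZ, hmin, hℓ⟩ := (hcolon.and ((eventually_codim_slice_le (p + 1) Z).and
    (eventually_codim_slice_le_succ hZp.le))).exists
  by_cases hslice : codim (𝒮 (p + 1)) (slice (p + 1) Z ℓ) ≤ p + 1
  · have hmul := codim_mul_le hZ ℓ
    have hmul' := codim_mul_le_self (slice_le (ℓ := ℓ) hZ) hslice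
    have hanti := codim_anti (𝒮 (p + 1 + 1)) hZW
    exact coneDimGE_one_of_codim_slice_residual_le hZ hZW hW hcodim (by omega) (by omega)
      (hslice.trans hs)
  · have hinj : colon (p + 1) (𝒮 1 * Z) ℓ ≤ Z :=
      (inf_le_inf_left _ (Submodule.comap_mono hZW)).trans hℓZ.le
    have hdim := coneDimGE_three_of_codim_eq_threshold hZ hZp hmin (by omega) hinj
    have hmul := codim_mul_le_add hZ hZp.le
    exact (hdim.mul_left (𝒮 1)).of_codim_le_add (d := 1) (k := 2) hZW hW (Nat.succ_ne_zero _)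
      (by omega)

theorem coneDimGE_one_of_growth (hW : W ≤ 𝒮 (p + 1)) (hs : 1 ≤ s) (hsp : s ≤ p + 1)
    (hle : threshold (p + 1) s ≤ codim (𝒮 (p + 1)) W)
    (hlt : codim (𝒮 (p + 1)) W < threshold (p + 1) (s + 1))
    (hgrowth : codim (𝒮 (p + 1)) W + s ≤ codim (𝒮 (p + 1 + 1)) (𝒮 1 * W) + 1) :
    ConeDimGE 1 W := by
  induction p generalizing s W with
  | zero =>
    have hmono := threshold_mono (0 + 1) hs
    rw [threshold_one] at hmono
    have hpos : 0 + 1 ≤ codim (𝒮 (0 + 1)) W := by omega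
    exact coneDimGE_of_le_codim hW hpos
  | succ p ih =>
    rcases exists_residual_or_coneDimGE hW hs hsp hle hlt hgrowth with
      hdim | ⟨Z, hZ, hZW, hcodim, hcolon⟩
    · exact hdim
    rw [threshold_succ_left hsp] at hle
    rw [threshold_succ (p + 1 + 1), threshold_succ_left hsp] at hlt
    by_cases hsmall : s ≤ p + 1 ∧ codim (𝒮 (p + 1)) Z < threshold (p + 1) (s + 1)
    · obtain ⟨ℓ, hℓ⟩ := (eventually_codim_slice_le_of_lt_threshold hsmall.1 hsmall.2).exists
      exact coneDimGE_one_of_codim_slice_residual_le hZ hZW hW hcodim hs hsmall.1 hℓ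
    have hZs : codim (𝒮 (p + 1)) Z = threshold (p + 1) (s + 1) := by
      have hsucc := threshold_succ (p + 1) s
      omega
    rcases le_or_gt s p with hsp' | hsp'
    · have hZlt : codim (𝒮 (p + 1)) Z < threshold (p + 1) (s + 2) := by
        rw [hZs, threshold_succ (p + 1) (s + 1)]
        omega
      by_cases hmul : 𝒮 1 * Z = W
      · have hdim := ih hZ s.succ_pos (by omega) hZs.ge hZlt (by rw [hmul]; omega)
        exact hmul ▸ hdim.mul_left (𝒮 1)
      · exact coneDimGE_one_of_mul_residual_ne hZ hZW hmul hW hcodim hsp' hZlt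
    · have hZp : codim (𝒮 (p + 1)) Z = threshold (p + 1) (p + 2) := by
        have hlast := threshold_succ (p + 1) (p + 2)
        obtain rfl | rfl : s = p + 1 ∨ s = p + 2 := by omega
        · exact hZs
        · rw [hZs, hlast, Nat.sub_self, add_zero]
      exact coneDimGE_one_of_codim_residual_eq_threshold hZ hZW hW hcodim hsp' hZp hcolon

end Growth

section Dimension

lemma ringKrullDim_le_of_isIntegral (A B : Type*) [CommRing A] [CommRing B] [Algebra A B]
    [Algebra.IsIntegral A B] : ringKrullDim B ≤ ringKrullDim A :=
  Order.krullDim_le_of_strictMono (PrimeSpectrum.comap (algebraMap A B)) fun P Q hPQ ↦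
    Ideal.IsIntegral.comap_lt_comap (I := P.asIdeal) (J := Q.asIdeal) hPQ

variable {ι : Type*} {p : ℕ} {N W : Submodule K (MvPolynomial σ K)}
  {ℓ : ι → homogeneousSubmodule σ K 1}

lemma iSup_homogeneousSubmodule : ⨆ t, 𝒮 t = ⊤ :=
  eq_top_iff.mpr fun f _ ↦ sum_homogeneousComponent f ▸ Submodule.sum_mem _ fun t _ ↦
    le_iSup 𝒮 t (homogeneousComponent_isHomogeneous t f)

/-- Graded Nakayama lemma: modulo `W`, the forms of degree at most `p` generate the polynomial ring
as a module over the subalgebra generated by the linear forms `ℓ i`. -/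
lemma eq_top_of_homogeneousSubmodule_le_sup_iSup_multiples
    (hsec : 𝒮 (p + 1) ≤ W ⊔ ⨆ i, multiples (ℓ i) (p + 1)) (hlow : ∀ t ≤ p, 𝒮 t ≤ N)
    (hW : ∀ d, 𝒮 d * W ≤ N) (hmul : ∀ i, ∀ f ∈ N, ℓ i * f ∈ N) : N = ⊤ := by
  rw [← top_le_iff, ← iSup_homogeneousSubmodule, iSup_le_iff]
  intro t
  induction t using Nat.strong_induction_on with
  | _ t ih =>
    rcases le_or_gt t p with ht | ht
    · exact hlow t ht
    obtain ⟨d, rfl⟩ := Nat.exists_eq_add_of_le' ht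
    rw [← homogeneousSubmodule_mul_eq]
    refine (mul_le_mul_right hsec _).trans ?_
    rw [Submodule.mul_sup, Submodule.mul_iSup]
    refine sup_le (hW d) (iSup_le fun i ↦ ?_)
    rw [homogeneousSubmodule_mul_multiples_succ]
    exact Submodule.map_le_iff_le_comap.mpr fun f hf ↦ hmul i f (ih (d + p) (by omega) hf)

lemma finite_aeval_of_homogeneousSubmodule_le_sup_iSup_multiples [Finite σ] {B : Type*} [CommRing B]
    [Algebra K B] {π : MvPolynomial σ K →ₐ[K] B} (hπ : Function.Surjective π)
    (hW : W ≤ LinearMap.ker π.toLinearMap)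
    (hsec : 𝒮 (p + 1) ≤ W ⊔ ⨆ i, multiples (ℓ i) (p + 1)) :
    (aeval (R := K) fun i ↦ π (ℓ i)).Finite := by
  let φ : MvPolynomial ι K →ₐ[K] B := aeval fun i ↦ π (ℓ i)
  let _ := φ.toRingHom.toAlgebra
  have : IsScalarTower K (MvPolynomial ι K) B :=
    IsScalarTower.of_algebraMap_eq fun x ↦ (φ.commutes x).symm
  obtain ⟨T, hT⟩ : ((⨆ t : Fin (p + 1), 𝒮 t).map π.toLinearMap).FG :=
    (Submodule.fg_iSup (fun t : Fin (p + 1) ↦ 𝒮 t) fun t ↦ homogeneousSubmodule_fg σ K t).map _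
  let N := span (MvPolynomial ι K) (T : Set B)
  have htop : (N.restrictScalars K).comap π.toLinearMap = ⊤ := by
    refine eq_top_of_homogeneousSubmodule_le_sup_iSup_multiples hsec (fun t ht ↦ ?_) (fun d ↦ ?_)
      fun i f hf ↦ ?_
    · rw [← Submodule.map_le_iff_le_comap]
      refine (Submodule.map_mono (le_iSup (fun t : Fin (p + 1) ↦ 𝒮 t) ⟨t, by omega⟩)).trans ?_
      rw [← hT]
      exact span_le_restrictScalars K (MvPolynomial ι K) _
    · refine Submodule.mul_le.mpr fun f _ w hw ↦ ?_
      have hπw : π w = 0 := hW hw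
      change π (f * w) ∈ N
      rw [map_mul, hπw, mul_zero]
      exact N.zero_mem
    · have hX : algebraMap (MvPolynomial ι K) B (X i) = π (ℓ i) := aeval_X _ i
      change π (ℓ i * f) ∈ N
      rw [map_mul, ← hX, ← Algebra.smul_def]
      exact N.smul_mem (X i) hf
  refine ⟨⟨T, eq_top_iff.mpr fun b _ ↦ ?_⟩⟩
  obtain ⟨f, rfl⟩ := hπ b
  exact htop.ge (mem_top (x := f))

lemma ringKrullDim_quotient_span_le_card [Finite σ] [Finite ι]
    (hsec : 𝒮 (p + 1) ≤ W ⊔ ⨆ i, multiples (ℓ i) (p + 1)) :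
    ringKrullDim (MvPolynomial σ K ⧸ Ideal.span (W : Set (MvPolynomial σ K))) ≤ Nat.card ι := by
  let π := Ideal.Quotient.mkₐ K (Ideal.span (W : Set (MvPolynomial σ K)))
  let φ : MvPolynomial ι K →ₐ[K] _ := aeval fun i ↦ π (ℓ i)
  have hfin : φ.Finite := finite_aeval_of_homogeneousSubmodule_le_sup_iSup_multiples
    (Ideal.Quotient.mkₐ_surjective K _)
    (fun w hw ↦ Ideal.Quotient.eq_zero_iff_mem.mpr (Ideal.subset_span hw)) hsec
  let _ := φ.toRingHom.toAlgebra
  have : Algebra.IsIntegral (MvPolynomial ι K)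
      (MvPolynomial σ K ⧸ Ideal.span (W : Set (MvPolynomial σ K))) := ⟨hfin.to_isIntegral⟩
  refine (ringKrullDim_le_of_isIntegral (MvPolynomial ι K) _).trans_eq ?_
  rw [ringKrullDim_of_isNoetherianRing, ringKrullDim_eq_zero_of_field, zero_add]

variable [Finite σ] [Infinite K]

lemma ringKrullDim_quotient_span_le_two (hW : codim (𝒮 (p + 1)) W < threshold (p + 1) (p + 2)) :
    ringKrullDim (MvPolynomial σ K ⧸ Ideal.span (W : Set (MvPolynomial σ K))) ≤ 2 := by
  obtain ⟨ℓ, hℓ⟩ := (eventually_codim_slice_le_of_lt_threshold le_rfl hW).exists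
  obtain ⟨ℓ', hℓ'⟩ := (eventually_homogeneousSubmodule_le_slice hℓ).exists
  have hsec : 𝒮 (p + 1) ≤ W ⊔ ⨆ i, multiples (![ℓ, ℓ'] i) (p + 1) := by
    refine hℓ'.trans (sup_le (sup_le_sup_left ?_ W) (le_sup_of_le_right ?_))
    · exact le_iSup (fun i ↦ multiples (![ℓ, ℓ'] i) (p + 1)) 0
    · exact le_iSup (fun i ↦ multiples (![ℓ, ℓ'] i) (p + 1)) 1
  simpa using ringKrullDim_quotient_span_le_card hsec

end Dimension

section HilbertFunction

variable [Finite σ]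

lemma hilb_eq_codim (J : Ideal (MvPolynomial σ K)) (t : ℕ) :
    hilb J t = codim (𝒮 t) (J.restrictScalars K ⊓ 𝒮 t) := by
  have hker : LinearMap.ker (Ideal.Quotient.mkₐ K J).toLinearMap = J.restrictScalars K := by
    ext f
    exact Ideal.Quotient.eq_zero_iff_mem
  rw [inf_comm, codim_inf_left, ← hker]
  exact finrank_map_eq_codim_ker _ _

lemma hilb_succ_le_codim_mul (J : Ideal (MvPolynomial σ K)) (n : ℕ) :
    hilb J (n + 1) ≤ codim (𝒮 (n + 1)) (𝒮 1 * (J.restrictScalars K ⊓ 𝒮 n)) := by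
  rw [hilb_eq_codim]
  exact codim_anti _ (Submodule.mul_le.mpr fun x hx f hf ↦
    ⟨J.mul_mem_left x hf.1, mul_mem_homogeneousSubmodule_succ hx hf.2⟩)

end HilbertFunction

end AlmostMaximalGrowth

open AlmostMaximalGrowth in
theorem almostMaximalGrowth_baseLocus_dim_zero_or_one_general
    {σ K : Type*} [Finite σ] [Field K] [Infinite K] (J : Ideal (MvPolynomial σ K)) (n : ℕ)
    (hlow : n + 1 ≤ hilb J n) (hhigh : hilb J n < Nat.choose (n + 2) 2)
    (hamg : macaulayUp n (hilb J n) ≤ hilb J (n + 1) + 1) :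
    ringKrullDim (MvPolynomial σ K ⧸ compIdeal J n) = 1 ∨
      ringKrullDim (MvPolynomial σ K ⧸ compIdeal J n) = 2 := by
  rw [← threshold_self] at hhigh
  obtain ⟨s, hsn, hle, hlt⟩ := exists_threshold_le_lt hhigh
  have hs : 1 ≤ s := by
    by_contra! hs
    obtain rfl := Nat.lt_one_iff.mp hs
    rw [zero_add, threshold_one] at hlt
    omega
  obtain ⟨p, rfl⟩ := Nat.exists_eq_add_of_le' (hs.trans hsn)
  rw [macaulayUp_eq_add hsn hle hlt] at hamg
  have hmul := hilb_succ_le_codim_mul J (p + 1)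
  rw [hilb_eq_codim J (p + 1)] at hle hlt hhigh hamg
  have hdim := (coneDimGE_one_of_growth inf_le_right hs hsn hle hlt (by omega)).le_ringKrullDim
  rcases (ringKrullDim_quotient_span_le_two hhigh).lt_or_eq with hdim' | hdim'
  · exact .inl ((ENat.WithBot.lt_add_one_iff (m := 1).mp hdim').antisymm hdim)
  · exact .inr hdim'

/-- **Theorem (almost maximal growth, curve case).**
Let `K` be an algebraically closed field, `S = K[x_1,…,x_r]`, `J ⊆ S` a homogeneous ideal and
`A = S/J`.  Assume `n + 1 ≤ h_A(n) < C(n+2,2)` (so the `n`-binomial expansion of `h_A(n)` begins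
with `C(n+1,n)`), and that `h_A(n+1) = h_A(n)^{⟨n⟩} - 1`, i.e. the growth from degree `n` to
degree `n+1` is one less than maximal.  Then the base locus of `[J]_n` in `ℙ^{r-1}` is nonempty
of dimension `0` or `1`; equivalently, the Krull dimension of `S/⟨[J]_n⟩` is `1` or `2`. -/
theorem almostMaximalGrowth_baseLocus_dim_zero_or_one
    {K : Type*} [Field K] [IsAlgClosed K] {r : ℕ}
    (J : Ideal (MvPolynomial (Fin r) K))
    (hJhom : ∀ f ∈ J, ∀ t : ℕ, homogeneousComponent t f ∈ J)
    (n : ℕ)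
    (hlow : n + 1 ≤ hilb J n)
    (hhigh : hilb J n < Nat.choose (n + 2) 2)
    (hamg : hilb J (n + 1) + 1 = macaulayUp n (hilb J n)) :
    ringKrullDim (MvPolynomial (Fin r) K ⧸ compIdeal J n) = 1 ∨
      ringKrullDim (MvPolynomial (Fin r) K ⧸ compIdeal J n) = 2 := by
  exact almostMaximalGrowth_baseLocus_dim_zero_or_one_general J n hlow hhigh hamg.ge
end

section
/- Let K be an algebraically closed field, S = K[x_1,…,x_r] the standard graded polynomial ring, J ⊆ S a homogeneous ideal, and A = S/J with Hilbert function h_A(t) = dim_K [A]_t. Fix an integer n and assume h_A(n) ≥ C(n+2,2) and h_A(n+1) = h_A(n)^{⟨n⟩} − 1 (almost maximal growth). Then the base locus of [J]_n in ℙ^{r−1} is a scheme of dimension either MG(h_A(n),n) − 1 or MG(h_A(n),n), where MG(k,n) = k_n − n with C(k_n,n) the leading term of the n-binomial expansion of k. -/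
open MvPolynomial

/-- The MG-dimension `MG(k,n) = k_n - n`, where `C(k_n,n)` is the leading term of the
`n`-binomial expansion of `k` (so `k_n` is the largest `b` with `C(b,n) ≤ k`). -/
def MGdim (k n : ℕ) : ℕ :=
  Nat.findGreatest (fun b => Nat.choose b n ≤ k) (k + n) - n

/-!
Write `W = [J]_n`, of codimension `c` in `S_n`, and let `f` be a generic linear form. Green's
theorem bounds the codimension of the hyperplane section `W + f S_{n-1}`, and comparison with
Macaulay's bound shows that the section has again maximal or almost maximal growth, while the
dimension of the base locus drops by one. Hence the lower bound on the dimension reduces to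
showing that the base locus is nonempty when `n < c < C(n+2,2)`; the upper bound needs no growth
at all.

If the base locus is empty then so is that of the section, whose codimension is at most `n`. For
such small codimensions a section whose growth does not drop has a nonempty base locus:
generically `f S_{n-1}` already spans `S_n / W`, and if `f` can be cancelled one degree higher
then linear forms act on `S_n / W` by `u ↦ a u / f`, so that no power of `f` lies in the ideal of
`W`. So the growth of the section drops, and counting dimensions forces `(W S_1 : f) = W`. Then
`V = (W : f)` lies in degree `n - 1`, satisfies `V S_1 ⊆ W`, and has growth close to the maximum,
so that induction on the degree bounds the dimension of its base locus from below. On the other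
hand `V S_1` has small codimension in `W`, and so bounds that dimension from above, a
contradiction.
-/

open Module

namespace MacaulayGrowth

section BinomialExpansion

/-- The top `k_i` of the leading term `C(k_i, i)` of the `i`-binomial expansion of `k`. -/
def leadIndex (i k : ℕ) : ℕ := Nat.findGreatest (fun b => b.choose i ≤ k) (k + i)

/-- Green's bound `k_{⟨i⟩}`: the sum `C(k_i - 1, i) + ⋯ + C(k_j - 1, j)` over the `i`-binomial
expansion of `k`. It bounds the codimension in degree `i` of a generic hyperplane section. The value
in degree `0`, which no binomial expansion reaches, is chosen to make `macaulayDown_choose_add`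
true in degree `1` as well. -/
def macaulayDown : ℕ → ℕ → ℕ
  | 0, k => k
  | i + 1, k =>
    if k = 0 then 0
    else (leadIndex (i + 1) k - 1).choose (i + 1) +
      macaulayDown i (k - (leadIndex (i + 1) k).choose (i + 1))

lemma lt_choose_add_succ (n x : ℕ) : x < (x + n + 1).choose (n + 1) := by
  induction n with
  | zero => simp
  | succ n ih =>
    rw [show x + (n + 1) + 1 = x + n + 1 + 1 by ring, Nat.choose_succ_succ']
    omega

lemma leadIndex_eq {n k x : ℕ} (hle : k.choose (n + 1) ≤ x) (hlt : x < (k + 1).choose (n + 1)) :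
    leadIndex (n + 1) x = k := by
  have le_of_choose_le {b : ℕ} (hb : b.choose (n + 1) ≤ x) : b ≤ k := by
    by_contra! h
    exact absurd (hlt.trans_le (Nat.choose_le_choose (n + 1) h)) hb.not_gt
  have hk : k ≤ x + (n + 1) := by
    by_contra! h
    exact absurd ((lt_choose_add_succ n x).trans_le (Nat.choose_le_choose (n + 1) h.le))
      hle.not_gt
  exact le_antisymm
    (le_of_choose_le (Nat.findGreatest_spec (P := fun b => b.choose (n + 1) ≤ x) hk hle))
    (Nat.le_findGreatest hk hle)

lemma exists_eq_choose_add (n : ℕ) {x : ℕ} (hx : x ≠ 0) :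
    ∃ k y, n ≤ k ∧ y < (k + 1).choose n ∧ x = (k + 1).choose (n + 1) + y := by
  let P : ℕ → Prop := fun k => x < (k + 2).choose (n + 1)
  have hP : ∃ k, P k :=
    ⟨x + n, (lt_choose_add_succ n x).trans_le (Nat.choose_le_choose _ (by omega))⟩
  classical
  have hspec : x < (Nat.find hP + 2).choose (n + 1) := Nat.find_spec hP
  have hn : n ≤ Nat.find hP := by
    by_contra! h
    have : (Nat.find hP + 2).choose (n + 1) ≤ (n + 1).choose (n + 1) :=
      Nat.choose_le_choose _ (by omega)
    rw [Nat.choose_self] at this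
    omega
  have hle : (Nat.find hP + 1).choose (n + 1) ≤ x := by
    rcases hfind : Nat.find hP with _ | k
    · obtain rfl : n = 0 := by omega
      simpa [Nat.one_le_iff_ne_zero] using hx
    · exact not_lt.1 (Nat.find_min hP (m := k) (by omega))
  refine ⟨Nat.find hP, x - (Nat.find hP + 1).choose (n + 1), hn, ?_, by omega⟩
  rw [Nat.choose_succ_succ'] at hspec
  omega

@[elab_as_elim]
lemma binomialExpansion_induction {motive : ℕ → ℕ → Prop}
    (degree_zero : ∀ x, motive 0 x) (zero : ∀ n, motive (n + 1) 0)
    (choose_add : ∀ n k y, n ≤ k → y < (k + 1).choose n → motive n y →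
      motive (n + 1) ((k + 1).choose (n + 1) + y))
    (n x : ℕ) : motive n x := by
  induction n generalizing x with
  | zero => exact degree_zero x
  | succ n ih =>
    rcases eq_or_ne x 0 with rfl | hx
    · exact zero n
    · obtain ⟨k, y, hk, hy, rfl⟩ := exists_eq_choose_add n hx
      exact choose_add n k y hk hy (ih y)

lemma leadIndex_choose_add {n k y : ℕ} (hy : y < k.choose n) :
    leadIndex (n + 1) (k.choose (n + 1) + y) = k :=
  leadIndex_eq (Nat.le_add_right _ _) (by rw [Nat.choose_succ_succ']; omega)

lemma macaulayUp_choose_add {n k y : ℕ} (hk : n < k) (hy : y < k.choose n) :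
    macaulayUp (n + 1) (k.choose (n + 1) + y) = (k + 1).choose (n + 2) + macaulayUp n y := by
  have hlead := leadIndex_choose_add hy
  have hpos := Nat.choose_pos (show n + 1 ≤ k from hk)
  simp only [leadIndex, ← add_assoc] at hlead
  rw [macaulayUp, if_neg (by omega), hlead, Nat.add_sub_cancel_left]

@[simp]
lemma macaulayUp_zero_right (n : ℕ) : macaulayUp n 0 = 0 := by
  cases n <;> simp [macaulayUp]

@[simp]
lemma macaulayDown_zero_left (x : ℕ) : macaulayDown 0 x = x := rfl

@[simp]
lemma macaulayDown_zero_right (n : ℕ) : macaulayDown n 0 = 0 := by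
  cases n <;> simp [macaulayDown]

lemma macaulayUp_choose (n k : ℕ) :
    macaulayUp (n + 1) (k.choose (n + 1)) = (k + 1).choose (n + 2) := by
  rcases lt_or_ge n k with hk | hk
  · simpa using macaulayUp_choose_add hk (Nat.choose_pos hk.le)
  · rw [Nat.choose_eq_zero_of_lt (by omega), Nat.choose_eq_zero_of_lt (by omega),
      macaulayUp_zero_right]

lemma macaulayDown_choose_add_of_lt {n k y : ℕ} (hk : n ≤ k) (hy : y < (k + 1).choose n) :
    macaulayDown (n + 1) ((k + 1).choose (n + 1) + y) =
      k.choose (n + 1) + macaulayDown n y := by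
  have hpos := Nat.choose_pos (show n + 1 ≤ k + 1 by omega)
  rw [macaulayDown, if_neg (by omega), leadIndex_choose_add hy, Nat.add_sub_cancel_left,
    Nat.add_sub_cancel]

lemma macaulayDown_choose (n k : ℕ) : macaulayDown n ((k + 1).choose n) = k.choose n := by
  cases n with
  | zero => simp [macaulayDown]
  | succ n =>
    rcases le_or_gt n k with hk | hk
    · simpa using macaulayDown_choose_add_of_lt hk (Nat.choose_pos (by omega))
    · rw [Nat.choose_eq_zero_of_lt (by omega), Nat.choose_eq_zero_of_lt (by omega),
        macaulayDown_zero_right]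

@[simp]
lemma macaulayDown_succ_one (n : ℕ) : macaulayDown (n + 1) 1 = 0 := by
  simpa using macaulayDown_choose (n + 1) n

lemma macaulayDown_choose_add {n k y : ℕ} (hk : n ≤ k + 1) (hy : y ≤ (k + 1).choose n) :
    macaulayDown (n + 1) ((k + 1).choose (n + 1) + y) =
      k.choose (n + 1) + macaulayDown n y := by
  rcases hk.lt_or_eq with hk | rfl
  · rcases hy.lt_or_eq with hy | rfl
    · exact macaulayDown_choose_add_of_lt (by omega) hy
    · rw [add_comm (Nat.choose _ _), ← Nat.choose_succ_succ', macaulayDown_choose,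
        macaulayDown_choose, Nat.choose_succ_succ', add_comm]
  · rw [Nat.choose_self] at hy
    interval_cases y <;> simp [Nat.choose_eq_zero_of_lt]

lemma macaulayDown_lt_choose {n k x : ℕ} (hk : n ≤ k) (hx : x < (k + 1).choose n) :
    macaulayDown n x < k.choose n := by
  induction n, x using binomialExpansion_induction generalizing k with
  | degree_zero x => simpa [macaulayDown] using hx
  | zero n => simpa using Nat.choose_pos hk
  | choose_add n j y hj hy ih =>
    rw [macaulayDown_choose_add_of_lt hj hy]
    have hjk : j < k := by
      by_contra! h
      have := Nat.choose_le_choose (n + 1) (show k + 1 ≤ j + 1 by omega)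
      omega
    calc j.choose (n + 1) + macaulayDown n y < j.choose (n + 1) + j.choose n := by
          gcongr; exact ih hj hy
      _ = (j + 1).choose (n + 1) := by rw [Nat.choose_succ_succ', add_comm]
      _ ≤ k.choose (n + 1) := Nat.choose_le_choose _ hjk

lemma macaulayDown_succ_bounds (n x : ℕ) :
    macaulayDown n x ≤ macaulayDown n (x + 1) ∧ macaulayDown n (x + 1) ≤ macaulayDown n x + 1 := by
  induction n, x using binomialExpansion_induction with
  | degree_zero x => simp [macaulayDown]
  | zero n => simp
  | choose_add n k y hk hy ih =>
    rw [add_assoc, macaulayDown_choose_add_of_lt hk hy,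
      macaulayDown_choose_add (by omega) (show y + 1 ≤ _ from hy)]
    omega

lemma macaulayDown_monotone (n : ℕ) : Monotone (macaulayDown n) :=
  monotone_nat_of_le_succ fun x => (macaulayDown_succ_bounds n x).1

lemma macaulayDown_lipschitz (n : ℕ) {a b : ℕ} (h : a ≤ b) :
    macaulayDown n b + a ≤ macaulayDown n a + b := by
  induction b, h using Nat.le_induction with
  | base => rfl
  | succ b _ ih => have := (macaulayDown_succ_bounds n b).2; omega

lemma macaulayDown_le (n x : ℕ) : macaulayDown n x ≤ x := by
  simpa using macaulayDown_lipschitz n (Nat.zero_le x)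

lemma macaulayDown_lt_self (n : ℕ) {x : ℕ} (hx : x ≠ 0) : macaulayDown (n + 1) x < x := by
  have := macaulayDown_lipschitz (n + 1) (Nat.one_le_iff_ne_zero.2 hx)
  rw [macaulayDown_succ_one] at this
  omega

lemma macaulayUp_eq_add (n x : ℕ) :
    macaulayUp (n + 1) x = x + macaulayUp (n + 1) (macaulayDown (n + 1) x) := by
  suffices ∀ m, (m = 0 → x = 0) → macaulayUp m x = x + macaulayUp m (macaulayDown m x) from
    this (n + 1) (by simp)
  intro m hm
  induction m, x using binomialExpansion_induction with
  | degree_zero x => simp [hm rfl]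
  | zero m => simp
  | choose_add m k y hk hy ih =>
    have hmy : m = 0 → y = 0 := by rintro rfl; simpa using hy
    rw [macaulayUp_choose_add (by omega) hy, macaulayDown_choose_add_of_lt hk hy, ih hmy,
      Nat.choose_succ_succ' (k + 1)]
    rcases hk.lt_or_eq with hk | rfl
    · rw [macaulayUp_choose_add hk (macaulayDown_lt_choose hk.le hy)]
      ring
    · have : macaulayDown m y = 0 := by simpa using macaulayDown_lt_choose le_rfl hy
      simp [this]

lemma macaulayUp_strictMono (n : ℕ) : StrictMono (macaulayUp (n + 1)) := by
  intro a b hab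
  induction b using Nat.strong_induction_on generalizing a with
  | _ b ih =>
    have hle : macaulayUp (n + 1) (macaulayDown (n + 1) a) ≤
        macaulayUp (n + 1) (macaulayDown (n + 1) b) := by
      rcases (macaulayDown_monotone (n + 1) hab.le).lt_or_eq with hlt | heq
      · exact (ih _ (macaulayDown_lt_self n (by omega)) hlt).le
      · rw [heq]
    rw [macaulayUp_eq_add, macaulayUp_eq_add n b]
    omega

lemma macaulayDown_one_left (x : ℕ) : macaulayDown 1 x = x - 1 := by
  cases x with
  | zero => simp
  | succ x => simpa using macaulayDown_choose 1 x

lemma macaulayDown_add_macaulayDown_sub_le (n a : ℕ) :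
    macaulayDown (n + 1) (macaulayDown (n + 1) a + 1) +
      macaulayDown n (a - (macaulayDown (n + 1) a + 1)) ≤ macaulayDown (n + 1) a := by
  induction n generalizing a with
  | zero =>
    simp only [zero_add, macaulayDown_one_left, macaulayDown_zero_left]
    omega
  | succ n ih =>
    rcases eq_or_ne a 0 with rfl | ha
    · simp
    obtain ⟨_ | k, y, hk, hy, rfl⟩ := exists_eq_choose_add (n + 1) ha
    · omega
    have hdown : macaulayDown (n + 1) y + 1 ≤ (k + 1).choose (n + 1) := macaulayDown_lt_choose hk hy
    have hpascal := Nat.choose_succ_succ' (k + 1) (n + 1)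
    rw [macaulayDown_choose_add_of_lt hk hy, add_assoc (Nat.choose _ _),
      macaulayDown_choose_add hk hdown]
    suffices macaulayDown (n + 1) ((k + 1 + 1).choose (n + 1 + 1) + y -
        ((k + 1).choose (n + 1 + 1) + (macaulayDown (n + 1) y + 1))) ≤
          k.choose (n + 1) + macaulayDown n (y - (macaulayDown (n + 1) y + 1)) by
      have := ih y
      have := Nat.choose_succ_succ' k (n + 1)
      omega
    rcases eq_or_ne y 0 with rfl | hy0
    · calc _ ≤ macaulayDown (n + 1) ((k + 1).choose (n + 1)) :=
            macaulayDown_monotone _ (by omega)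
        _ ≤ _ := by rw [macaulayDown_choose]; omega
    · have hlt := macaulayDown_lt_self n hy0
      have hlip := macaulayDown_lipschitz (n + 1) hy.le
      rw [macaulayDown_choose, Nat.choose_succ_succ' (k + 1) n] at hlip
      rw [← macaulayDown_choose_add (by omega) (by omega)]
      exact macaulayDown_monotone _ (by omega)

lemma le_macaulayDown_of_le_add {n a b : ℕ}
    (h : b ≤ macaulayDown (n + 1) b + macaulayDown n (a - b)) : b ≤ macaulayDown (n + 1) a := by
  by_contra! hlt
  have := macaulayDown_add_macaulayDown_sub_le n a
  have := macaulayDown_lipschitz (n + 1) (show macaulayDown (n + 1) a + 1 ≤ b from hlt)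
  have := macaulayDown_monotone n (show a - b ≤ a - (macaulayDown (n + 1) a + 1) by omega)
  omega

lemma macaulayDown_eq_zero {n x : ℕ} (hx : x ≤ n) : macaulayDown n x = 0 := by
  simpa using macaulayDown_lt_choose (n := n) (k := n) (x := x) le_rfl
    (by rw [Nat.choose_succ_self_right]; omega)

lemma macaulayUp_eq_self {n x : ℕ} (hx : x ≤ n + 1) : macaulayUp (n + 1) x = x := by
  rw [macaulayUp_eq_add, macaulayDown_eq_zero hx, macaulayUp_zero_right, add_zero]

lemma macaulayDown_pos {n x : ℕ} (hx : n + 2 ≤ x) : 0 < macaulayDown (n + 1) x := by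
  have := macaulayDown_monotone (n + 1) hx
  rwa [show n + 2 = (n + 1 + 1).choose (n + 1) from (Nat.choose_succ_self_right _).symm,
    macaulayDown_choose, Nat.choose_self] at this

lemma macaulayDown_add {n x : ℕ} (hx : x < (n + 2).choose 2) :
    macaulayDown (n + 1) (n + 2 + x) = 1 + macaulayDown n x := by
  rw [← Nat.choose_symm_of_eq_add (n := n + 2) (a := n) rfl] at hx
  simpa [Nat.choose_succ_self_right] using macaulayDown_choose_add_of_lt (Nat.le_succ n) hx

lemma choose_succ_two (n : ℕ) : (n + 1).choose 2 = n + n.choose 2 := by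
  rw [Nat.choose_succ_succ', Nat.choose_one_right]

lemma macaulayDown_sub_macaulayDown (n : ℕ) {c : ℕ} (hc : c < (n + 3).choose 2) :
    (c - macaulayDown (n + 1) c < (n + 2).choose 2 ∧
      (macaulayDown n (c - macaulayDown (n + 1) c) = macaulayDown (n + 1) c ∨
        macaulayDown n (c - macaulayDown (n + 1) c) = macaulayDown (n + 1) c + 1)) ∨
    (c - macaulayDown (n + 1) c = (n + 2).choose 2 ∧
      (macaulayDown (n + 1) c = n ∨ macaulayDown (n + 1) c = n + 1)) := by
  induction n generalizing c with
  | zero =>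
    have : c < 3 := by simpa using hc
    rw [macaulayDown_one_left]
    interval_cases c <;> simp
  | succ n ih =>
    have h3 : (n + 1 + 3).choose 2 = n + 3 + (n + 3).choose 2 := choose_succ_two _
    have h2 : (n + 1 + 2).choose 2 = n + 2 + (n + 2).choose 2 := choose_succ_two _
    have h1 : (n + 2).choose 2 = n + 1 + (n + 1).choose 2 := choose_succ_two _
    rcases lt_or_ge c (n + 3) with hsmall | hlarge
    · have hle : macaulayDown (n + 1) c ≤ 1 := by
        have := macaulayDown_monotone (n + 1) (show c ≤ n + 2 by omega)
        rwa [← Nat.choose_succ_self_right (n + 1), macaulayDown_choose, Nat.choose_self] at this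
      rw [macaulayDown_eq_zero (n := n + 2) (by omega), Nat.sub_zero]
      omega
    · obtain ⟨d, rfl⟩ := Nat.exists_eq_add_of_le hlarge
      have hd : d < (n + 3).choose 2 := by omega
      have hle := macaulayDown_le (n + 1) d
      rw [macaulayDown_add hd,
        show n + 3 + d - (1 + macaulayDown (n + 1) d) =
          n + 2 + (d - macaulayDown (n + 1) d) by omega]
      rcases ih hd with ⟨hlt, hdown⟩ | ⟨heq, hdown⟩
      · rw [macaulayDown_add hlt]
        omega
      · omega

end BinomialExpansion

lemma choose_MGdim_le_and_lt (n : ℕ) {x : ℕ} (hx : x ≠ 0) :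
    (n + 1 + MGdim x (n + 1)).choose (n + 1) ≤ x ∧
      x < (n + 1 + (MGdim x (n + 1) + 1)).choose (n + 1) := by
  obtain ⟨k, y, hk, hy, rfl⟩ := exists_eq_choose_add n hx
  have hMG : n + 1 + MGdim ((k + 1).choose (n + 1) + y) (n + 1) = k + 1 := by
    have : MGdim _ (n + 1) = k + 1 - (n + 1) := congrArg (· - (n + 1)) (leadIndex_choose_add hy)
    omega
  rw [← add_assoc, hMG, Nat.choose_succ_succ' (k + 1)]
  omega

section LinearAlgebra

variable {K E F P : Type*} [Field K] [AddCommGroup E] [Module K E] [AddCommGroup F] [Module K F]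

lemma finrank_map_add_finrank_ker_inf (f : E →ₗ[K] F) (A : Submodule K E) [FiniteDimensional K A] :
    finrank K (A.map f) + finrank K (LinearMap.ker f ⊓ A : Submodule K E) = finrank K A := by
  rw [← LinearMap.finrank_range_add_finrank_ker (f.domRestrict A), LinearMap.range_domRestrict,
    LinearMap.ker_domRestrict, inf_comm, ← Submodule.map_comap_subtype]
  congr 1
  exact (Submodule.equivMapOfInjective _ A.injective_subtype _).finrank_eq.symm

lemma finrank_map_mkQ_comap (T : E →ₗ[K] F) (W : Submodule K F) (A : Submodule K E)
    [FiniteDimensional K A] :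
    finrank K (A.map (W.comap T).mkQ) = finrank K ((A.map T).map W.mkQ) := by
  have hleft := finrank_map_add_finrank_ker_inf (W.comap T).mkQ A
  have hright := finrank_map_add_finrank_ker_inf (W.mkQ ∘ₗ T) A
  rw [Submodule.ker_mkQ] at hleft
  rw [LinearMap.ker_comp, Submodule.ker_mkQ, Submodule.map_comp] at hright
  omega

lemma finrank_map_mkQ_sup (W : Submodule K E) {R B : Submodule K E} (hRB : R ≤ B)
    [FiniteDimensional K B] :
    finrank K (B.map W.mkQ) = finrank K (R.map W.mkQ) + finrank K (B.map (W ⊔ R).mkQ) := by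
  have h := finrank_map_add_finrank_ker_inf (Submodule.factor (le_sup_left : W ≤ W ⊔ R))
    (B.map W.mkQ)
  rw [← Submodule.map_comp, Submodule.factor_comp_mk, Submodule.factor, Submodule.ker_mapQ,
    Submodule.comap_id, Submodule.map_sup, Submodule.mkQ_map_self, bot_sup_eq,
    inf_eq_left.2 (Submodule.map_mono hRB)] at h
  omega

/-- A weak substitute for Zariski-open subsets of an affine space: each line through a point of `U`
leaves `U` in only finitely many points. Over an infinite field, nonempty such sets intersect. -/
def IsLineOpen (K : Type*) {E : Type*} [Field K] [AddCommGroup E] [Module K E] (U : Set E) : Prop :=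
  ∀ x ∈ U, ∀ y : E, {t : K | x + t • y ∉ U}.Finite

namespace IsLineOpen

lemma inter_nonempty [Infinite K] {U V : Set E} (hU : IsLineOpen K U) (hV : IsLineOpen K V)
    (hU' : U.Nonempty) (hV' : V.Nonempty) : (U ∩ V).Nonempty := by
  obtain ⟨x, hx⟩ := hU'
  obtain ⟨y, hy⟩ := hV'
  have hfinV : {t : K | x + t • (y - x) ∉ V}.Finite := by
    refine ((hV y hy (x - y)).image (fun t => 1 - t)).subset fun t ht => ⟨1 - t, ?_, by simp⟩
    rwa [Set.mem_ofPred_eq, show y + (1 - t) • (x - y) = x + t • (y - x) by module]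
  obtain ⟨t, ht⟩ := ((hU x hx (y - x)).union hfinV).infinite_compl.nonempty
  rw [Set.mem_compl_iff, Set.mem_union, not_or] at ht
  exact ⟨x + t • (y - x), not_not.1 ht.1, not_not.1 ht.2⟩

end IsLineOpen

lemma isLineOpen_setOf_forall_notMem {ι : Type*} [Finite ι] (p : ι → Submodule K E) :
    IsLineOpen K {x | ∀ i, x ∉ p i} := by
  intro x hx y
  refine (Set.finite_iUnion (f := fun i => {t : K | x + t • y ∈ p i}) fun i =>
    Set.Subsingleton.finite fun s hs t ht => by_contra fun hst => hx i ?_).subset fun t ht => ?_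
  · have hy : y ∈ p i := by
      rw [← (p i).smul_mem_iff (sub_ne_zero.2 hst)]
      simpa [sub_smul] using (p i).sub_mem hs ht
    exact ((p i).add_mem_iff_left ((p i).smul_mem s hy)).1 hs
  · simpa using ht

lemma finite_setOf_not_isUnit_one_add_smul [FiniteDimensional K E] (C : Module.End K E) :
    {t : K | ¬ IsUnit (1 + t • C)}.Finite := by
  refine (Set.Finite.preimage (f := fun t : K => -t⁻¹) (neg_injective.comp inv_injective).injOn
    (Module.End.finite_spectrum C)).subset fun t ht => ?_
  have ht0 : t ≠ 0 := by
    rintro rfl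
    simp at ht
  rw [Set.mem_preimage, spectrum.mem_iff]
  refine fun h => ht ?_
  have : 1 + t • C = algebraMap K (Module.End K E) (-t) * (algebraMap K _ (-t⁻¹) - C) := by
    rw [mul_sub, ← map_mul, neg_mul_neg, mul_inv_cancel₀ ht0, map_one, map_neg, neg_mul,
      sub_neg_eq_add, Algebra.smul_def]
  rw [this]
  exact ((neg_ne_zero.2 ht0).isUnit.map _).mul h

/-- Compressing `A` to the identity of its range reduces the rank bound to the invertibility of
`1 + t • C`. -/
lemma finite_setOf_rank_add_smul_lt [FiniteDimensional K E] (A B : E →ₗ[K] F) :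
    {t : K | ¬ finrank K (LinearMap.range A) ≤ finrank K (LinearMap.range (A + t • B))}.Finite := by
  let R := LinearMap.range A
  obtain ⟨lift, hlift⟩ := LinearMap.exists_rightInverse_of_surjective A.rangeRestrict
    A.range_rangeRestrict
  obtain ⟨proj, hproj⟩ := LinearMap.exists_leftInverse_of_injective R.subtype R.ker_subtype
  have hA : proj ∘ₗ A ∘ₗ lift = 1 := by
    ext x : 1
    calc proj (A (lift x)) = proj (R.subtype (A.rangeRestrict (lift x))) := rfl
      _ = x := by
        rw [← LinearMap.comp_apply A.rangeRestrict, hlift, ← LinearMap.comp_apply, hproj]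
        rfl
  refine (finite_setOf_not_isUnit_one_add_smul (proj ∘ₗ B ∘ₗ lift)).subset fun t ht hunit => ht ?_
  have hcomp : proj ∘ₗ (A + t • B) ∘ₗ lift = 1 + t • (proj ∘ₗ B ∘ₗ lift) := by
    rw [← hA]
    ext
    simp
  have hinj : Function.Injective ((A + t • B) ∘ₗ lift) := by
    rw [← hcomp] at hunit
    exact (((Module.End.isUnit_iff _).1 hunit).injective).of_comp (f := proj)
  calc finrank K R = finrank K (LinearMap.range ((A + t • B) ∘ₗ lift)) :=
        (LinearMap.finrank_range_of_inj hinj).symm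
    _ ≤ finrank K (LinearMap.range (A + t • B)) :=
        Submodule.finrank_mono (LinearMap.range_comp_le_range _ _)

lemma isLineOpen_le_finrank_range [FiniteDimensional K E] [AddCommGroup P] [Module K P]
    (Φ : P →ₗ[K] E →ₗ[K] F) (q : ℕ) :
    IsLineOpen K {p | q ≤ finrank K (LinearMap.range (Φ p))} := by
  intro x hx y
  refine (finite_setOf_rank_add_smul_lt (Φ x) (Φ y)).subset fun t ht hle => ht ?_
  rw [Set.mem_ofPred_eq, map_add, map_smul]
  exact le_trans hx hle

lemma exists_le_sup_span_range (R W : Submodule K E) [FiniteDimensional K (R.map W.mkQ)] :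
    ∃ f : Fin (finrank K (R.map W.mkQ)) → E,
      (∀ i, f i ∈ R) ∧ R ≤ W ⊔ Submodule.span K (Set.range f) := by
  let b := Module.finBasis K (R.map W.mkQ)
  choose f hfR hf using fun i => (b i).2
  refine ⟨f, hfR, ?_⟩
  have hspan : (Submodule.span K (Set.range f)).map W.mkQ = R.map W.mkQ :=
    calc (Submodule.span K (Set.range f)).map W.mkQ
        = (Submodule.span K (Set.range b)).map (R.map W.mkQ).subtype := by
          rw [Submodule.map_span, Submodule.map_span, ← Set.range_comp, ← Set.range_comp]
          exact congrArg (fun g => Submodule.span K (Set.range g)) (funext hf)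
      _ = R.map W.mkQ := by rw [b.span_eq, Submodule.map_subtype_top]
  rw [← Submodule.comap_map_mkQ, hspan]
  exact Submodule.le_comap_map _ _

end LinearAlgebra

section Growth

variable {K σ : Type*} [Field K]

local notation "𝒮" => homogeneousSubmodule σ K

/-- The codimension of `W ∩ S_n` in the space `S_n` of forms of degree `n`, encoded as the dimension
of the image of `S_n` modulo `W`; for `W = [J]_n` this is the value of the Hilbert function of `S/J`
at `n`. -/
noncomputable def codim (n : ℕ) (W : Submodule K (MvPolynomial σ K)) : ℕ :=
  finrank K ((𝒮 n).map W.mkQ)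

/-- The degree `n + 1` component of the ideal generated by `W` and the linear form `f`, for a space
`W` of forms of degree `n + 1`. -/
noncomputable def hyperplaneSection (n : ℕ) (W : Submodule K (MvPolynomial σ K)) (f : 𝒮 1) :
    Submodule K (MvPolynomial σ K) :=
  W ⊔ (K ∙ (f : MvPolynomial σ K)) * 𝒮 n

/-- The forms of degree `n` whose product with the linear form `f` lies in `W`. -/
noncomputable def colon (n : ℕ) (W : Submodule K (MvPolynomial σ K)) (f : 𝒮 1) :
    Submodule K (MvPolynomial σ K) :=
  W.comap (LinearMap.mulLeft K (f : MvPolynomial σ K)) ⊓ 𝒮 n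

/-- The space spanned by the products of elements of `W` with linear forms. -/
noncomputable def nextDegree (W : Submodule K (MvPolynomial σ K)) :
    Submodule K (MvPolynomial σ K) :=
  W * 𝒮 1

lemma homogeneousSubmodule_mul_homogeneousSubmodule (m n : ℕ) : 𝒮 m * 𝒮 n = 𝒮 (m + n) := by
  rw [← homogeneousSubmodule_one_pow K m, ← homogeneousSubmodule_one_pow K n, ← pow_add,
    homogeneousSubmodule_one_pow]

lemma span_singleton_mul_eq_map (f : MvPolynomial σ K) (A : Submodule K (MvPolynomial σ K)) :
    (K ∙ f) * A = A.map (LinearMap.mulLeft K f) :=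
  Submodule.ext fun _ => Submodule.mem_span_singleton_mul

variable {n : ℕ} {W W' : Submodule K (MvPolynomial σ K)} {f : homogeneousSubmodule σ K 1}

lemma span_singleton_mul_homogeneousSubmodule_le (f : 𝒮 1) (n : ℕ) :
    (K ∙ (f : MvPolynomial σ K)) * 𝒮 n ≤ 𝒮 (n + 1) := by
  rw [add_comm, ← homogeneousSubmodule_mul_homogeneousSubmodule]
  exact mul_le_mul_left ((Submodule.span_singleton_le_iff_mem _ _).2 f.2) _

lemma nextDegree_le (hW : W ≤ 𝒮 n) : nextDegree W ≤ 𝒮 (n + 1) := by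
  rw [← homogeneousSubmodule_mul_homogeneousSubmodule]
  exact mul_le_mul_left hW _

lemma nextDegree_homogeneousSubmodule (n : ℕ) : nextDegree (𝒮 n) = 𝒮 (n + 1) :=
  homogeneousSubmodule_mul_homogeneousSubmodule n 1

lemma le_hyperplaneSection : W ≤ hyperplaneSection n W f := le_sup_left

lemma hyperplaneSection_le (hW : W ≤ 𝒮 (n + 1)) : hyperplaneSection n W f ≤ 𝒮 (n + 1) :=
  sup_le hW (span_singleton_mul_homogeneousSubmodule_le f n)

lemma colon_le : colon n W f ≤ 𝒮 n := inf_le_right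

lemma mem_colon {a : MvPolynomial σ K} : a ∈ colon n W f ↔ f * a ∈ W ∧ a ∈ 𝒮 n := Iff.rfl

lemma nextDegree_hyperplaneSection :
    nextDegree (hyperplaneSection n W f) = hyperplaneSection (n + 1) (nextDegree W) f := by
  rw [nextDegree, hyperplaneSection, Submodule.sup_mul, mul_assoc,
    homogeneousSubmodule_mul_homogeneousSubmodule, hyperplaneSection, nextDegree]

lemma hyperplaneSection_right_comm (W : Submodule K (MvPolynomial σ K)) (f g : 𝒮 1) :
    hyperplaneSection n (hyperplaneSection n W f) g =
      hyperplaneSection n (hyperplaneSection n W g) f :=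
  sup_right_comm _ _ _

lemma le_colon_nextDegree (hW : W ≤ 𝒮 n) : W ≤ colon n (nextDegree W) f := fun w hw =>
  mem_colon.2 ⟨mul_comm w f.1 ▸ Submodule.mul_mem_mul hw f.2, hW hw⟩

lemma nextDegree_colon_le : nextDegree (colon n W f) ≤ colon (n + 1) (nextDegree W) f := by
  refine le_inf (Submodule.mul_le.2 fun a ha b hb => ?_) (nextDegree_le colon_le)
  rw [Submodule.mem_comap, LinearMap.mulLeft_apply, ← mul_assoc]
  exact Submodule.mul_mem_mul (mem_colon.1 ha).1 hb

lemma hyperplaneSection_colon_le (f g : 𝒮 1) :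
    hyperplaneSection n (colon (n + 1) W g) f ≤
      colon (n + 1) (hyperplaneSection (n + 1) W f) g := by
  refine sup_le (inf_le_inf_right _ (Submodule.comap_mono le_sup_left))
    (le_inf ?_ (span_singleton_mul_homogeneousSubmodule_le f n))
  rw [← Submodule.map_le_iff_le_comap, ← span_singleton_mul_eq_map, mul_left_comm]
  exact (mul_le_mul_right (span_singleton_mul_homogeneousSubmodule_le g n) _).trans
    le_sup_right

lemma hyperplaneSection_zero : hyperplaneSection n W 0 = W := by
  simp [hyperplaneSection]

section Finite

variable [Finite σ]

instance (n : ℕ) : FiniteDimensional K (𝒮 n) :=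
  Module.Finite.iff_fg.2 (homogeneousSubmodule_fg _ _ n)

lemma finrank_add_codim (hW : W ≤ 𝒮 n) : codim n W + finrank K W = finrank K (𝒮 n) := by
  have h := finrank_map_add_finrank_ker_inf W.mkQ (𝒮 n)
  rwa [Submodule.ker_mkQ, inf_eq_left.2 hW] at h

lemma codim_anti (h : W ≤ W') : codim n W' ≤ codim n W := by
  rw [codim, codim, ← Submodule.factor_comp_mk h, Submodule.map_comp]
  exact Submodule.finrank_map_le _ _

lemma codim_inf_homogeneousSubmodule : codim n (W ⊓ 𝒮 n) = codim n W := by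
  have h : codim n W + finrank K ↥(W ⊓ 𝒮 n) = finrank K (𝒮 n) := by
    rw [codim, ← finrank_map_add_finrank_ker_inf W.mkQ (𝒮 n), Submodule.ker_mkQ]
  have := finrank_add_codim (n := n) (W := W ⊓ 𝒮 n) inf_le_right
  omega

lemma eq_of_codim_le (h : W ≤ W') (hW' : W' ≤ 𝒮 n) (hc : codim n W ≤ codim n W') : W = W' := by
  have := Submodule.finiteDimensional_of_le hW'
  have := finrank_add_codim hW'
  have := finrank_add_codim (h.trans hW')
  exact Submodule.eq_of_le_of_finrank_le h (by omega)

@[simp]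
lemma codim_homogeneousSubmodule : codim n (𝒮 n) = 0 := by
  simp [codim, Submodule.mkQ_map_self]

lemma eq_homogeneousSubmodule_of_codim_eq_zero (hW : W ≤ 𝒮 n) (h : codim n W = 0) : W = 𝒮 n :=
  eq_of_codim_le hW le_rfl (by simp [h])

lemma codim_sup {R : Submodule K (MvPolynomial σ K)} (hR : R ≤ 𝒮 n) :
    codim n W = finrank K (R.map W.mkQ) + codim n (W ⊔ R) :=
  finrank_map_mkQ_sup W hR

lemma codim_eq_codim_colon_add (f : 𝒮 1) :
    codim (n + 1) W = codim n (colon n W f) + codim (n + 1) (hyperplaneSection n W f) := by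
  rw [colon, codim_inf_homogeneousSubmodule, codim, codim, finrank_map_mkQ_comap,
    ← span_singleton_mul_eq_map]
  exact codim_sup (span_singleton_mul_homogeneousSubmodule_le f n)

lemma codim_nextDegree_le_add (f : 𝒮 1) (hW : W ≤ 𝒮 (n + 1)) :
    codim (n + 2) (nextDegree W) ≤
      codim (n + 1) W + codim (n + 2) (nextDegree (hyperplaneSection n W f)) := by
  rw [nextDegree_hyperplaneSection, codim_eq_codim_colon_add f]
  exact Nat.add_le_add_right (codim_anti (le_colon_nextDegree hW)) _

lemma colon_nextDegree_eq (hW : W ≤ 𝒮 (n + 1))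
    (h : codim (n + 1) W + codim (n + 2) (nextDegree (hyperplaneSection n W f)) ≤
      codim (n + 2) (nextDegree W)) : colon (n + 1) (nextDegree W) f = W := by
  have hsplit : codim (n + 2) (nextDegree W) = _ := codim_eq_codim_colon_add f
  rw [hsplit, nextDegree_hyperplaneSection] at h
  exact (eq_of_codim_le (le_colon_nextDegree hW) colon_le (Nat.le_of_add_le_add_right h)).symm

lemma isLineOpen_codim_hyperplaneSection (n : ℕ) (W : Submodule K (MvPolynomial σ K)) (q : ℕ) :
    IsLineOpen K {f : 𝒮 1 | codim (n + 1) (hyperplaneSection n W f) ≤ q} := by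
  let mulForm : 𝒮 1 →ₗ[K] 𝒮 n →ₗ[K] MvPolynomial σ K ⧸ W :=
    (LinearMap.mul K _).compr₂ W.mkQ |>.domRestrict₁₂ (𝒮 1) (𝒮 n)
  have range_mulForm (f : 𝒮 1) :
      LinearMap.range (mulForm f) = ((K ∙ (f : MvPolynomial σ K)) * 𝒮 n).map W.mkQ := by
    rw [span_singleton_mul_eq_map, ← Submodule.map_comp, ← LinearMap.range_domRestrict]
    rfl
  convert isLineOpen_le_finrank_range mulForm (codim (n + 1) W - q) using 3 with f
  rw [range_mulForm, codim_sup (W := W) (span_singleton_mul_homogeneousSubmodule_le f n),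
    hyperplaneSection]
  omega

lemma exists_codim_hyperplaneSection_lt (hW : W ≤ 𝒮 (n + 1)) (h : codim (n + 1) W ≠ 0) :
    ∃ f, codim (n + 1) (hyperplaneSection n W f) < codim (n + 1) W := by
  by_contra! hc
  have heq (f : 𝒮 1) : W = hyperplaneSection n W f :=
    eq_of_codim_le le_hyperplaneSection (hyperplaneSection_le hW) (hc f)
  have hle : 𝒮 (n + 1) ≤ W := by
    rw [add_comm, ← homogeneousSubmodule_mul_homogeneousSubmodule, Submodule.mul_le]
    intro a ha b hb
    rw [heq ⟨a, ha⟩]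
    exact Submodule.mem_sup_right (Submodule.mul_mem_mul (Submodule.mem_span_singleton_self a) hb)
  exact h (by rw [le_antisymm hW hle, codim_homogeneousSubmodule])

/-- Green's restriction theorem: a general linear form `f` satisfies this bound. -/
theorem exists_codim_hyperplaneSection_le [Infinite K] (hW : W ≤ 𝒮 (n + 1)) :
    ∃ f, codim (n + 1) (hyperplaneSection n W f) ≤ macaulayDown (n + 1) (codim (n + 1) W) := by
  induction n generalizing W with
  | zero =>
    rw [macaulayDown_one_left]
    rcases eq_or_ne (codim 1 W) 0 with h0 | h0
    · exact ⟨0, by simp [hyperplaneSection_zero, h0]⟩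
    · obtain ⟨f, hf⟩ := exists_codim_hyperplaneSection_lt hW h0
      exact ⟨f, Nat.le_sub_one_of_lt hf⟩
  | succ n ihn =>
    induction ha : codim (n + 2) W using Nat.strong_induction_on generalizing W with
    | _ a iha =>
    rcases eq_or_ne a 0 with rfl | h0
    · exact ⟨0, by simp [hyperplaneSection_zero, ha]⟩
    obtain ⟨g, hmin⟩ : ∃ g, ∀ f, codim (n + 2) (hyperplaneSection (n + 1) W g) ≤
        codim (n + 2) (hyperplaneSection (n + 1) W f) :=
      ⟨_, fun f => Function.argmin_le (fun f => codim (n + 2) (hyperplaneSection (n + 1) W f)) f⟩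
    refine ⟨g, ?_⟩
    generalize hb : codim (n + 2) (hyperplaneSection (n + 1) W g) = b at hmin ⊢
    have hba : b < a := by
      obtain ⟨f, hf⟩ := exists_codim_hyperplaneSection_lt hW (ha ▸ h0)
      exact (hmin f).trans_lt (ha ▸ hf)
    have hcolon : codim (n + 1) (colon (n + 1) W g) = a - b := by
      rw [← hb, ← ha]
      exact Nat.eq_sub_of_add_eq (codim_eq_codim_colon_add g).symm
    obtain ⟨f, hf, hf'⟩ := (isLineOpen_codim_hyperplaneSection n (colon (n + 1) W g)
      (macaulayDown (n + 1) (a - b))).inter_nonempty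
      (isLineOpen_codim_hyperplaneSection (n + 1) (hyperplaneSection (n + 1) W g)
        (macaulayDown (n + 2) b)) (hcolon ▸ ihn colon_le)
        (iha b hba (hyperplaneSection_le hW) hb)
    rw [Set.mem_ofPred_eq] at hf
    rw [Set.mem_ofPred_eq, hyperplaneSection_right_comm] at hf'
    refine le_macaulayDown_of_le_add ?_
    calc b ≤ codim (n + 2) (hyperplaneSection (n + 1) W f) := hmin f
      _ = codim (n + 1) (colon (n + 1) (hyperplaneSection (n + 1) W f) g) +
          codim (n + 2) (hyperplaneSection (n + 1) (hyperplaneSection (n + 1) W f) g) :=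
        codim_eq_codim_colon_add g
      _ ≤ macaulayDown (n + 1) (a - b) + macaulayDown (n + 2) b :=
        add_le_add ((codim_anti (hyperplaneSection_colon_le f g)).trans hf) hf'
      _ = _ := add_comm _ _

theorem codim_nextDegree_le [Infinite K] (hW : W ≤ 𝒮 (n + 1)) :
    codim (n + 2) (nextDegree W) ≤ macaulayUp (n + 1) (codim (n + 1) W) := by
  induction hc : codim (n + 1) W using Nat.strong_induction_on generalizing W with
  | _ c ih =>
  rcases eq_or_ne c 0 with rfl | h0
  · rw [eq_homogeneousSubmodule_of_codim_eq_zero hW hc, nextDegree_homogeneousSubmodule]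
    simp
  obtain ⟨f, hf⟩ := exists_codim_hyperplaneSection_le hW
  rw [hc] at hf
  calc codim (n + 2) (nextDegree W)
      ≤ c + codim (n + 2) (nextDegree (hyperplaneSection n W f)) :=
        hc ▸ codim_nextDegree_le_add f hW
    _ ≤ c + macaulayUp (n + 1) (codim (n + 1) (hyperplaneSection n W f)) :=
        Nat.add_le_add_left
          (ih _ (hf.trans_lt (macaulayDown_lt_self n h0)) (hyperplaneSection_le hW) rfl) c
    _ ≤ c + macaulayUp (n + 1) (macaulayDown (n + 1) c) :=
        Nat.add_le_add_left ((macaulayUp_strictMono n).monotone hf) c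
    _ = macaulayUp (n + 1) c := (macaulayUp_eq_add n c).symm

end Finite
end Growth

section KrullDim

lemma ringKrullDim_quotient_add_one_le {R : Type*} [CommRing R] {I J : Ideal R} (hIJ : I ≤ J)
    (hJ : ∀ P ∈ I.minimalPrimes, ¬ J ≤ P) : ringKrullDim (R ⧸ J) + 1 ≤ ringKrullDim (R ⧸ I) := by
  rcases eq_or_ne J ⊤ with rfl | hJtop
  · have := Ideal.Quotient.subsingleton_iff.2 (rfl : (⊤ : Ideal R) = ⊤)
    simp [ringKrullDim_eq_bot_of_subsingleton]
  have : Nonempty (PrimeSpectrum.zeroLocus (R := R) J) := by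
    rwa [Set.nonempty_coe_sort, Set.nonempty_iff_ne_empty, ne_eq,
      PrimeSpectrum.zeroLocus_empty_iff_eq_top]
  have hsub : PrimeSpectrum.zeroLocus (J : Set R) ⊆ PrimeSpectrum.zeroLocus (I : Set R) :=
    PrimeSpectrum.zeroLocus_anti_mono_ideal hIJ
  have hmono : StrictMono (Set.inclusion hsub) := fun _ _ h => h
  have : Nonempty (PrimeSpectrum.zeroLocus (R := R) I) := .map (Set.inclusion hsub) this
  rw [ringKrullDim_quotient, ringKrullDim_quotient, Order.krullDim_eq_iSup_length,
    Order.krullDim_eq_iSup_length, ← WithBot.coe_one, ← WithBot.coe_add, ENat.iSup_add,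
    WithBot.coe_le_coe, iSup_le_iff]
  intro chain
  obtain ⟨P, hP, hP_le⟩ := Ideal.exists_minimalPrimes_le (hIJ.trans chain.head.2)
  let p : PrimeSpectrum.zeroLocus (R := R) I := ⟨⟨P, hP.1.1⟩, hP.1.2⟩
  have hp : p < (chain.map (Set.inclusion hsub) hmono).head :=
    lt_of_le_of_ne hP_le fun h => hJ P hP <| by
      have : P = chain.head.1.asIdeal := congrArg (fun x => x.1.asIdeal) h
      exact this ▸ chain.head.2
  refine le_trans ?_ (le_iSup _ ((chain.map (Set.inclusion hsub) hmono).cons p hp))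
  rw [RelSeries.cons_length]
  rfl

lemma ringKrullDim_le_of_isIntegral (R S : Type*) [CommRing R] [CommRing S] [Algebra R S]
    [Algebra.IsIntegral R S] : ringKrullDim S ≤ ringKrullDim R :=
  Order.krullDim_le_of_strictMono (PrimeSpectrum.comap (algebraMap R S)) fun _ _ h =>
    Ideal.IsIntegral.comap_lt_comap h

end KrullDim

section IrrelevantIdeal

variable {K σ : Type*} [Field K] {I P : Ideal (MvPolynomial σ K)}

local notation "𝒮" => homogeneousSubmodule σ K

attribute [local instance] MvPolynomial.gradedAlgebra

lemma mem_idealOfVars {p : MvPolynomial σ K} : p ∈ idealOfVars σ K ↔ constantCoeff p = 0 := by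
  rw [← pow_one (idealOfVars σ K), mem_pow_idealOfVars_iff', constantCoeff_eq]
  exact ⟨fun h => h 0 (by simp), fun h x hx => by
    rwa [(Finsupp.degree_eq_zero_iff x).1 (Nat.lt_one_iff.1 hx)]⟩

lemma mem_idealOfVars_pow {t : ℕ} {p : MvPolynomial σ K} (hp : p ∈ 𝒮 t) :
    p ∈ idealOfVars σ K ^ t :=
  (mem_pow_idealOfVars_iff' t p).2 fun _ hx => IsHomogeneous.coeff_eq_zero hp hx.ne

instance isMaximal_idealOfVars : (idealOfVars σ K).IsMaximal := by
  have : idealOfVars σ K = RingHom.ker (constantCoeff (R := K) (σ := σ)) :=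
    Ideal.ext fun _ => mem_idealOfVars
  rw [this]
  exact RingHom.ker_isMaximal_of_surjective _ fun a => ⟨C a, constantCoeff_C σ a⟩

lemma homogeneousComponent_mem_of_isHomogeneous (hI : I.IsHomogeneous 𝒮) {p : MvPolynomial σ K}
    (hp : p ∈ I) (t : ℕ) :
    homogeneousComponent t p ∈ I := by
  rw [← decomposition.decompose'_apply]
  exact hI t hp

lemma le_idealOfVars_of_isHomogeneous (hI : I.IsHomogeneous 𝒮) (hI' : I ≠ ⊤) :
    I ≤ idealOfVars σ K := by
  refine fun p hp => mem_idealOfVars.2 (by_contra fun h => hI' ?_)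
  have hC : C (constantCoeff p) ∈ I := by
    rw [constantCoeff_eq, ← homogeneousComponent_zero]
    exact homogeneousComponent_mem_of_isHomogeneous hI hp 0
  exact Ideal.eq_top_of_isUnit_mem I hC ((isUnit_iff_ne_zero.2 h).map C)

lemma isHomogeneous_of_mem_minimalPrimes (hI : I.IsHomogeneous 𝒮) (hP : P ∈ I.minimalPrimes) :
    P.IsHomogeneous 𝒮 := by
  have hcore := P.toIdeal_homogeneousCore_le 𝒮
  have hle : I ≤ (P.homogeneousCore 𝒮).toIdeal :=
    hI.toIdeal_homogeneousCore_eq_self ▸ Ideal.homogeneousCore_mono 𝒮 hP.1.2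
  rw [(hP.2 ⟨hP.1.1.homogeneousCore, hle⟩ hcore).antisymm hcore]
  exact (P.homogeneousCore 𝒮).isHomogeneous

lemma le_idealOfVars_of_mem_minimalPrimes (hI : I.IsHomogeneous 𝒮) (hP : P ∈ I.minimalPrimes) :
    P ≤ idealOfVars σ K :=
  le_idealOfVars_of_isHomogeneous (isHomogeneous_of_mem_minimalPrimes hI hP) hP.1.1.ne_top

lemma idealOfVars_le_radical (hI : I.IsHomogeneous 𝒮)
    (hdim : ringKrullDim (MvPolynomial σ K ⧸ I) ≤ 0) : idealOfVars σ K ≤ I.radical := by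
  have hmax := Ideal.krullDimLE_zero_quotient_iff_forall_minimalPrimes_isMaximal.1
    (Ring.krullDimLE_iff.2 hdim)
  rw [← Ideal.sInf_minimalPrimes]
  exact le_sInf fun P hP => ((hmax P hP).eq_of_le isMaximal_idealOfVars.ne_top
    (le_idealOfVars_of_mem_minimalPrimes hI hP)).ge

lemma exists_idealOfVars_pow_le [Finite σ] (hI : I.IsHomogeneous 𝒮)
    (hdim : ringKrullDim (MvPolynomial σ K ⧸ I) ≤ 0) : ∃ k, idealOfVars σ K ^ k ≤ I :=
  Ideal.exists_pow_le_of_le_radical_of_fg (idealOfVars_le_radical hI hdim) (idealOfVars_fg σ K)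

lemma ringKrullDim_quotient_nonpos (hI : I.IsHomogeneous 𝒮) (hP : P ∈ I.minimalPrimes)
    (hle : idealOfVars σ K ≤ P) : ringKrullDim (MvPolynomial σ K ⧸ I) ≤ 0 := by
  refine Ring.krullDimLE_iff.1
    (Ideal.krullDimLE_zero_quotient_iff_forall_minimalPrimes_isMaximal.2 fun Q hQ => ?_)
  have hQle := le_idealOfVars_of_mem_minimalPrimes hI hQ
  rw [hQle.antisymm (hle.trans (hP.2 hQ.1 (hQle.trans hle)))]
  exact isMaximal_idealOfVars

end IrrelevantIdeal

section SystemOfParameters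

variable {K σ ι : Type*} [Field K] {I : Ideal (MvPolynomial σ K)} {δ : ℕ}
  {f : ι → MvPolynomial σ K}

local notation "𝒮" => homogeneousSubmodule σ K

attribute [local instance] MvPolynomial.gradedAlgebra

lemma homogeneousComponent_mul_of_mem {a b : MvPolynomial σ K} (hb : b ∈ 𝒮 δ) (t : ℕ) :
    homogeneousComponent (t + δ) (a * b) = homogeneousComponent t a * b := by
  simpa [← decomposition.decompose'_apply] using
    DirectSum.coe_decompose_mul_add_of_right_mem 𝒮 (a := a) (i := t) hb

lemma exists_sub_sum_mul_mem [Fintype ι] (hI : I.IsHomogeneous 𝒮) (hf : ∀ i, f i ∈ 𝒮 δ) {t : ℕ}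
    {p : MvPolynomial σ K} (hp : p ∈ 𝒮 (t + δ)) (hpI : p ∈ I ⊔ Ideal.span (Set.range f)) :
    ∃ c : ι → MvPolynomial σ K, (∀ i, c i ∈ 𝒮 t) ∧ p - ∑ i, c i * f i ∈ I := by
  obtain ⟨a, ha, b, hb, rfl⟩ := Submodule.mem_sup.1 hpI
  obtain ⟨c, rfl⟩ := Ideal.mem_span_range_iff_exists_fun.1 hb
  refine ⟨fun i => homogeneousComponent t (c i),
    fun i => homogeneousComponent_isHomogeneous t _, ?_⟩
  have hcomp : homogeneousComponent (t + δ) a + ∑ i, homogeneousComponent t (c i) * f i =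
      a + ∑ i, c i * f i := by
    simpa [homogeneousComponent_mul_of_mem (hf _)] using homogeneousComponent_of_mem hp (m := t + δ)
  rw [← hcomp, add_sub_cancel_right]
  exact homogeneousComponent_mem_of_isHomogeneous hI ha _

section Quotient

variable {B : Type*} [CommRing B] [Algebra K B] {π : MvPolynomial σ K →ₐ[K] B}

/-- Forms of large degree are rewritten modulo `ker π` as combinations of the `f i` with
coefficients of lower degree, so `B` is generated over `K[f]` by forms of bounded degree. -/
lemma finite_comp_aeval [Finite σ] [Finite ι] (hπ : Function.Surjective π)
    (hI : (RingHom.ker π).IsHomogeneous 𝒮) (hδ : 0 < δ) (hf : ∀ i, f i ∈ 𝒮 δ) {k : ℕ}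
    (hk : idealOfVars σ K ^ k ≤ RingHom.ker π ⊔ Ideal.span (Set.range f)) :
    (π.comp (aeval f)).Finite := by
  have := Fintype.ofFinite ι
  let _ : Algebra (MvPolynomial ι K) B := (π.comp (aeval f)).toAlgebra
  have : IsScalarTower K (MvPolynomial ι K) B :=
    .of_algebraMap_eq fun a => ((π.comp (aeval f)).commutes a).symm
  let lowDegree : Submodule K B := ⨆ t : Fin (k + δ), (𝒮 t).map π.toLinearMap
  let M := Submodule.span (MvPolynomial ι K) (lowDegree : Set B)
  have mem_M (t : ℕ) : ∀ p ∈ 𝒮 t, π p ∈ M := by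
    induction t using Nat.strong_induction_on with
    | _ t ih =>
    intro p hp
    rcases lt_or_ge t (k + δ) with ht | ht
    · exact Submodule.subset_span (Submodule.mem_iSup_of_mem ⟨t, ht⟩ ⟨p, hp, rfl⟩)
    obtain ⟨s, rfl⟩ := Nat.exists_eq_add_of_le' (le_of_add_le_right ht)
    have hpk := Ideal.pow_le_pow_right (le_of_add_le_left ht) (mem_idealOfVars_pow hp)
    obtain ⟨c, hc, hcI⟩ := exists_sub_sum_mul_mem hI hf hp (hk hpk)
    have hp_eq : π p = ∑ i, (X i : MvPolynomial ι K) • π (c i) := by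
      rw [RingHom.mem_ker, map_sub, sub_eq_zero, map_sum] at hcI
      rw [hcI]
      refine Finset.sum_congr rfl fun i _ => ?_
      rw [Algebra.smul_def, mul_comm, map_mul]
      exact congrArg (π · * _) (aeval_X f i).symm
    exact hp_eq ▸ sum_mem fun i _ => M.smul_mem _ (ih s (by omega) _ (hc i))
  have M_eq_top : M = ⊤ := by
    refine Submodule.eq_top_iff'.2 fun x => ?_
    obtain ⟨p, rfl⟩ := hπ x
    rw [← sum_homogeneousComponent p, map_sum]
    exact sum_mem fun t _ => mem_M t _ (homogeneousComponent_mem t p)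
  obtain ⟨s, hs⟩ : lowDegree.FG :=
    Submodule.fg_iSup _ fun t => (homogeneousSubmodule_fg σ K t).map _
  refine Module.finite_def.2 ⟨s, ?_⟩
  rw [← M_eq_top, ← Submodule.span_span_of_tower K, hs]

lemma ringKrullDim_le_card [Finite σ] [Fintype ι] (hπ : Function.Surjective π)
    (hI : (RingHom.ker π).IsHomogeneous 𝒮) (hδ : 0 < δ) (hf : ∀ i, f i ∈ 𝒮 δ) {k : ℕ}
    (hk : idealOfVars σ K ^ k ≤ RingHom.ker π ⊔ Ideal.span (Set.range f)) :
    ringKrullDim B ≤ Fintype.card ι := by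
  let _ : Algebra (MvPolynomial ι K) B := (π.comp (aeval f)).toAlgebra
  have : Module.Finite (MvPolynomial ι K) B := finite_comp_aeval hπ hI hδ hf hk
  calc ringKrullDim B ≤ ringKrullDim (MvPolynomial ι K) := ringKrullDim_le_of_isIntegral _ _
    _ = Fintype.card ι := by
      simp [MvPolynomial.ringKrullDim_of_isNoetherianRing, ringKrullDim_eq_zero_of_field]

end Quotient

end SystemOfParameters

section ConeDim

variable {K σ : Type*} [Field K] {n d : ℕ} {W W' : Submodule K (MvPolynomial σ K)}

local notation "𝒮" => homogeneousSubmodule σ K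

attribute [local instance] MvPolynomial.gradedAlgebra

/-- The dimension of the affine cone over the base locus of the linear system `W`, which is one more
than the dimension of that base locus in projective space. -/
noncomputable def coneDim (W : Submodule K (MvPolynomial σ K)) : WithBot ℕ∞ :=
  ringKrullDim (MvPolynomial σ K ⧸ Ideal.span (W : Set (MvPolynomial σ K)))

lemma coneDim_le_of_le_span
    (h : W ≤ (Ideal.span (W' : Set (MvPolynomial σ K))).restrictScalars K) :
    coneDim W' ≤ coneDim W :=
  have hle := Ideal.span_le.2 h
  ringKrullDim_le_of_surjective (Ideal.Quotient.factor hle) (Ideal.Quotient.factor_surjective hle)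

lemma coneDim_anti (h : W ≤ W') : coneDim W' ≤ coneDim W :=
  coneDim_le_of_le_span (h.trans Ideal.subset_span)

lemma nextDegree_le_span :
    nextDegree W ≤ (Ideal.span (W : Set (MvPolynomial σ K))).restrictScalars K :=
  Submodule.mul_le.2 fun _ hw _ _ => Ideal.mul_mem_right _ _ (Ideal.subset_span hw)

lemma coneDim_le_coneDim_nextDegree : coneDim W ≤ coneDim (nextDegree W) :=
  coneDim_le_of_le_span nextDegree_le_span

lemma isHomogeneous_span (hW : W ≤ 𝒮 n) :
    (Ideal.span (W : Set (MvPolynomial σ K))).IsHomogeneous 𝒮 :=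
  Ideal.homogeneous_span _ _ fun _ hw => ⟨n, hW hw⟩

lemma coneDim_nonneg (hW : W ≤ 𝒮 (n + 1)) :
    0 ≤ coneDim W := by
  have hle : Ideal.span (W : Set (MvPolynomial σ K)) ≤ RingHom.ker constantCoeff :=
    Ideal.span_le.2 fun w hw =>
      (hW hw).coeff_eq_zero (by rw [map_zero]; exact n.succ_ne_zero.symm)
  have hne := ne_top_of_le_ne_top (RingHom.ker_ne_top _) hle
  have := Ideal.Quotient.nontrivial_iff.2 hne
  exact ringKrullDim_nonneg_of_nontrivial

lemma coneDim_pos [Finite σ] (hW : W ≤ 𝒮 n) {f : MvPolynomial σ K} (hf : f ∈ 𝒮 1)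
    (hpow : ∀ k, f ^ k ∉ Ideal.span (W : Set (MvPolynomial σ K))) : 0 < coneDim W := by
  by_contra! hdim
  obtain ⟨k, hk⟩ := exists_idealOfVars_pow_le (isHomogeneous_span hW) hdim
  exact hpow k (hk (Ideal.pow_mem_pow (pow_one (idealOfVars σ K) ▸ mem_idealOfVars_pow hf) k))

lemma mem_of_hyperplaneSection_subset {f : 𝒮 1} {P : Ideal (MvPolynomial σ K)} [P.IsPrime]
    (h : (hyperplaneSection n W f : Set (MvPolynomial σ K)) ⊆ P) : f.1 ∈ P := by
  have hpow : f.1 ^ n ∈ 𝒮 n := homogeneousSubmodule_one_pow K n ▸ Submodule.pow_mem_pow _ f.2 n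
  have : f.1 * f.1 ^ n ∈ P :=
    h (Submodule.mem_sup_right (Submodule.mul_mem_mul (Submodule.mem_span_singleton_self _) hpow))
  exact ‹P.IsPrime›.mem_of_pow_mem (n + 1) (by rwa [pow_succ'])

lemma coneDim_le_card [Finite σ] {ι : Type*} [Fintype ι] {f : ι → MvPolynomial σ K} {δ k : ℕ}
    (hW : W ≤ 𝒮 n) (hδ : 0 < δ) (hf : ∀ i, f i ∈ 𝒮 δ)
    (hk : idealOfVars σ K ^ k ≤ Ideal.span W ⊔ Ideal.span (Set.range f)) :
    coneDim W ≤ Fintype.card ι := by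
  have hker : RingHom.ker (Ideal.Quotient.mkₐ K (Ideal.span (W : Set (MvPolynomial σ K)))) =
      Ideal.span W := Ideal.Quotient.mkₐ_ker K _
  refine ringKrullDim_le_card (k := k) (Ideal.Quotient.mkₐ_surjective K _) ?_ hδ hf ?_
  · rw [hker]
    exact isHomogeneous_span hW
  · rwa [hker]

lemma coneDim_le_of_codim_le [Finite σ] (h : W ≤ W') (hW' : W' ≤ 𝒮 (n + 1))
    (hdim : coneDim W' ≤ 0) (hc : codim (n + 1) W ≤ codim (n + 1) W' + d) : coneDim W ≤ d := by
  have := Submodule.finiteDimensional_of_le hW'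
  obtain ⟨k, hk⟩ := exists_idealOfVars_pow_le (isHomogeneous_span hW') hdim
  obtain ⟨f, hfW', hW'f⟩ := exists_le_sup_span_range W' W
  have hspan : W' ≤ (Ideal.span W ⊔ Ideal.span (Set.range f)).restrictScalars K :=
    hW'f.trans (sup_le (fun w hw => Ideal.mem_sup_left (Ideal.subset_span hw))
      (Submodule.span_le.2 fun w hw => Ideal.mem_sup_right (Ideal.subset_span hw)))
  have hcodim := codim_sup (W := W) hW'
  rw [sup_eq_right.2 h] at hcodim
  calc coneDim W ≤ Fintype.card (Fin (finrank K (W'.map W.mkQ))) :=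
        coneDim_le_card (h.trans hW') n.succ_pos (fun i => hW' (hfW' i))
          (hk.trans (Ideal.span_le.2 hspan))
    _ ≤ d := by
      rw [Fintype.card_fin]
      exact_mod_cast (by omega : finrank K (W'.map W.mkQ) ≤ d)

lemma codim_le_coneDim [Finite σ] (hW : W ≤ 𝒮 1) : (codim 1 W : WithBot ℕ∞) ≤ coneDim W := by
  let V := (𝒮 1).map W.mkQ
  let b := Module.finBasis K V
  obtain ⟨L, hL⟩ := (b.constr K (X : _ → MvPolynomial (Fin (finrank K V)) K)).exists_extend
  let φ : MvPolynomial σ K →ₐ[K] MvPolynomial (Fin (finrank K V)) K :=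
    aeval fun i => L (W.mkQ (X i))
  have φ_eq : Set.EqOn φ (L ∘ₗ W.mkQ) (𝒮 1) := by
    rw [homogeneousSubmodule_one_eq_span_X]
    refine LinearMap.eqOn_span (f := φ.toLinearMap) ?_
    rintro _ ⟨i, rfl⟩
    exact aeval_X _ i
  have le_ker : Ideal.span (W : Set (MvPolynomial σ K)) ≤ RingHom.ker φ :=
    Ideal.span_le.2 fun w hw => (φ_eq (hW hw)).trans (by
      rw [LinearMap.comp_apply, W.mkQ_apply, (Submodule.Quotient.mk_eq_zero W).2 hw, map_zero])
  have φ_surjective : Function.Surjective φ := by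
    rw [← AlgHom.range_eq_top, eq_top_iff, ← adjoin_range_X, Algebra.adjoin_le_iff]
    rintro _ ⟨j, rfl⟩
    obtain ⟨p, hp, hpj⟩ := (b j).2
    refine ⟨p, (φ_eq hp).trans ?_⟩
    rw [LinearMap.comp_apply, hpj]
    exact (LinearMap.congr_fun hL (b j)).trans (b.constr_basis K _ j)
  calc (codim 1 W : WithBot ℕ∞) = ringKrullDim (MvPolynomial (Fin (finrank K V)) K) := by
        simp [MvPolynomial.ringKrullDim_of_isNoetherianRing, ringKrullDim_eq_zero_of_field,
          codim, V]
    _ ≤ coneDim W := ringKrullDim_le_of_surjective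
      (Ideal.Quotient.lift _ φ.toRingHom fun p hp => le_ker hp)
      (Ideal.Quotient.lift_surjective_of_surjective _ _ φ_surjective)

lemma idealOfVars_pow_le_span (t : ℕ) :
    idealOfVars σ K ^ t ≤ Ideal.span (𝒮 t : Set (MvPolynomial σ K)) := by
  rw [pow_idealOfVars_eq_span]
  refine Ideal.span_mono ?_
  rintro _ ⟨x, rfl, rfl⟩
  exact isHomogeneous_monomial 1 rfl

section Infinite

variable [Infinite K] [Finite σ]

/-- The minimal primes over `(W)` cut out finitely many subspaces of linear forms, and a linear form
outside all of them lowers the dimension. -/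
lemma exists_coneDim_hyperplaneSection_le (hW : W ≤ 𝒮 (n + 1)) (hdim : coneDim W ≤ d + 1) :
    ∃ f, codim (n + 1) (hyperplaneSection n W f) ≤ macaulayDown (n + 1) (codim (n + 1) W) ∧
      coneDim (hyperplaneSection n W f) ≤ d := by
  let I := Ideal.span (W : Set (MvPolynomial σ K))
  by_cases hvars : ∃ P ∈ I.minimalPrimes, idealOfVars σ K ≤ P
  · obtain ⟨P, hP, hle⟩ := hvars
    obtain ⟨f, hf⟩ := exists_codim_hyperplaneSection_le hW
    refine ⟨f, hf, (coneDim_anti le_hyperplaneSection).trans ?_⟩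
    exact (ringKrullDim_quotient_nonpos (isHomogeneous_span hW) hP hle).trans (by simp)
  push Not at hvars
  let linearForms (P : I.minimalPrimes) : Submodule K (𝒮 1) :=
    (P.1.restrictScalars K).comap (𝒮 1).subtype
  have hproper (P : I.minimalPrimes) : linearForms P ≠ ⊤ := fun htop =>
    hvars P P.2 (Ideal.span_le.2 (Set.range_subset_iff.2 fun i =>
      Submodule.eq_top_iff'.1 htop ⟨X i, isHomogeneous_X K i⟩))
  have : Finite I.minimalPrimes := I.finite_minimalPrimes_of_isNoetherianRing
  obtain ⟨f, hf, hfP⟩ := (isLineOpen_codim_hyperplaneSection n W _).inter_nonempty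
    (isLineOpen_setOf_forall_notMem linearForms) (exists_codim_hyperplaneSection_le hW)
    (Submodule.exists_forall_notMem_of_forall_ne_top linearForms hproper)
  refine ⟨f, hf, ENat.WithBot.add_le_add_one_right_iff.1 (le_trans ?_ hdim)⟩
  refine ringKrullDim_quotient_add_one_le (Ideal.span_mono le_hyperplaneSection) fun P hP hle => ?_
  have := hP.1.1
  exact hfP ⟨P, hP⟩ (mem_of_hyperplaneSection_subset (Ideal.span_le.1 hle))

lemma exists_linear_forms {m : ℕ} (hW : W ≤ 𝒮 (n + 1))
    (hc : codim (n + 1) W < (n + 1 + m).choose (n + 1)) :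
    ∃ f : Fin m → MvPolynomial σ K, (∀ i, f i ∈ 𝒮 1) ∧
      idealOfVars σ K ^ (n + 1) ≤ Ideal.span W ⊔ Ideal.span (Set.range f) := by
  induction m generalizing W with
  | zero =>
    have h0 : codim (n + 1) W = 0 := by simpa using hc
    rw [eq_homogeneousSubmodule_of_codim_eq_zero hW h0]
    exact ⟨Fin.elim0, fun i => i.elim0, (idealOfVars_pow_le_span _).trans le_sup_left⟩
  | succ m ih =>
    obtain ⟨g, hg⟩ := exists_codim_hyperplaneSection_le hW
    obtain ⟨f, hf, hle⟩ := ih (hyperplaneSection_le (f := g) hW)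
      (hg.trans_lt (macaulayDown_lt_choose (by omega) hc))
    refine ⟨Fin.cons g.1 f, Fin.cases g.2 hf, hle.trans ?_⟩
    rw [Fin.range_cons, Ideal.span_insert, ← sup_assoc]
    refine sup_le_sup_right (Ideal.span_le.2 (show hyperplaneSection n W g ≤
      (Ideal.span W ⊔ Ideal.span {g.1}).restrictScalars K from sup_le ?_ ?_)) _
    · exact fun w hw => Ideal.mem_sup_left (Ideal.subset_span hw)
    · exact Submodule.mul_le.2 fun a ha b _ => Ideal.mem_sup_right
        (Ideal.mul_mem_right _ _ (Submodule.span_le_restrictScalars K _ _ ha))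

lemma coneDim_le_of_codim_lt_choose {m : ℕ} (hW : W ≤ 𝒮 (n + 1))
    (hc : codim (n + 1) W < (n + 1 + m).choose (n + 1)) : coneDim W ≤ m := by
  obtain ⟨f, hf, hk⟩ := exists_linear_forms hW hc
  simpa using coneDim_le_card hW one_pos hf hk

end Infinite

end ConeDim

section Division

variable {K σ N : Type*} [Field K] [AddCommGroup N] [Module K N] {n : ℕ}

local notation "𝒮" => homogeneousSubmodule σ K

open scoped IsMulCommutative in
lemma exists_algHom_eqOn_linearForms {A : Type*} [Ring A] [Algebra K A]
    (τ : MvPolynomial σ K →ₗ[K] A) (hτ : ∀ i j, Commute (τ (X i)) (τ (X j))) :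
    ∃ ρ : MvPolynomial σ K →ₐ[K] A, Set.EqOn ρ τ (𝒮 1) := by
  have : IsMulCommutative (Algebra.adjoin K (Set.range fun i => τ (X i))) :=
    Algebra.isMulCommutative_adjoin K (by
      rintro _ ⟨i, rfl⟩ _ ⟨j, rfl⟩
      exact hτ i j)
  let ρ : MvPolynomial σ K →ₐ[K] Algebra.adjoin K (Set.range fun i => τ (X i)) :=
    aeval fun i => ⟨τ (X i), Algebra.subset_adjoin ⟨i, rfl⟩⟩
  refine ⟨(Subalgebra.val _).comp ρ, ?_⟩
  rw [homogeneousSubmodule_one_eq_span_X]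
  refine LinearMap.eqOn_span (f := ((Subalgebra.val _).comp ρ).toLinearMap) ?_
  rintro _ ⟨i, rfl⟩
  exact congrArg Subtype.val (aeval_X _ i)

variable {q : MvPolynomial σ K →ₗ[K] N} {f : MvPolynomial σ K}

/-- A linear form `a` acts by `q (f * u) ↦ q (a * u)`, that is, as multiplication by `a / f`. -/
lemma exists_division_action (hq : Function.Surjective fun u : 𝒮 n => q (f * u)) (hf : f ∈ 𝒮 1)
    (hcancel : ∀ a ∈ 𝒮 1, ∀ b ∈ 𝒮 1, ∀ u ∈ 𝒮 n, ∀ v ∈ 𝒮 n, ∀ w ∈ 𝒮 n,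
      q (b * u) = q (f * v) → q (a * u) = q (f * w) → q (a * v) = q (b * w)) :
    ∃ ρ : MvPolynomial σ K →ₐ[K] Module.End K N,
      ∀ a ∈ 𝒮 1, ∀ u ∈ 𝒮 n, ρ a (q (f * u)) = q (a * u) := by
  let μ : 𝒮 n →ₗ[K] N := (q ∘ₗ LinearMap.mulLeft K f) ∘ₗ (𝒮 n).subtype
  obtain ⟨s, hs⟩ := μ.exists_rightInverse_of_surjective (LinearMap.range_eq_top.2 hq)
  have q_mul_s (x : N) : q (f * s x) = x := LinearMap.congr_fun hs x
  let τ : MvPolynomial σ K →ₗ[K] Module.End K N :=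
    ((LinearMap.mul K (MvPolynomial σ K)).compl₂ ((𝒮 n).subtype ∘ₗ s)).compr₂ q
  have τ_apply {a u : MvPolynomial σ K} (ha : a ∈ 𝒮 1) (hu : u ∈ 𝒮 n) :
      τ a (q (f * u)) = q (a * u) :=
    hcancel a ha f hf u hu _ (s _).2 _ (s _).2 (q_mul_s _).symm (q_mul_s _).symm |>.trans
      (q_mul_s _)
  have τ_comm (i j : σ) : Commute (τ (X i)) (τ (X j)) := LinearMap.ext fun x =>
    hcancel _ (isHomogeneous_X K i) _ (isHomogeneous_X K j) _ (s x).2 _ (s _).2 _ (s _).2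
      (q_mul_s _).symm (q_mul_s _).symm
  obtain ⟨ρ, hρ⟩ := exists_algHom_eqOn_linearForms τ τ_comm
  exact ⟨ρ, fun a ha u hu => by rw [hρ ha, τ_apply ha hu]⟩

lemma division_action_pow_mul {ρ : MvPolynomial σ K →ₐ[K] Module.End K N} (hf : f ∈ 𝒮 1)
    (hρ : ∀ a ∈ 𝒮 1, ∀ u ∈ 𝒮 n, ρ a (q (f * u)) = q (a * u)) {i j : ℕ} (hij : i + j = n + 1)
    {g u : MvPolynomial σ K} (hg : g ∈ 𝒮 j) (hu : u ∈ 𝒮 i) :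
    ρ g (q (f ^ j * u)) = q (g * u) := by
  induction j generalizing i g u with
  | zero =>
    obtain ⟨c, rfl⟩ := Submodule.mem_one.1 (homogeneousSubmodule_zero (σ := σ) (R := K) ▸ hg)
    rw [AlgHom.commutes, Module.algebraMap_end_apply, ← Algebra.smul_def, map_smul, pow_zero,
      one_mul]
  | succ j ih =>
    rw [← homogeneousSubmodule_mul_homogeneousSubmodule] at hg
    induction hg using Submodule.mul_induction_on' with
    | mem_mul_mem b hb a ha =>
      have hfu : f ^ j * u ∈ 𝒮 n := by
        rw [show n = j + i by omega]
        exact ((mem_homogeneousSubmodule _ _).1 hf |>.pow j |>.mul hu) |> fun h => by simpa using h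
      have hau : a * u ∈ 𝒮 (i + 1) := by
        rw [add_comm]
        exact IsHomogeneous.mul ha hu
      calc ρ (b * a) (q (f ^ (j + 1) * u)) = ρ b (ρ a (q (f * (f ^ j * u)))) := by
            rw [map_mul, Module.End.mul_apply, pow_succ', mul_assoc]
        _ = ρ b (q (f ^ j * (a * u))) := by rw [hρ a ha _ hfu, mul_left_comm]
        _ = q (b * a * u) := by rw [ih (by omega) hb hau, mul_assoc]
    | add x _ y _ hx hy => rw [map_add, LinearMap.add_apply, hx, hy, add_mul, map_add]

lemma le_ker_of_pow_mem_span {ρ : MvPolynomial σ K →ₐ[K] Module.End K N} (hf : f ∈ 𝒮 1)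
    (hρ : ∀ a ∈ 𝒮 1, ∀ u ∈ 𝒮 n, ρ a (q (f * u)) = q (a * u))
    {W : Submodule K (MvPolynomial σ K)} (hW : W ≤ 𝒮 (n + 1)) (hWq : W ≤ LinearMap.ker q)
    {k : ℕ} (hk : f ^ k ∈ Ideal.span (W : Set (MvPolynomial σ K))) :
    𝒮 (n + 1) ≤ LinearMap.ker q := by
  have action_pow {g : MvPolynomial σ K} (hg : g ∈ 𝒮 (n + 1)) : ρ g (q (f ^ (n + 1))) = q g := by
    simpa using division_action_pow_mul hf hρ (zero_add _) hg (isHomogeneous_one σ K)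
  have hfn : f ^ n ∈ 𝒮 n := homogeneousSubmodule_one_pow K n ▸ Submodule.pow_mem_pow _ hf n
  have fixed : ρ (f ^ k) (q (f ^ (n + 1))) = q (f ^ (n + 1)) := by
    rw [map_pow, Module.End.coe_pow]
    refine Function.iterate_fixed ?_ k
    rw [pow_succ', hρ f hf _ hfn]
  have killed : Ideal.span (W : Set (MvPolynomial σ K)) ≤
      Ideal.comap ρ
        (LinearMap.ker (LinearMap.toSpanSingleton (Module.End K N) N (q (f ^ (n + 1))))) :=
    Ideal.span_le.2 fun w hw => (action_pow (hW hw)).trans (hWq hw)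
  intro g hg
  calc q g = ρ g (ρ (f ^ k) (q (f ^ (n + 1)))) := by rw [fixed, action_pow hg]
    _ = 0 := by rw [show ρ (f ^ k) (q (f ^ (n + 1))) = 0 from killed hk, map_zero]

end Division

section Persistence

variable {K σ : Type*} [Field K] {n : ℕ} {W : Submodule K (MvPolynomial σ K)}

local notation "𝒮" => homogeneousSubmodule σ K

/-- Under the division action on `S_{n+1} / W` the form `f` acts as the identity and `(W)` kills the
class of `f ^ (n + 1)`, so no power of `f` lies in `(W)`. -/
lemma coneDim_pos_of_colon_nextDegree_le [Finite σ] {f : 𝒮 1} (hW : W ≤ 𝒮 (n + 1))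
    (hne : W ≠ 𝒮 (n + 1)) (hf : hyperplaneSection n W f = 𝒮 (n + 1))
    (hc : colon (n + 1) (nextDegree W) f ≤ W) : 0 < coneDim W := by
  let q := (W.mkQ ∘ₗ homogeneousComponent (n + 1)).rangeRestrict
  have mem_ker_iff {g : MvPolynomial σ K} (hg : g ∈ 𝒮 (n + 1)) : g ∈ LinearMap.ker q ↔ g ∈ W := by
    rw [LinearMap.ker_rangeRestrict, LinearMap.mem_ker, LinearMap.comp_apply,
      homogeneousComponent_of_mem hg, if_pos rfl, W.mkQ_apply, Submodule.Quotient.mk_eq_zero]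
  have hmul {a u : MvPolynomial σ K} (ha : a ∈ 𝒮 1) (hu : u ∈ 𝒮 n) : a * u ∈ 𝒮 (n + 1) := by
    rw [add_comm]
    exact IsHomogeneous.mul ha hu
  have hq : Function.Surjective fun u : 𝒮 n => q (f * u) := by
    rintro ⟨_, g, rfl⟩
    obtain ⟨w, hw, _, hfu, hwu⟩ := Submodule.mem_sup.1 (hf.ge (homogeneousComponent_mem (n + 1) g))
    obtain ⟨u, hu, rfl⟩ := Submodule.mem_span_singleton_mul.1 hfu
    refine ⟨⟨u, hu⟩, Subtype.ext ?_⟩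
    change W.mkQ (homogeneousComponent (n + 1) (f * u)) = W.mkQ (homogeneousComponent (n + 1) g)
    rw [homogeneousComponent_of_mem (hmul f.2 hu), if_pos rfl, ← hwu, map_add, W.mkQ_apply w,
      (Submodule.Quotient.mk_eq_zero W).2 hw, zero_add]
  have eq_iff {y z : MvPolynomial σ K} (hy : y ∈ 𝒮 (n + 1)) (hz : z ∈ 𝒮 (n + 1)) :
      q y = q z ↔ y - z ∈ W := by
    rw [← mem_ker_iff (sub_mem hy hz), LinearMap.sub_mem_ker_iff]
  obtain ⟨ρ, hρ⟩ := exists_division_action hq f.2 fun a ha b hb u hu v hv w hw hbu hau => by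
    rw [eq_iff (hmul hb hu) (hmul f.2 hv)] at hbu
    rw [eq_iff (hmul ha hu) (hmul f.2 hw)] at hau
    rw [eq_iff (hmul ha hv) (hmul hb hw)]
    refine hc (mem_colon.2 ⟨?_, sub_mem (hmul ha hv) (hmul hb hw)⟩)
    rw [show f * (a * v - b * w) = (a * u - f * w) * b - (b * u - f * v) * a by ring]
    exact sub_mem (Submodule.mul_mem_mul hau hb) (Submodule.mul_mem_mul hbu ha)
  refine coneDim_pos hW f.2 fun k hk => hne (hW.antisymm fun g hg => ?_)
  exact (mem_ker_iff hg).1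
    (le_ker_of_pow_mem_span f.2 hρ hW (fun w hw => (mem_ker_iff (hW hw)).2 hw) hk hg)

end Persistence

section Growth

variable {K σ : Type*} [Field K] [Infinite K] [Finite σ] {n d m : ℕ}
  {V W : Submodule K (MvPolynomial σ K)} {f : homogeneousSubmodule σ K 1}

local notation "𝒮" => homogeneousSubmodule σ K

lemma coneDim_pos_of_codim_le (hW : W ≤ 𝒮 (n + 1)) (h0 : codim (n + 1) W ≠ 0)
    (hsmall : codim (n + 1) W ≤ n + 1)
    (hgrowth : codim (n + 1) W ≤ codim (n + 2) (nextDegree W)) : 0 < coneDim W := by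
  obtain ⟨f, hf⟩ := exists_codim_hyperplaneSection_le hW
  rw [macaulayDown_eq_zero hsmall, Nat.le_zero] at hf
  have hsec := eq_homogeneousSubmodule_of_codim_eq_zero (hyperplaneSection_le hW) hf
  refine coneDim_pos_of_colon_nextDegree_le hW ?_ hsec (colon_nextDegree_eq hW ?_).le
  · rintro rfl
    exact h0 codim_homogeneousSubmodule
  · rwa [hsec, nextDegree_homogeneousSubmodule, codim_homogeneousSubmodule, add_zero]

lemma exists_hyperplaneSection_of_maximalGrowth (hW : W ≤ 𝒮 (n + 1))
    (hgrowth : macaulayUp (n + 1) (codim (n + 1) W) ≤ codim (n + 2) (nextDegree W))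
    (hdim : coneDim W ≤ d + 1) :
    ∃ f, codim (n + 1) (hyperplaneSection n W f) = macaulayDown (n + 1) (codim (n + 1) W) ∧
      macaulayUp (n + 1) (codim (n + 1) (hyperplaneSection n W f)) ≤
        codim (n + 2) (nextDegree (hyperplaneSection n W f)) ∧
      coneDim (hyperplaneSection n W f) ≤ d := by
  obtain ⟨f, hle, hf⟩ := exists_coneDim_hyperplaneSection_le hW hdim
  have hsplit := codim_nextDegree_le_add f hW
  have hup := macaulayUp_eq_add n (codim (n + 1) W)
  have hmacaulay := codim_nextDegree_le (hyperplaneSection_le (f := f) hW)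
  have hge := (macaulayUp_strictMono n).le_iff_le.1 (by omega :
    macaulayUp (n + 1) (macaulayDown (n + 1) (codim (n + 1) W)) ≤
      macaulayUp (n + 1) (codim (n + 1) (hyperplaneSection n W f)))
  have heq := hle.antisymm hge
  exact ⟨f, heq, by rw [heq]; omega, hf⟩

lemma coneDim_pos_of_maximalGrowth (hW : W ≤ 𝒮 (n + 1)) (h0 : codim (n + 1) W ≠ 0)
    (hgrowth : macaulayUp (n + 1) (codim (n + 1) W) ≤ codim (n + 2) (nextDegree W)) :
    0 < coneDim W := by
  induction hc : codim (n + 1) W using Nat.strong_induction_on generalizing W with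
  | _ c ih =>
  subst hc
  rcases le_or_gt (codim (n + 1) W) (n + 1) with hsmall | hlarge
  · rw [macaulayUp_eq_self hsmall] at hgrowth
    exact coneDim_pos_of_codim_le hW h0 hsmall hgrowth
  · by_contra! hdim
    obtain ⟨f, heq, hgrowth', hf⟩ := exists_hyperplaneSection_of_maximalGrowth (d := 0) hW hgrowth
      (hdim.trans (by simp))
    refine (ih _ ?_ (hyperplaneSection_le hW) ?_ hgrowth' rfl).not_ge (by simpa using hf)
    · rw [heq]
      exact macaulayDown_lt_self n h0
    · rw [heq]
      exact (macaulayDown_pos hlarge).ne'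

lemma lt_coneDim_of_maximalGrowth (hW : W ≤ 𝒮 (n + 1))
    (hm : (n + 1 + m).choose (n + 1) ≤ codim (n + 1) W)
    (hgrowth : macaulayUp (n + 1) (codim (n + 1) W) ≤ codim (n + 2) (nextDegree W)) :
    m < coneDim W := by
  induction m generalizing W with
  | zero =>
    refine coneDim_pos_of_maximalGrowth hW ?_ hgrowth
    rw [add_zero, Nat.choose_self] at hm
    omega
  | succ m ih =>
    by_contra! hdim
    obtain ⟨f, heq, hgrowth', hf⟩ := exists_hyperplaneSection_of_maximalGrowth hW hgrowth
      (by exact_mod_cast hdim)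
    refine (ih (hyperplaneSection_le hW) ?_ hgrowth').not_ge hf
    rw [heq, ← macaulayDown_choose]
    exact macaulayDown_monotone _ hm

lemma exists_hyperplaneSection_of_almostMaximalGrowth (hW : W ≤ 𝒮 (n + 1))
    (hgrowth : macaulayUp (n + 1) (codim (n + 1) W) ≤ codim (n + 2) (nextDegree W) + 1)
    (hdim : coneDim W ≤ d + 1) :
    ∃ f, coneDim (hyperplaneSection n W f) ≤ d ∧
      (codim (n + 1) (hyperplaneSection n W f) = macaulayDown (n + 1) (codim (n + 1) W) ∧
        macaulayUp (n + 1) (codim (n + 1) (hyperplaneSection n W f)) ≤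
          codim (n + 2) (nextDegree (hyperplaneSection n W f)) + 1 ∨
      codim (n + 1) (hyperplaneSection n W f) + 1 = macaulayDown (n + 1) (codim (n + 1) W) ∧
        macaulayUp (n + 1) (codim (n + 1) (hyperplaneSection n W f)) ≤
          codim (n + 2) (nextDegree (hyperplaneSection n W f))) := by
  obtain ⟨f, hle, hf⟩ := exists_coneDim_hyperplaneSection_le hW hdim
  have hsplit := codim_nextDegree_le_add f hW
  have hup := macaulayUp_eq_add n (codim (n + 1) W)
  have hmacaulay := codim_nextDegree_le (hyperplaneSection_le (f := f) hW)
  refine ⟨f, hf, ?_⟩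
  rcases hle.eq_or_lt with heq | hlt
  · exact .inl ⟨heq, by rw [heq]; omega⟩
  · have hup_lt := macaulayUp_strictMono n hlt
    have hpred := macaulayUp_strictMono n
      (show macaulayDown (n + 1) (codim (n + 1) W) - 1 < macaulayDown (n + 1) (codim (n + 1) W) by
        omega)
    have hge := (macaulayUp_strictMono n).le_iff_le.1 (by omega :
      macaulayUp (n + 1) (macaulayDown (n + 1) (codim (n + 1) W) - 1) ≤
        macaulayUp (n + 1) (codim (n + 1) (hyperplaneSection n W f)))
    exact .inr (by omega)

variable (K σ) in
/-- Almost maximal growth from degree `n + 1` to degree `n + 2` forces the dimension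
predicted by the binomial expansion: the statement proved by induction on `n`. -/
def AlmostMaximalGrowthBound (n : ℕ) : Prop :=
  ∀ ⦃m : ℕ⦄ ⦃W : Submodule K (MvPolynomial σ K)⦄, W ≤ 𝒮 (n + 1) →
    (n + 2 + m).choose (n + 1) ≤ codim (n + 1) W →
    macaulayUp (n + 1) (codim (n + 1) W) ≤ codim (n + 2) (nextDegree W) + 1 → m < coneDim W

lemma coneDim_pos_of_almostMaximalGrowth
    (hbase : ∀ W ≤ 𝒮 (n + 1), n + 2 ≤ codim (n + 1) W → codim (n + 1) W < (n + 3).choose 2 →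
      macaulayUp (n + 1) (codim (n + 1) W) ≤ codim (n + 2) (nextDegree W) + 1 → 0 < coneDim W)
    (hW : W ≤ 𝒮 (n + 1)) (hc : n + 2 ≤ codim (n + 1) W)
    (hgrowth : macaulayUp (n + 1) (codim (n + 1) W) ≤ codim (n + 2) (nextDegree W) + 1) :
    0 < coneDim W := by
  induction h : codim (n + 1) W using Nat.strong_induction_on generalizing W with
  | _ c ih =>
  subst h
  rcases lt_or_ge (codim (n + 1) W) ((n + 3).choose 2) with hlt | hge
  · exact hbase W hW hc hlt hgrowth
  by_contra! hdim
  obtain ⟨f, hf, hcases⟩ := exists_hyperplaneSection_of_almostMaximalGrowth (d := 0) hW hgrowth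
    (hdim.trans (by simp))
  have hsec := hyperplaneSection_le (f := f) hW
  have hdown : n + 2 ≤ macaulayDown (n + 1) (codim (n + 1) W) := by
    rw [← Nat.choose_symm_add (a := n + 1) (b := 2)] at hge
    calc n + 2 = (n + 2).choose (n + 1) := (Nat.choose_succ_self_right _).symm
      _ = macaulayDown (n + 1) ((n + 3).choose (n + 1)) := (macaulayDown_choose _ _).symm
      _ ≤ _ := macaulayDown_monotone _ hge
  rcases hcases with ⟨heq, hgrowth'⟩ | ⟨heq, hgrowth'⟩
  · refine (ih _ ?_ hsec (heq ▸ hdown) hgrowth' rfl).not_ge (by simpa using hf)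
    exact heq ▸ macaulayDown_lt_self n (by omega)
  · exact (coneDim_pos_of_maximalGrowth hsec (by omega) hgrowth').not_ge (by simpa using hf)

lemma almostMaximalGrowthBound_of_base
    (hbase : ∀ W ≤ 𝒮 (n + 1), n + 2 ≤ codim (n + 1) W → codim (n + 1) W < (n + 3).choose 2 →
      macaulayUp (n + 1) (codim (n + 1) W) ≤ codim (n + 2) (nextDegree W) + 1 → 0 < coneDim W) :
    AlmostMaximalGrowthBound K σ n := by
  intro m
  induction m with
  | zero =>
    intro W hW hm hgrowth
    exact coneDim_pos_of_almostMaximalGrowth hbase hW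
      ((Nat.choose_succ_self_right (n + 1)).symm.trans_le hm) hgrowth
  | succ m ih =>
    intro W hW hm hgrowth
    by_contra! hdim
    obtain ⟨f, hf, hcases⟩ := exists_hyperplaneSection_of_almostMaximalGrowth hW hgrowth
      (by exact_mod_cast hdim)
    have hsec := hyperplaneSection_le (f := f) hW
    have hdown : (n + 2 + m).choose (n + 1) ≤ macaulayDown (n + 1) (codim (n + 1) W) := by
      rw [← macaulayDown_choose]
      exact macaulayDown_monotone _ hm
    rcases hcases with ⟨heq, hgrowth'⟩ | ⟨heq, hgrowth'⟩
    · exact (ih hsec (heq ▸ hdown) hgrowth').not_ge hf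
    · refine (lt_coneDim_of_maximalGrowth hsec ?_ hgrowth').not_ge hf
      have hpascal := Nat.choose_succ_succ' (n + 1 + m) n
      have hpos := Nat.choose_pos (show n ≤ n + 1 + m by omega)
      rw [show n + 1 + m + 1 = n + 2 + m by omega] at hpascal
      omega

omit [Infinite K] in
lemma coneDim_le_of_nextDegree_le (hVW : nextDegree V ≤ W) (hW : W ≤ 𝒮 (n + 1))
    (hdim : coneDim W ≤ 0) (hc : codim (n + 1) (nextDegree V) ≤ codim (n + 1) W + d) :
    coneDim V ≤ d :=
  coneDim_le_coneDim_nextDegree.trans (coneDim_le_of_codim_le hVW hW hdim hc)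

/-- With `f` generic, the colon space `V = (W : f)` contracts the growth of `W` to one degree
less. -/
lemma exists_nextDegree_le_of_coneDim_nonpos (hW : W ≤ 𝒮 (n + 2)) (hc : n + 3 ≤ codim (n + 2) W)
    (hlt : codim (n + 2) W < (n + 4).choose 2)
    (hgrowth : macaulayUp (n + 2) (codim (n + 2) W) ≤ codim (n + 3) (nextDegree W) + 1)
    (hdim : coneDim W ≤ 0) :
    ∃ V ≤ 𝒮 (n + 1), nextDegree V ≤ W ∧
      codim (n + 1) V + macaulayDown (n + 2) (codim (n + 2) W) = codim (n + 2) W := by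
  obtain ⟨f, hf⟩ : ∃ f, codim (n + 2) (hyperplaneSection (n + 1) W f) ≤
    macaulayDown (n + 2) (codim (n + 2) W) := exists_codim_hyperplaneSection_le hW
  have hsec := hyperplaneSection_le (f := f) hW
  have hpos : 0 < macaulayDown (n + 2) (codim (n + 2) W) := macaulayDown_pos hc
  have hdown : macaulayDown (n + 2) (codim (n + 2) W) < n + 3 := by
    rw [← Nat.choose_symm_add (a := n + 2) (b := 2)] at hlt
    exact (macaulayDown_lt_choose (by omega) hlt).trans_eq (Nat.choose_succ_self_right (n + 2))
  have hup : macaulayUp (n + 2) (codim (n + 2) W) =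
      codim (n + 2) W + macaulayDown (n + 2) (codim (n + 2) W) := by
    rw [macaulayUp_eq_add (n + 1), macaulayUp_eq_self (Nat.le_of_lt_succ hdown)]
  have hsplit : codim (n + 3) (nextDegree W) ≤ codim (n + 2) W +
    codim (n + 3) (nextDegree (hyperplaneSection (n + 1) W f)) := codim_nextDegree_le_add f hW
  have hcolon (h : codim (n + 2) W + codim (n + 3) (nextDegree (hyperplaneSection (n + 1) W f)) ≤
    codim (n + 3) (nextDegree W)) : colon (n + 2) (nextDegree W) f = W := colon_nextDegree_eq hW h
  have hne : codim (n + 2) (hyperplaneSection (n + 1) W f) ≠ 0 := fun h0 => by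
    have htop := eq_homogeneousSubmodule_of_codim_eq_zero hsec h0
    refine (coneDim_pos_of_colon_nextDegree_le hW ?_ htop (hcolon ?_).le).not_ge hdim
    · rintro rfl
      rw [codim_homogeneousSubmodule] at hc
      omega
    · rw [htop, nextDegree_homogeneousSubmodule, codim_homogeneousSubmodule]
      omega
  have hsmall : codim (n + 3) (nextDegree (hyperplaneSection (n + 1) W f)) <
      codim (n + 2) (hyperplaneSection (n + 1) W f) := by
    by_contra! hge
    exact (coneDim_pos_of_codim_le hsec hne (hf.trans (Nat.le_of_lt_succ hdown)) hge).not_ge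
      ((coneDim_anti le_hyperplaneSection).trans hdim)
  refine ⟨colon (n + 1) W f, colon_le, nextDegree_colon_le.trans (hcolon (by omega)).le, ?_⟩
  have hsplit' : codim (n + 2) W = codim (n + 1) (colon (n + 1) W f) +
    codim (n + 2) (hyperplaneSection (n + 1) W f) := codim_eq_codim_colon_add f
  omega

lemma coneDim_pos_of_macaulayUp_le_of_nextDegree_le (hV : V ≤ 𝒮 (n + 1))
    (h0 : codim (n + 1) V ≠ 0) (hVW : nextDegree V ≤ W) (hW : W ≤ 𝒮 (n + 2))
    (hup : macaulayUp (n + 1) (codim (n + 1) V) ≤ codim (n + 2) W) : 0 < coneDim W := by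
  by_contra! hdim
  exact (coneDim_pos_of_maximalGrowth hV h0 (hup.trans (codim_anti hVW))).not_ge
    (coneDim_le_of_nextDegree_le (d := 0) hVW hW hdim ((codim_nextDegree_le hV).trans hup))

lemma coneDim_pos_of_codim_eq_choose_succ (ih : AlmostMaximalGrowthBound K σ (n + 1))
    (hW : W ≤ 𝒮 (n + 2)) (hc : codim (n + 2) W = (n + 4).choose 2)
    (hgrowth : codim (n + 2) W + (n + 2) ≤ codim (n + 3) (nextDegree W)) : 0 < coneDim W := by
  by_contra! hdim
  obtain ⟨f, hf⟩ : ∃ f, codim (n + 2) (hyperplaneSection (n + 1) W f) ≤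
    macaulayDown (n + 2) (codim (n + 2) W) := exists_codim_hyperplaneSection_le hW
  have hsec := hyperplaneSection_le (f := f) hW
  have hsec_dim := (coneDim_anti (le_hyperplaneSection (f := f) (n := n + 1))).trans hdim
  have hc' : codim (n + 2) W = (n + 4).choose (n + 2) :=
    hc.trans (Nat.choose_symm_add (a := n + 2) (b := 2)).symm
  rw [hc', macaulayDown_choose (n + 2) (n + 3), Nat.choose_succ_self_right] at hf
  have hsplit : codim (n + 3) (nextDegree W) ≤ codim (n + 2) W +
    codim (n + 3) (nextDegree (hyperplaneSection (n + 1) W f)) := codim_nextDegree_le_add f hW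
  have hge : n + 2 ≤ codim (n + 3) (nextDegree (hyperplaneSection (n + 1) W f)) := by omega
  rcases hf.lt_or_eq with hlt | heq
  · have hmacaulay : codim (n + 3) (nextDegree (hyperplaneSection (n + 1) W f)) ≤ _ :=
      codim_nextDegree_le hsec
    rw [macaulayUp_eq_self (Nat.le_of_lt_succ hlt)] at hmacaulay
    exact (coneDim_pos_of_codim_le hsec (Nat.ne_zero_of_lt (hge.trans hmacaulay))
      (Nat.le_of_lt_succ hlt) ((Nat.le_of_lt_succ hlt).trans hge)).not_ge hsec_dim
  rcases hge.eq_or_lt with hnext | hnext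
  · have hcolon : colon (n + 2) (nextDegree W) f = W :=
      colon_nextDegree_eq hW ((Nat.add_le_add_left hnext.ge _).trans hgrowth)
    have hsplit' : codim (n + 2) W = codim (n + 1) (colon (n + 1) W f) +
      codim (n + 2) (hyperplaneSection (n + 1) W f) := codim_eq_codim_colon_add f
    have hpascal : (n + 4).choose 2 = n + 3 + (n + 3).choose 2 := choose_succ_two (n + 3)
    have hU : codim (n + 1) (colon (n + 1) W f) = (n + 3).choose (n + 1) := calc
      _ = (n + 3).choose 2 := by omega
      _ = _ := (Nat.choose_symm_add (a := n + 1) (b := 2)).symm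
    refine (coneDim_pos_of_macaulayUp_le_of_nextDegree_le colon_le ?_
      (nextDegree_colon_le.trans hcolon.le) hW ?_).not_ge hdim
    · exact hU ▸ (Nat.choose_pos (by omega)).ne'
    · rw [hU, macaulayUp_choose, hc']
  · refine (ih (m := 0) hsec ?_ ?_).not_ge hsec_dim
    · exact (Nat.choose_succ_self_right (n + 2)).trans_le heq.ge
    · calc macaulayUp (n + 2) (codim (n + 2) (hyperplaneSection (n + 1) W f))
          = macaulayUp (n + 2) ((n + 3).choose (n + 2)) := by
            rw [heq, Nat.choose_succ_self_right (n + 2)]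
        _ = n + 4 := by rw [macaulayUp_choose, Nat.choose_succ_self_right (n + 3)]
        _ ≤ _ := Nat.succ_le_succ hnext

lemma coneDim_pos_of_codim_eq_choose (ih : AlmostMaximalGrowthBound K σ n) (hW : W ≤ 𝒮 (n + 1))
    (hc : codim (n + 1) W = (n + 3).choose 2)
    (hgrowth : codim (n + 1) W + (n + 1) ≤ codim (n + 2) (nextDegree W)) : 0 < coneDim W := by
  cases n with
  | zero =>
    refine lt_of_lt_of_le ?_ (codim_le_coneDim hW)
    rw [hc]
    norm_num
  | succ n => exact coneDim_pos_of_codim_eq_choose_succ ih hW hc hgrowth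

lemma exists_lt_coneDim_of_codim_lt_choose {s : ℕ} (ih : AlmostMaximalGrowthBound K σ n)
    (hV : V ≤ 𝒮 (n + 1)) (hlt : codim (n + 1) V < (n + 3).choose 2) (hs : 0 < s)
    (hdown : macaulayDown (n + 1) (codim (n + 1) V) = s ∨
      macaulayDown (n + 1) (codim (n + 1) V) = s + 1)
    (hgrowth : codim (n + 1) V + s ≤ codim (n + 2) (nextDegree V)) :
    ∃ d : ℕ, codim (n + 2) (nextDegree V) ≤ codim (n + 1) V + s + d ∧ d < coneDim V := by
  have hlarge : n + 2 ≤ codim (n + 1) V := by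
    by_contra! h
    rw [macaulayDown_eq_zero (Nat.le_of_lt_succ h)] at hdown
    omega
  have hchoose : (n + 2).choose (n + 1) ≤ codim (n + 1) V :=
    (Nat.choose_succ_self_right (n + 1)).trans_le hlarge
  have hdown_lt : macaulayDown (n + 1) (codim (n + 1) V) < n + 2 := by
    rw [← Nat.choose_symm_add (a := n + 1) (b := 2)] at hlt
    exact (macaulayDown_lt_choose (by omega) hlt).trans_eq (Nat.choose_succ_self_right (n + 1))
  have hup := macaulayUp_eq_add n (codim (n + 1) V)
  rw [macaulayUp_eq_self (Nat.le_of_lt_succ hdown_lt)] at hup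
  have hmacaulay := codim_nextDegree_le hV
  rcases hmacaulay.eq_or_lt with heq | hne
  · rcases hdown with hdown | hdown
    · exact ⟨0, by omega, coneDim_pos_of_maximalGrowth hV (by omega) heq.ge⟩
    · exact ⟨1, by omega, lt_coneDim_of_maximalGrowth hV hchoose heq.ge⟩
  · exact ⟨0, by omega, ih hV hchoose (by omega)⟩

lemma exists_lt_coneDim_of_codim_eq_choose {s : ℕ} (ih : AlmostMaximalGrowthBound K σ n)
    (hV : V ≤ 𝒮 (n + 1)) (hc : codim (n + 1) V = (n + 3).choose 2) (hs : n + 1 ≤ s)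
    (hgrowth : codim (n + 1) V + s ≤ codim (n + 2) (nextDegree V)) :
    ∃ d : ℕ, codim (n + 2) (nextDegree V) ≤ codim (n + 1) V + s + d ∧ d < coneDim V := by
  have hchoose : codim (n + 1) V = (n + 3).choose (n + 1) :=
    hc.trans (Nat.choose_symm_add (a := n + 1) (b := 2)).symm
  have hup : macaulayUp (n + 1) (codim (n + 1) V) = codim (n + 1) V + (n + 3) := by
    rw [hchoose, macaulayUp_choose, Nat.choose_symm_add (a := n + 2) (b := 2), choose_succ_two,
      Nat.choose_symm_add (a := n + 1) (b := 2), add_comm]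
  have hmacaulay : codim (n + 2) (nextDegree V) ≤ codim (n + 1) V + (n + 3) :=
    hup ▸ codim_nextDegree_le hV
  obtain heq | heq | heq : codim (n + 2) (nextDegree V) = codim (n + 1) V + (n + 3) ∨
    codim (n + 2) (nextDegree V) = codim (n + 1) V + (n + 2) ∨
    codim (n + 2) (nextDegree V) = codim (n + 1) V + (n + 1) := by omega
  · exact ⟨2, by omega, lt_coneDim_of_maximalGrowth hV hchoose.ge (by omega)⟩
  · exact ⟨1, by omega, ih hV hchoose.ge (by omega)⟩
  · exact ⟨0, by omega, coneDim_pos_of_codim_eq_choose ih hV hc heq.ge⟩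

lemma coneDim_pos_of_codim_lt_choose (ih : AlmostMaximalGrowthBound K σ n) (hW : W ≤ 𝒮 (n + 2))
    (hc : n + 3 ≤ codim (n + 2) W) (hlt : codim (n + 2) W < (n + 4).choose 2)
    (hgrowth : macaulayUp (n + 2) (codim (n + 2) W) ≤ codim (n + 3) (nextDegree W) + 1) :
    0 < coneDim W := by
  by_contra! hdim
  obtain ⟨V, hV, hVW, hsum⟩ := exists_nextDegree_le_of_coneDim_nonpos hW hc hlt hgrowth hdim
  have hVgrowth := hsum.trans_le (codim_anti hVW)
  obtain ⟨d, hd, hlt_dim⟩ : ∃ d : ℕ, codim (n + 2) (nextDegree V) ≤ codim (n + 1) V +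
      macaulayDown (n + 2) (codim (n + 2) W) + d ∧ d < coneDim V := by
    have hdown := macaulayDown_sub_macaulayDown (n + 1) hlt
    rw [← Nat.eq_sub_of_add_eq hsum] at hdown
    rcases hdown with ⟨hVlt, hdown⟩ | ⟨hVeq, hdown⟩
    · exact exists_lt_coneDim_of_codim_lt_choose ih hV hVlt (macaulayDown_pos hc) hdown hVgrowth
    · have hs : n + 1 ≤ macaulayDown (n + 2) (codim (n + 2) W) :=
        hdown.elim Eq.ge fun h => (Nat.le_succ _).trans h.ge
      exact exists_lt_coneDim_of_codim_eq_choose ih hV hVeq hs hVgrowth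
  rw [hsum] at hd
  exact hlt_dim.not_ge (coneDim_le_of_nextDegree_le hVW hW hdim hd)

theorem almostMaximalGrowthBound (n : ℕ) : AlmostMaximalGrowthBound K σ n := by
  induction n with
  | zero =>
    refine almostMaximalGrowthBound_of_base fun W hW hc _ _ => ?_
    exact lt_of_lt_of_le (by exact_mod_cast (by omega : 0 < codim (0 + 1) W))
      (codim_le_coneDim hW)
  | succ n ih =>
    exact almostMaximalGrowthBound_of_base fun W hW hc hlt hgrowth =>
      coneDim_pos_of_codim_lt_choose ih hW hc hlt hgrowth

end Growth

section Hilbert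

variable {K σ : Type*} [Field K] {n : ℕ}

local notation "𝒮" => homogeneousSubmodule σ K

lemma le_coneDim_of_almostMaximalGrowth [Infinite K] [Finite σ] {m : ℕ}
    {W : Submodule K (MvPolynomial σ K)} (hW : W ≤ 𝒮 (n + 1))
    (hm : (n + 1 + m).choose (n + 1) ≤ codim (n + 1) W)
    (hgrowth : macaulayUp (n + 1) (codim (n + 1) W) ≤ codim (n + 2) (nextDegree W) + 1) :
    m ≤ coneDim W := by
  cases m with
  | zero => exact coneDim_nonneg hW
  | succ m =>
    have hm' : (n + 2 + m).choose (n + 1) ≤ codim (n + 1) W := by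
      rwa [show n + 2 + m = n + 1 + (m + 1) by omega]
    exact_mod_cast ENat.WithBot.add_one_le_iff.2 (almostMaximalGrowthBound n hW hm' hgrowth)

lemma codim_restrictScalars (J : Ideal (MvPolynomial σ K)) (n : ℕ) :
    codim n (J.restrictScalars K) = hilb J n := rfl

end Hilbert

end MacaulayGrowth

open MacaulayGrowth in
theorem almostMaximalGrowth_baseLocus_dim_MG_general {K σ : Type*} [Field K] [Infinite K]
    [Finite σ] (J : Ideal (MvPolynomial σ K)) {n : ℕ} (hn : n ≠ 0) (hpos : hilb J n ≠ 0)
    (hgrowth : macaulayUp n (hilb J n) ≤ hilb J (n + 1) + 1) :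
    ringKrullDim (MvPolynomial σ K ⧸ compIdeal J n) = (MGdim (hilb J n) n : WithBot ℕ∞) ∨
      ringKrullDim (MvPolynomial σ K ⧸ compIdeal J n)
        = ((MGdim (hilb J n) n + 1 : ℕ) : WithBot ℕ∞) := by
  obtain ⟨n, rfl⟩ := Nat.exists_eq_add_one_of_ne_zero hn
  let W := J.restrictScalars K ⊓ homogeneousSubmodule σ K (n + 1)
  have hW : W ≤ homogeneousSubmodule σ K (n + 1) := inf_le_right
  have hcodim : codim (n + 1) W = hilb J (n + 1) :=
    codim_inf_homogeneousSubmodule.trans (codim_restrictScalars J _)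
  have hnext : codim (n + 2) (J.restrictScalars K) ≤ codim (n + 2) (nextDegree W) :=
    codim_anti (Submodule.mul_le.2 fun _ hw _ _ => J.mul_mem_right _ hw.1)
  rw [codim_restrictScalars] at hnext
  rw [← hcodim] at hpos hgrowth ⊢
  obtain ⟨hle, hlt⟩ := choose_MGdim_le_and_lt n hpos
  have hlower := le_coneDim_of_almostMaximalGrowth hW hle (hgrowth.trans (Nat.succ_le_succ hnext))
  have hupper := coneDim_le_of_codim_lt_choose hW hlt
  change coneDim W = _ ∨ coneDim W = _
  rcases hlower.eq_or_lt with heq | hlt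
  · exact .inl heq.symm
  · exact .inr (hupper.antisymm (by exact_mod_cast ENat.WithBot.add_one_le_iff.2 hlt))

/-- **Theorem (almost maximal growth, higher-dimensional case).**
Let `K` be an algebraically closed field, `S = K[x_1,…,x_r]`, `J ⊆ S` a homogeneous ideal and
`A = S/J`.  Assume `h_A(n) ≥ C(n+2,2)` and `h_A(n+1) = h_A(n)^{⟨n⟩} - 1` (almost maximal
growth).  Then the base locus of `[J]_n` in `ℙ^{r-1}` is a scheme of dimension either
`MG(h_A(n),n) - 1` or `MG(h_A(n),n)`; equivalently, the Krull dimension of `S/⟨[J]_n⟩` is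
either `MG(h_A(n),n)` or `MG(h_A(n),n) + 1`. -/
theorem almostMaximalGrowth_baseLocus_dim_MG
    {K : Type*} [Field K] [IsAlgClosed K] {r : ℕ}
    (J : Ideal (MvPolynomial (Fin r) K))
    (hJhom : ∀ f ∈ J, ∀ t : ℕ, homogeneousComponent t f ∈ J)
    (n : ℕ)
    (hbig : Nat.choose (n + 2) 2 ≤ hilb J n)
    (hamg : hilb J (n + 1) + 1 = macaulayUp n (hilb J n)) :
    ringKrullDim (MvPolynomial (Fin r) K ⧸ compIdeal J n) = (MGdim (hilb J n) n : WithBot ℕ∞) ∨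
      ringKrullDim (MvPolynomial (Fin r) K ⧸ compIdeal J n)
        = ((MGdim (hilb J n) n + 1 : ℕ) : WithBot ℕ∞) := by
  have hn : n ≠ 0 := by
    rintro rfl
    exact Nat.succ_ne_zero _ hamg
  have hpos : hilb J n ≠ 0 := ((Nat.choose_pos (by omega)).trans_le hbig).ne'
  exact almostMaximalGrowth_baseLocus_dim_MG_general J hn hpos hamg.ge
end
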